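/- arXiv:1012.2853 — 3 statements merged into one kernel-verified Lean document; each statement's English description precedes it below -/
import Mathlib

section
/- Fix λ ∈ ℂ with Re λ = 0 and ε ∈ {0,1}. There exists a constant α > 0 (depending only on λ and ε) such that for all integers N ≥ T ≥ 1 there exists a smooth 2π-periodic function u : ℝ → ℂ satisfying: (1) |u(0)| ≤ α·T; (2) û(k) is a nonnegative real number for every k ∈ ℤ; (3) û(k) ≥ 1 for every k ∈ ℤ with |k − N| ≤ T; (4) for every τ ∈ ℂ with Re τ = 0 and |τ| ≤ N/T, |u^♯(τ)| ≤ α·T·N^{−1/2}·(1+|τ|)^{−1/2} + α·T·(1+|τ|)^{−5/2}; (5) for every τ ∈ ℂ with Re τ = 0 and |τ| ≥ N/T, |u^♯(τ)| ≤ α·T·(1+|τ|)^{−5/2}. -/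
/-!
Write `λ = i μ` and `τ = 2 i σ`. For `0 < c < π / 2` the kernel `K (c, -c, ·)` is `π`-periodic, and a
period splits into the arcs `(-c, c)` and `(c, π - c)`. The substitution `sin t = sin c tanh w` on the
first arc, and its analogue with `π / 2 - c` and `π / 2 - t` on the second, turn the inner integral into
`2 (sin (2 c)) ^ (-1/2 - i σ) ((-1) ^ ε (sin c) ^ (2 i σ) R (log cos c) + (cos c) ^ (2 i σ) R (log sin c))`,
where `R κ = ∫ (cosh w) ^ (-2 i σ) e ^ {2 i μ v} / cosh v dw` and `sinh v = e ^ κ sinh w`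
(`inner_formula`). The only critical point of the phase `log cosh w` is `w = 0`, so `R` and its
derivatives in `κ` are `O(|σ| ^ (-1/2))`, uniformly in `κ` (`norm_Rint_le`, `hasDerivAt_Rint`).

With `c = ± arctan (e ^ s)`, and `u` equal to `A e ^ {i N c} η (T c)` near `0`, the outer integral becomes
a combination of four integrals of
`e ^ {i (± N arctan (e ^ s) ± σ s)} (cosh s) ^ (-1/2) η (± T arctan (e ^ s)) R (kap (± s))`
where `kap s = log (cos (arctan (e ^ s)))` (`half_formula`). The derivative of the phase is `± N / (2 cosh s) ± σ`. The weight `(cosh s) ^ (-1/2)`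
is exactly what makes the van der Corput bound `O(N ^ (-1/2))` uniform in `σ` (`norm_integral_ePh_le`).
If `N / T ≤ |τ|`, the phase has no stationary point on the support of `η`, and integrating by parts
twice gains `σ ^ (-2)` (`norm_integral_ePh_le'`). Multiplying by the size of `R` gives the bounds on
`u♯` (`main_osc`, `usharp_bound`); for small `σ` an absolute estimate is enough.

The profile `η` is the autoconvolution of an even bump: its Fourier transform is then the square of a
real function, positive near `0`. The Fourier coefficient of the periodized packet at `k` is
`(A / (2 π T)) η̂ ((N - k) / T)` with `η̂ ξ = ∫ η (x) e ^ {i ξ x} dx`, hence nonnegative, and at least `1`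
for `|k - N| ≤ T` if `A` is a suitable multiple of `T` (`fourier_eta`, `uhat_uu`).
-/

open MeasureTheory Real

/-- The kernel `K_{λ,τ,ε}(θ,θ',θ'')`, defined off the null set where some pairwise
difference is an integer multiple of `π`; complex powers of positive reals are taken via
`x ^ w = exp (w * log x)` (Lean's `cpow` on positive real base). -/
noncomputable def Kker (lam tau : ℂ) (eps : ℕ) (θ θ' θ'' : ℝ) : ℂ :=
  ((Real.sign (Real.sin (θ - θ') * Real.sin (θ - θ'') * Real.sin (θ' - θ'')) ^ eps : ℝ) : ℂ) *
    ((|Real.sin (θ - θ')| : ℝ) : ℂ) ^ ((-1 - tau) / 2) *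
    ((|Real.sin (θ - θ'')| : ℝ) : ℂ) ^ ((-1 - 2 * lam + tau) / 2) *
    ((|Real.sin (θ' - θ'')| : ℝ) : ℂ) ^ ((-1 + 2 * lam + tau) / 2)

/-- `u^♯(τ) = (2π)⁻³ ∫₀^{2π} ∫₀^{2π} u(c) K_{λ,τ,ε}(c, −c, θ'') dθ'' dc`. -/
noncomputable def usharp (lam tau : ℂ) (eps : ℕ) (u : ℝ → ℂ) : ℂ :=
  ((1 / (2 * Real.pi) ^ 3 : ℝ) : ℂ) *
    ∫ c in (0 : ℝ)..(2 * Real.pi), ∫ t in (0 : ℝ)..(2 * Real.pi), u c * Kker lam tau eps c (-c) t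

/-- `û(k) = (2π)⁻¹ ∫₀^{2π} u(c) e^{−ikc} dc`. -/
noncomputable def uhat (u : ℝ → ℂ) (k : ℤ) : ℂ :=
  ((1 / (2 * Real.pi) : ℝ) : ℂ) *
    ∫ c in (0 : ℝ)..(2 * Real.pi), u c * Complex.exp (-Complex.I * k * c)

/-! ### Weights and integrals of derivatives -/

section
open Filter Topology Set

/-- A function bounded in absolute value by `b` with nonnegative derivative on `(-∞, a]` has
integrable derivative there, of integral at most `2 b`. -/
lemma integral_Iic_deriv_le {ψ ψ' : ℝ → ℝ} {a b : ℝ}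
    (h : ∀ x ≤ a, HasDerivAt ψ (ψ' x) x) (hn : ∀ x ≤ a, 0 ≤ ψ' x) (hb : ∀ x, |ψ x| ≤ b) :
    IntegrableOn ψ' (Iic a) ∧ ∫ x in Iic a, ψ' x ≤ 2 * b := by
  have hcont : ∀ c, ContinuousOn ψ (Icc c a) := fun c x hx =>
    (h x hx.2).continuousAt.continuousWithinAt
  have hint : ∀ c, IntegrableOn ψ' (Ioc c a) := fun c =>
    intervalIntegral.integrableOn_deriv_of_nonneg (hcont c)
      (fun x hx => h x hx.2.le) (fun x hx => hn x hx.2.le)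
  have hval : ∀ c ≤ a, ∫ x in c..a, ψ' x ≤ 2 * b := by
    intro c hc
    rw [intervalIntegral.integral_eq_sub_of_hasDerivAt_of_le hc (hcont c)
      (fun x hx => h x hx.2.le) ((intervalIntegrable_iff_integrableOn_Ioc_of_le hc).2 (hint c))]
    have h1 := abs_le.1 (hb a)
    have h2 := abs_le.1 (hb c)
    linarith
  have hI : IntegrableOn ψ' (Iic a) := by
    refine integrableOn_Iic_of_intervalIntegral_norm_bounded (l := atBot) (a := id)
      (2 * b) a (fun c => hint c) tendsto_id ?_
    filter_upwards [eventually_le_atBot a] with c hc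
    rw [intervalIntegral.integral_congr (g := ψ')]
    · exact hval c hc
    · intro x hx
      rw [id, uIcc_of_le hc] at hx
      simp [abs_of_nonneg (hn x hx.2)]
  refine ⟨hI, ?_⟩
  refine le_of_tendsto (intervalIntegral_tendsto_integral_Iic a hI tendsto_id) ?_
  filter_upwards [eventually_le_atBot a] with c hc
  exact hval c hc

/-- A function on the line bounded in absolute value by `b` with nonnegative derivative has
integrable derivative, of integral at most `2 b`. -/
lemma integral_deriv_le {ψ ψ' : ℝ → ℝ} {b : ℝ}
    (h : ∀ x, HasDerivAt ψ (ψ' x) x) (hn : ∀ x, 0 ≤ ψ' x) (hb : ∀ x, |ψ x| ≤ b) :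
    Integrable ψ' ∧ ∫ x, ψ' x ≤ 2 * b := by
  have hcont : ∀ c d, ContinuousOn ψ (Icc c d) := fun c d x hx =>
    (h x).continuousAt.continuousWithinAt
  have hint : ∀ c d, IntegrableOn ψ' (Ioc c d) := fun c d =>
    intervalIntegral.integrableOn_deriv_of_nonneg (hcont c d)
      (fun x hx => h x) (fun x hx => hn x)
  have hval : ∀ c d, c ≤ d → ∫ x in c..d, ψ' x ≤ 2 * b := by
    intro c d hc
    rw [intervalIntegral.integral_eq_sub_of_hasDerivAt_of_le hc (hcont c d)
      (fun x hx => h x) ((intervalIntegrable_iff_integrableOn_Ioc_of_le hc).2 (hint c d))]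
    have h1 := abs_le.1 (hb d)
    have h2 := abs_le.1 (hb c)
    linarith
  have hI : Integrable ψ' := by
    refine integrable_of_intervalIntegral_norm_bounded (l := atTop) (a := fun x : ℝ => -x)
      (b := id) (2 * b) (fun c => hint _ _) tendsto_neg_atTop_atBot tendsto_id ?_
    filter_upwards [eventually_ge_atTop 0] with c hc
    rw [intervalIntegral.integral_congr (g := ψ')]
    · exact hval _ _ (by simp; linarith)
    · intro x hx
      simp [abs_of_nonneg (hn x)]
  refine ⟨hI, ?_⟩
  refine le_of_tendsto (intervalIntegral_tendsto_integral hI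
    (l := atTop) (a := fun x : ℝ => -x) (b := id) tendsto_neg_atTop_atBot tendsto_id) ?_
  filter_upwards [eventually_ge_atTop 0] with c hc
  exact hval _ _ (by simp; linarith)

lemma abs_arctan_le (x : ℝ) : |arctan x| ≤ 2 := by
  have := Real.pi_le_four
  rw [abs_le]
  constructor <;> linarith [arctan_lt_pi_div_two x, neg_pi_div_two_lt_arctan x]

lemma cosh_ge_exp (w : ℝ) : exp w / 2 ≤ cosh w := by
  rw [cosh_eq]; linarith [exp_pos (-w)]

lemma cosh_ge_exp_neg (w : ℝ) : exp (-w) / 2 ≤ cosh w := by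
  rw [cosh_eq]; linarith [exp_pos w]

lemma hasDerivAt_tanh' (w : ℝ) : HasDerivAt tanh (1 - tanh w ^ 2) w := by
  have h := (hasDerivAt_sinh w).div (hasDerivAt_cosh w) (cosh_pos w).ne'
  have e : (fun x => sinh x / cosh x) = tanh := by ext x; rw [tanh_eq_sinh_div_cosh]
  have h' : HasDerivAt (fun x => sinh x / cosh x)
    ((cosh w * cosh w - sinh w * sinh w) / cosh w ^ 2) w := h
  rw [e] at h'
  convert h' using 1
  rw [tanh_eq_sinh_div_cosh]
  have := (cosh_pos w).ne'
  field_simp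

lemma abs_tanh_le (w : ℝ) : |tanh w| ≤ 1 := by
  have h := tanh_bijOn.mapsTo (mem_univ w)
  exact abs_le.2 ⟨h.1.le, h.2.le⟩

/-- The even exponential weight `(cosh w) ^ (-a)`. -/
noncomputable def wt (a w : ℝ) : ℝ := cosh w ^ (-a)

lemma wt_pos (a w : ℝ) : 0 < wt a w := rpow_pos_of_pos (cosh_pos w) _

lemma wt_le_one {a : ℝ} (ha : 0 ≤ a) (w : ℝ) : wt a w ≤ 1 :=
  rpow_le_one_of_one_le_of_nonpos (one_le_cosh w) (by linarith)

lemma continuous_wt (a : ℝ) : Continuous (wt a) :=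
  continuous_cosh.rpow_const fun w => Or.inl (cosh_pos w).ne'

lemma wt_mul (a b w : ℝ) : wt a w * wt b w = wt (a + b) w := by
  unfold wt; rw [← rpow_add (cosh_pos w)]; ring_nf

lemma wt_neg (a w : ℝ) : wt a (-w) = wt a w := by simp [wt]

lemma hasDerivAt_wt (a w : ℝ) : HasDerivAt (wt a) (-a * tanh w * wt a w) w := by
  have h : HasDerivAt (wt a) (sinh w * -a * cosh w ^ (-a - 1)) w :=
    (hasDerivAt_cosh w).rpow_const (p := -a) (Or.inl (cosh_pos w).ne')
  convert h using 1
  rw [show wt a w = cosh w ^ (-a) from rfl, tanh_eq_sinh_div_cosh, rpow_sub_one (cosh_pos w).ne']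
  ring

lemma integrable_wt {a : ℝ} (ha : 0 < a) : Integrable (wt a) := by
  have key : ∀ (w : ℝ), wt a w ≤ 2 ^ a * exp (-a * w) := by
    intro w
    have h1 : wt a w ≤ (exp w / 2) ^ (-a) :=
      rpow_le_rpow_of_nonpos (by positivity) (cosh_ge_exp w) (by linarith)
    refine h1.trans (le_of_eq ?_)
    rw [div_rpow (exp_pos w).le (by norm_num), ← exp_mul, rpow_neg (by norm_num : (0:ℝ) ≤ 2)]
    rw [div_inv_eq_mul, mul_comm]; ring_nf
  have h1 : IntegrableOn (wt a) (Ioi 0) := by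
    have hi : IntegrableOn (fun w => 2 ^ a * exp (-a * w)) (Ioi 0) :=
      (integrableOn_exp_mul_Ioi (by linarith) 0).const_mul _
    refine Integrable.mono' hi (continuous_wt a).aestronglyMeasurable ?_
    filter_upwards with w
    rw [norm_of_nonneg (wt_pos a w).le]; exact key w
  have h2 : IntegrableOn (wt a) (Iic 0) := by
    have hi : IntegrableOn (fun w => 2 ^ a * exp (a * w)) (Iic 0) :=
      (integrableOn_exp_mul_Iic (by linarith) 0).const_mul _
    refine Integrable.mono' hi (continuous_wt a).aestronglyMeasurable ?_
    filter_upwards with w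
    rw [norm_of_nonneg (wt_pos a w).le, ← wt_neg]
    convert key (-w) using 3; ring
  rw [← integrableOn_univ, ← Iic_union_Ioi (a := (0:ℝ))]
  exact h2.union h1

end

/-! ### The second-derivative test for the phase `log cosh w` -/

section
open Filter Topology Set

/-- The oscillating factor `(cosh w) ^ (-2 i σ)`. -/
noncomputable def osc (σ w : ℝ) : ℂ := Complex.exp (((-2 * σ * log (cosh w) : ℝ) : ℂ) * Complex.I)

lemma norm_osc (σ w : ℝ) : ‖osc σ w‖ = 1 := Complex.norm_exp_ofReal_mul_I _

lemma hasDerivAt_osc (σ w : ℝ) :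
    HasDerivAt (osc σ) (osc σ w * (((-2 * σ * tanh w : ℝ) : ℂ) * Complex.I)) w := by
  have h1 : HasDerivAt (fun w => -2 * σ * log (cosh w)) (-2 * σ * tanh w) w := by
    have := ((hasDerivAt_cosh w).log (cosh_pos w).ne').const_mul (-2 * σ)
    rwa [← tanh_eq_sinh_div_cosh] at this
  exact (h1.ofReal_comp.mul_const Complex.I).cexp

lemma continuous_osc (σ : ℝ) : Continuous (osc σ) :=
  continuous_iff_continuousAt.2 fun w => (hasDerivAt_osc σ w).continuousAt

lemma sinh_mul_cosh_div_le {L : ℝ} (hL : 1 ≤ L) (w : ℝ) :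
    |sinh w * cosh w / (1 + L * sinh w ^ 2)| ≤ 2 / √L := by
  have hs : 1 ≤ √L := one_le_sqrt.2 hL
  have hs2 : √L ^ 2 = L := sq_sqrt (by linarith)
  set r := √L
  have hc : cosh w ≤ 1 + |sinh w| := by
    have := cosh_sq w
    nlinarith [abs_nonneg (sinh w), sq_abs (sinh w), cosh_pos w]
  have hd : 0 < 1 + L * sinh w ^ 2 := by positivity
  rw [abs_div, abs_mul, abs_of_pos (cosh_pos w), abs_of_pos hd,
    div_le_div_iff₀ hd (by positivity), ← hs2, ← sq_abs (sinh w)]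
  have h0 := abs_nonneg (sinh w)
  set x := |sinh w|
  have : x * cosh w ≤ x * (1 + x) := by gcongr
  have : x * cosh w * r ≤ x * (1 + x) * r := by gcongr
  nlinarith [sq_nonneg (r * x - 1), sq_nonneg (r * x), mul_nonneg h0 h0,
    mul_nonneg (mul_nonneg h0 h0) (by linarith : 0 ≤ r - 1),
    mul_nonneg (mul_nonneg (mul_nonneg h0 h0) (by linarith : 0 ≤ r - 1)) (by linarith : 0 ≤ r)]

/-- Second-derivative test for the phase `-2 σ log cosh w`, whose only critical point is `w = 0`.
The amplitude needs only a bound and a bounded total variation. -/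
lemma norm_integral_osc_le {σ C : ℝ} (hσ : 1 / 2 ≤ |σ|) {F F' : ℝ → ℂ} {ρ : ℝ → ℝ}
    (hd : ∀ w, HasDerivAt F (F' w) w) (hC : ∀ w, ‖F w‖ ≤ C) (hC' : ∀ w, ‖F' w‖ ≤ C * ρ w)
    (hρ : Integrable ρ) (hρi : ∫ w, ρ w ≤ 4) (hF : Integrable F) :
    ‖∫ w, osc σ w * F w‖ ≤ 24 * C / √|σ| := by
  have hC0 : 0 ≤ C := (norm_nonneg _).trans (hC 0)
  have hσ0 : 0 < |σ| := by linarith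
  have hσne : σ ≠ 0 := abs_pos.1 hσ0
  set L := 2 * |σ| with hLdef
  have hL : 1 ≤ L := by linarith
  have hr1 : 1 ≤ √L := one_le_sqrt.2 hL
  have hr2 : √L ^ 2 = L := sq_sqrt (by linarith)
  set r := √L with hr
  have hD : ∀ w : ℝ, 0 < 1 + L * sinh w ^ 2 := fun w => by positivity
  set h : ℝ → ℝ := fun w => 1 / (1 + L * sinh w ^ 2) with hh
  set m : ℝ → ℝ := fun w => sinh w * cosh w / (1 + L * sinh w ^ 2) with hm
  set g : ℝ → ℝ := fun w => cosh w / (1 + L * sinh w ^ 2) with hg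
  -- `g` is the derivative of a bounded function, hence has integral `O(L ^ (-1/2))`.
  obtain ⟨hgi, hgb⟩ : Integrable g ∧ ∫ w, g w ≤ 2 * (2 / r) := by
    refine integral_deriv_le (ψ := fun w => arctan (r * sinh w) / r) ?_ ?_ ?_
    · intro w
      have := (((hasDerivAt_sinh w).const_mul r).arctan).div_const r
      refine this.congr_deriv ?_
      have h4 := (hD w).ne'
      have h3 : r ≠ 0 := by linarith
      rw [mul_pow, hr2]
      simp only [hg]
      field_simp
    · intro w; exact div_nonneg (cosh_pos w).le (hD w).le
    · intro w
      rw [abs_div, abs_of_pos (by linarith : 0 < r)]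
      gcongr; exact abs_arctan_le _
  have hhg : ∀ w, h w ≤ g w := fun w => by
    exact div_le_div_of_nonneg_right (one_le_cosh w) (hD w).le
  have hh0 : ∀ w, 0 ≤ h w := fun w => by simp only [hh]; exact one_div_nonneg.2 (hD w).le
  set m' : ℝ → ℝ := fun w => (1 + 2 * sinh w ^ 2 - L * sinh w ^ 2) / (1 + L * sinh w ^ 2) ^ 2
    with hm'
  have hmd : ∀ w, HasDerivAt m (m' w) w := by
    intro w
    have h1 := (hasDerivAt_sinh w).mul (hasDerivAt_cosh w)
    have h2 := (((hasDerivAt_sinh w).pow 2).const_mul L).const_add 1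
    have h3 := h1.div h2 (hD w).ne'
    refine h3.congr_deriv ?_
    simp only [hm', Pi.mul_apply, Pi.pow_apply]
    congr 1
    have := cosh_sq w
    push_cast
    linear_combination (1 - L * sinh w ^ 2) * this
  have hmb : ∀ w, |m w| ≤ 2 / r := fun w => sinh_mul_cosh_div_le hL w
  have hm'b : ∀ w, |m' w| ≤ 3 * h w := by
    intro w
    simp only [hm', hh]
    rw [abs_div, abs_of_pos (pow_pos (hD w) 2), mul_one_div, div_le_div_iff₀ (pow_pos (hD w) 2) (hD w)]
    have : |1 + 2 * sinh w ^ 2 - L * sinh w ^ 2| ≤ 3 * (1 + L * sinh w ^ 2) := by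
      have h5 : sinh w ^ 2 ≤ L * sinh w ^ 2 := le_mul_of_one_le_left (sq_nonneg _) hL
      rw [abs_le]; constructor <;> nlinarith [sq_nonneg (sinh w)]
    nlinarith [hD w]
  have hFc : Continuous F := continuous_iff_continuousAt.2 fun w => (hd w).continuousAt
  have hF'm : AEStronglyMeasurable F' := by
    have : F' = deriv F := by ext w; exact ((hd w).deriv).symm
    rw [this]; exact (stronglyMeasurable_deriv F).aestronglyMeasurable
  have hF'i : Integrable F' := (hρ.const_mul C).mono' hF'm (Eventually.of_forall hC')
  have hhc : Continuous h := by
    simp only [hh]; exact continuous_const.div (by fun_prop) fun w => (hD w).ne'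
  have hmc : Continuous m := continuous_iff_continuousAt.2 fun w => (hmd w).continuousAt
  have hm'c : Continuous m' := by
    simp only [hm']; exact Continuous.div (by fun_prop) (by fun_prop) fun w => (pow_pos (hD w) 2).ne'
  have hoc := continuous_osc σ
  have i1 : Integrable (fun w => osc σ w * (F w * (h w : ℂ))) := by
    refine (hgi.const_mul C).mono' (by fun_prop) (Eventually.of_forall fun w => ?_)
    rw [norm_mul, norm_osc, one_mul, norm_mul, Complex.norm_real, norm_of_nonneg (hh0 w)]
    exact mul_le_mul (hC w) (hhg w) (hh0 w) hC0
  have i2 : Integrable (fun w => osc σ w * ((m' w : ℂ) * F w + (m w : ℂ) * F' w)) := by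
    have b : Integrable (fun w => C * (3 * g w) + 2 / r * (C * ρ w)) :=
      ((hgi.const_mul 3).const_mul C).add ((hρ.const_mul C).const_mul (2 / r))
    refine b.mono' ?_ (Eventually.of_forall fun w => ?_)
    · refine hoc.aestronglyMeasurable.mul (AEStronglyMeasurable.add ?_ ?_)
      · exact (by fun_prop : Continuous fun w => (m' w : ℂ) * F w).aestronglyMeasurable
      · exact (by fun_prop : Continuous fun w => (m w : ℂ)).aestronglyMeasurable.mul hF'm
    · rw [norm_mul, norm_osc, one_mul]
      refine (norm_add_le _ _).trans ?_
      rw [norm_mul, norm_mul, Complex.norm_real, Complex.norm_real, mul_comm C]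
      have h5 : 3 * h w ≤ 3 * g w := by linarith [hhg w]
      have := mul_le_mul ((hm'b w).trans h5) (hC w) (norm_nonneg _) (by linarith [hh0 w])
      have := mul_le_mul (hmb w) (hC' w) (norm_nonneg _) (by positivity)
      simp only [Real.norm_eq_abs]
      linarith
  have i2b : ‖∫ w, osc σ w * ((m' w : ℂ) * F w + (m w : ℂ) * F' w)‖ ≤
      C * (3 * (2 * (2 / r))) + 2 / r * (C * 4) := by
    have b : Integrable (fun w => C * (3 * g w) + 2 / r * (C * ρ w)) :=
      ((hgi.const_mul 3).const_mul C).add ((hρ.const_mul C).const_mul (2 / r))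
    refine (norm_integral_le_of_norm_le b (Eventually.of_forall fun w => ?_)).trans ?_
    · rw [norm_mul, norm_osc, one_mul]
      refine (norm_add_le _ _).trans ?_
      rw [norm_mul, norm_mul, Complex.norm_real, Complex.norm_real, mul_comm C]
      have h5 : 3 * h w ≤ 3 * g w := by linarith [hhg w]
      have := mul_le_mul ((hm'b w).trans h5) (hC w) (norm_nonneg _) (by linarith [hh0 w])
      have := mul_le_mul (hmb w) (hC' w) (norm_nonneg _) (by positivity)
      simp only [Real.norm_eq_abs]
      linarith
    · rw [integral_add ((hgi.const_mul 3).const_mul C) ((hρ.const_mul C).const_mul (2 / r)),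
        integral_const_mul, integral_const_mul, integral_const_mul, integral_const_mul]
      gcongr
  have i1b : ‖∫ w, osc σ w * (F w * (h w : ℂ))‖ ≤ C * (2 * (2 / r)) := by
    refine (norm_integral_le_of_norm_le (hgi.const_mul C) (Eventually.of_forall fun w => ?_)).trans ?_
    · rw [norm_mul, norm_osc, one_mul, norm_mul, Complex.norm_real, norm_of_nonneg (hh0 w)]
      exact mul_le_mul (hC w) (hhg w) (hh0 w) hC0
    · rw [integral_const_mul]; gcongr
  have hlin : ∀ w, osc σ w * (((-2 * σ * tanh w : ℝ) : ℂ) * Complex.I) * ((m w : ℂ) * F w)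
      = (((-2 * σ / L : ℝ) : ℂ) * Complex.I) * (osc σ w * F w - osc σ w * (F w * (h w : ℂ))) := by
    intro w
    have key : L * tanh w * m w = 1 - h w := by
      simp only [hm, hh, tanh_eq_sinh_div_cosh]
      have h6 := (hD w).ne'
      have h7 := (cosh_pos w).ne'
      field_simp; ring
    have key2 : (L : ℂ) * tanh w * m w = 1 - h w := by exact_mod_cast key
    have hL0 : (L : ℂ) ≠ 0 := by exact_mod_cast (by linarith : L ≠ 0)
    have hLinv : (L : ℂ) * (L : ℂ)⁻¹ = 1 := mul_inv_cancel₀ hL0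
    simp only [Complex.ofReal_mul, Complex.ofReal_inv, Complex.ofReal_neg, Complex.ofReal_ofNat,
      div_eq_mul_inv]
    linear_combination (-2 * (σ:ℂ) * osc σ w * Complex.I * F w * (L:ℂ)⁻¹) * key2 +
      (2 * (σ:ℂ) * osc σ w * Complex.I * F w * (tanh w : ℝ) * m w) * hLinv
  have hoF : Integrable (fun w => osc σ w * F w) := by
    refine hF.norm.mono' (by fun_prop) (Eventually.of_forall fun w => ?_)
    rw [norm_mul, norm_osc, one_mul]
  have hG : Integrable (fun w => osc σ w * ((m w : ℂ) * F w)) := by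
    refine (hF.norm.const_mul (2 / r)).mono' (by fun_prop) (Eventually.of_forall fun w => ?_)
    rw [norm_mul, norm_osc, one_mul, norm_mul, Complex.norm_real]
    exact mul_le_mul_of_nonneg_right (hmb w) (norm_nonneg _)
  have hGd : ∀ w, HasDerivAt (fun w => osc σ w * ((m w : ℂ) * F w))
      ((((-2 * σ / L : ℝ) : ℂ) * Complex.I) * (osc σ w * F w - osc σ w * (F w * (h w : ℂ)))
        + osc σ w * ((m' w : ℂ) * F w + (m w : ℂ) * F' w)) w := by
    intro w
    rw [← hlin w]
    exact (hasDerivAt_osc σ w).mul ((hmd w).ofReal_comp.mul (hd w))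
  have hsub : Integrable (fun w => osc σ w * F w - osc σ w * (F w * (h w : ℂ))) := hoF.sub i1
  have hsubc : Integrable (fun w => (((-2 * σ / L : ℝ) : ℂ) * Complex.I) *
      (osc σ w * F w - osc σ w * (F w * (h w : ℂ)))) := hsub.const_mul _
  have hzero := integral_eq_zero_of_hasDerivAt_of_integrable hGd
    (hsubc.add i2) hG
  rw [integral_add hsubc i2, integral_const_mul, integral_sub hoF i1] at hzero
  set J := ∫ w, osc σ w * F w
  set J1 := ∫ w, osc σ w * (F w * (h w : ℂ))
  set J2 := ∫ w, osc σ w * ((m' w : ℂ) * F w + (m w : ℂ) * F' w)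
  have hnorm : ‖((-2 * σ / L : ℝ) : ℂ) * Complex.I‖ = 1 := by
    rw [norm_mul, Complex.norm_I, mul_one, Complex.norm_real, Real.norm_eq_abs, abs_div, abs_mul,
      abs_of_pos (by linarith : 0 < L), hLdef, abs_neg, abs_two]
    exact div_self (by linarith)
  have hJ : ‖J - J1‖ = ‖J2‖ := by
    have : (((-2 * σ / L : ℝ) : ℂ) * Complex.I) * (J - J1) = - J2 := eq_neg_of_add_eq_zero_left hzero
    have h8 := congrArg norm this
    rwa [norm_mul, hnorm, one_mul, norm_neg] at h8
  have hfin : ‖J‖ ≤ 24 * C / r := by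
    have h9 : ‖J‖ ≤ ‖J - J1‖ + ‖J1‖ := by simpa using norm_add_le (J - J1) J1
    have : C * (3 * (2 * (2 / r))) + 2 / r * (C * 4) + C * (2 * (2 / r)) = 24 * C / r := by ring
    linarith
  refine hfin.trans ?_
  have : √|σ| ≤ r := sqrt_le_sqrt (by linarith)
  have : 0 < √|σ| := sqrt_pos.2 hσ0
  gcongr

end

/-! ### The oscillatory integral `Rint` -/

section
open Filter Topology Set

/-- The algebra of amplitudes generated by constants, `exp (2 i μ v)` and `tanh v`; it consists of
bounded functions and is closed under differentiation. -/
inductive Good (μ : ℝ) : (ℝ → ℂ) → Prop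
  | const (c : ℂ) : Good μ fun _ => c
  | exp : Good μ fun v => Complex.exp (((2 * μ * v : ℝ) : ℂ) * Complex.I)
  | tanh : Good μ fun v => ((Real.tanh v : ℝ) : ℂ)
  | add {f g : ℝ → ℂ} : Good μ f → Good μ g → Good μ fun v => f v + g v
  | mul {f g : ℝ → ℂ} : Good μ f → Good μ g → Good μ fun v => f v * g v

lemma Good.bdd {μ : ℝ} {f : ℝ → ℂ} (h : Good μ f) : ∃ C, ∀ v, ‖f v‖ ≤ C := by
  induction h with
  | const c => exact ⟨‖c‖, fun _ => le_rfl⟩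
  | exp => exact ⟨1, fun v => (Complex.norm_exp_ofReal_mul_I _).le⟩
  | tanh => exact ⟨1, fun v => by rw [Complex.norm_real]; exact abs_tanh_le v⟩
  | add _ _ h1 h2 =>
    obtain ⟨A, hA⟩ := h1
    obtain ⟨B, hB⟩ := h2
    exact ⟨A + B, fun v => (norm_add_le _ _).trans (add_le_add (hA v) (hB v))⟩
  | mul _ _ h1 h2 =>
    obtain ⟨A, hA⟩ := h1
    obtain ⟨B, hB⟩ := h2
    refine ⟨A * B, fun v => ?_⟩
    rw [norm_mul]
    exact mul_le_mul (hA v) (hB v) (norm_nonneg _) ((norm_nonneg _).trans (hA v))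

lemma Good.exists_deriv {μ : ℝ} {f : ℝ → ℂ} (h : Good μ f) :
    ∃ f', Good μ f' ∧ ∀ v, HasDerivAt f (f' v) v := by
  induction h with
  | const c => exact ⟨_, .const 0, fun v => hasDerivAt_const v c⟩
  | exp =>
    refine ⟨_, .mul .exp (.const (((2 * μ : ℝ) : ℂ) * Complex.I)), fun v => ?_⟩
    have h1 : HasDerivAt (fun v : ℝ => 2 * μ * v) (2 * μ) v := by
      simpa using (hasDerivAt_id v).const_mul (2 * μ)
    exact (h1.ofReal_comp.mul_const Complex.I).cexp
  | tanh =>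
    refine ⟨_, .add (.const 1) (.mul (.const (-1)) (.mul .tanh .tanh)), fun v => ?_⟩
    refine (hasDerivAt_tanh' v).ofReal_comp.congr_deriv ?_
    simp only [Complex.ofReal_sub, Complex.ofReal_pow, Complex.ofReal_one]
    ring
  | add _ _ h1 h2 =>
    obtain ⟨A, gA, hA⟩ := h1
    obtain ⟨B, gB, hB⟩ := h2
    exact ⟨_, .add gA gB, fun v => (hA v).add (hB v)⟩
  | mul g1 g2 h1 h2 =>
    obtain ⟨A, gA, hA⟩ := h1
    obtain ⟨B, gB, hB⟩ := h2
    exact ⟨_, .add (.mul gA g2) (.mul g1 gB), fun v => (hA v).mul (hB v)⟩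

lemma Good.continuous {μ : ℝ} {f : ℝ → ℂ} (h : Good μ f) : Continuous f := by
  obtain ⟨f', -, h'⟩ := h.exists_deriv
  exact continuous_iff_continuousAt.2 fun w => (h' w).continuousAt

/-- The change of variable `v = arsinh (e ^ κ sinh w)`. -/
noncomputable def vv (κ w : ℝ) : ℝ := arsinh (exp κ * sinh w)

lemma sinh_vv (κ w : ℝ) : sinh (vv κ w) = exp κ * sinh w := sinh_arsinh _

lemma cosh_vv_sq (κ w : ℝ) : cosh (vv κ w) ^ 2 = 1 + exp κ ^ 2 * sinh w ^ 2 := by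
  rw [cosh_sq, sinh_vv]; ring

lemma continuous_vv (κ : ℝ) : Continuous (vv κ) := by
  unfold vv; exact continuous_arsinh.comp (by fun_prop)

lemma hasDerivAt_vv (κ w : ℝ) : HasDerivAt (vv κ) (exp κ * cosh w / cosh (vv κ w)) w := by
  have h := ((hasDerivAt_sinh w).const_mul (exp κ)).arsinh
  refine h.congr_deriv ?_
  rw [smul_eq_mul, vv, cosh_arsinh]; ring

lemma hasDerivAt_vv' (κ w : ℝ) : HasDerivAt (fun κ => vv κ w) (tanh (vv κ w)) κ := by
  have h := ((hasDerivAt_exp κ).mul_const (sinh w)).arsinh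
  refine h.congr_deriv ?_
  rw [smul_eq_mul, tanh_eq_sinh_div_cosh, sinh_vv, vv, cosh_arsinh]; ring

lemma cosh_vv_ge {k κ : ℝ} (h0 : 0 ≤ k) (h1 : k ≤ 1) (h2 : k ≤ exp κ) (w : ℝ) :
    k * cosh w ≤ cosh (vv κ w) := by
  refine (pow_le_pow_iff_left₀ (by positivity) (cosh_pos _).le two_ne_zero).1 ?_
  rw [cosh_vv_sq, mul_pow, cosh_sq]
  have : k ^ 2 ≤ 1 := by nlinarith
  have : k ^ 2 ≤ exp κ ^ 2 := by gcongr
  nlinarith [sq_nonneg (sinh w)]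

/-- The amplitude `β v / cosh v`. -/
noncomputable def amp (β : ℝ → ℂ) (v : ℝ) : ℂ := β v * (((cosh v)⁻¹ : ℝ) : ℂ)

lemma norm_amp_le {β : ℝ → ℂ} {C : ℝ} (h : ∀ v, ‖β v‖ ≤ C) (v : ℝ) : ‖amp β v‖ ≤ C * (cosh v)⁻¹ := by
  have := inv_pos.2 (cosh_pos v)
  rw [amp, norm_mul, Complex.norm_real, norm_of_nonneg this.le]
  gcongr; exact h v

lemma hasDerivAt_amp {β β' : ℝ → ℂ} (h : ∀ v, HasDerivAt β (β' v) v) (v : ℝ) :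
    HasDerivAt (amp β) (amp (fun v => β' v + -1 * ((tanh v : ℝ) : ℂ) * β v) v) v := by
  have h1 := (hasDerivAt_cosh v).inv (cosh_pos v).ne'
  have h2 := (h v).mul h1.ofReal_comp
  refine h2.congr_deriv ?_
  have h3 : -sinh v / cosh v ^ 2 = - tanh v * (cosh v)⁻¹ := by
    rw [tanh_eq_sinh_div_cosh]; have := (cosh_pos v).ne'; field_simp
  simp only [amp, Pi.inv_apply, h3, Complex.ofReal_mul, Complex.ofReal_neg]
  ring

lemma continuous_amp {β : ℝ → ℂ} (h : Continuous β) : Continuous (amp β) :=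
  h.mul (Complex.continuous_ofReal.comp (continuous_cosh.inv₀ fun v => (cosh_pos v).ne'))

/-- The oscillatory integral `∫ (cosh w) ^ (-2 i σ) β (v) / cosh v dw` with `sinh v = e ^ κ sinh w`.
For `β v = e ^ {2 i μ v}` it is, up to elementary factors, the integral of the kernel over one arc. -/
noncomputable def Rint (σ : ℝ) (β : ℝ → ℂ) (κ : ℝ) : ℂ := ∫ w, osc σ w * amp β (vv κ w)

lemma cosh_inv_eq_wt (w : ℝ) : (cosh w)⁻¹ = wt 1 w := by rw [wt, rpow_neg_one]

lemma integrable_osc_amp {β : ℝ → ℂ} (hβ : Continuous β) {C : ℝ} (hC : ∀ v, ‖β v‖ ≤ C) (κ : ℝ) :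
    Integrable (fun w => amp β (vv κ w)) := by
  have hC0 : 0 ≤ C := (norm_nonneg _).trans (hC 0)
  set k := min (exp κ) 1
  have hk : 0 < k := lt_min (exp_pos _) one_pos
  refine ((integrable_wt one_pos).const_mul (C * k⁻¹)).mono'
    ((continuous_amp hβ).comp (continuous_vv κ)).aestronglyMeasurable
    (Eventually.of_forall fun w => (norm_amp_le hC _).trans ?_)
  rw [mul_assoc]
  gcongr
  rw [← cosh_inv_eq_wt, ← mul_inv]
  gcongr
  · exact cosh_vv_ge hk.le (min_le_right _ _) (min_le_left _ _) w

/-- The derivative of `Rint` in `κ` is an integral of the same kind with another good amplitude, so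
that bounds for `Rint` hold for all its derivatives. -/
lemma hasDerivAt_Rint {μ : ℝ} {β : ℝ → ℂ} (hβ : Good μ β) : ∃ β', Good μ β' ∧
    ∀ σ κ, HasDerivAt (Rint σ β) (Rint σ β' κ) κ := by
  obtain ⟨β', g', hd⟩ := hβ.exists_deriv
  have g2 : Good μ (fun v => β' v + -1 * ((tanh v : ℝ) : ℂ) * β v) :=
    .add g' (.mul (.mul (.const _) .tanh) hβ)
  have g3 : Good μ (fun v => ((tanh v : ℝ) : ℂ) * (β' v + -1 * ((tanh v : ℝ) : ℂ) * β v)) :=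
    .mul .tanh g2
  refine ⟨_, g3, fun σ κ => ?_⟩
  obtain ⟨C, hC⟩ := hβ.bdd
  obtain ⟨C', hC'⟩ := g3.bdd
  have hC0 : 0 ≤ C' := (norm_nonneg _).trans (hC' 0)
  set k := min (exp (κ - 1)) 1
  have hk : 0 < k := lt_min (exp_pos _) one_pos
  have hosc := continuous_osc σ
  have hI : ∀ β : ℝ → ℂ, Continuous β → ∀ κ, Continuous fun w => osc σ w * amp β (vv κ w) :=
    fun β hβ κ => hosc.mul ((continuous_amp hβ).comp (continuous_vv κ))
  refine (hasDerivAt_integral_of_dominated_loc_of_deriv_le (Metric.ball_mem_nhds κ one_pos)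
    (Eventually.of_forall fun κ => (hI _ hβ.continuous κ).aestronglyMeasurable)
    ((integrable_osc_amp hβ.continuous hC κ).norm.mono'
      (hI _ hβ.continuous κ).aestronglyMeasurable (Eventually.of_forall fun w => ?_))
    (hI _ g3.continuous κ).aestronglyMeasurable
    (bound := fun w => C' * k⁻¹ * wt 1 w) (F' := fun κ w => osc σ w * amp _ (vv κ w))
    (Eventually.of_forall fun w κ' hκ' => ?_) ((integrable_wt one_pos).const_mul _)
    (Eventually.of_forall fun w κ' hκ' => ?_)).2
  · rw [norm_mul, norm_osc, one_mul]
  · rw [norm_mul, norm_osc, one_mul]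
    refine (norm_amp_le hC' _).trans ?_
    rw [mul_assoc]
    gcongr
    rw [← cosh_inv_eq_wt, ← mul_inv]
    gcongr
    · refine cosh_vv_ge hk.le (min_le_right _ _) ((min_le_left _ _).trans ?_) w
      rw [Metric.mem_ball, Real.dist_eq] at hκ'
      have := (abs_lt.1 hκ').1
      exact exp_le_exp.2 (by linarith)
  · have h1 := (hasDerivAt_amp hd (vv κ' w)).scomp κ' (hasDerivAt_vv' κ' w)
    refine (h1.const_mul (osc σ w)).congr_deriv ?_
    simp only [amp, Complex.real_smul]
    ring

/-- Stationary phase bound, uniform in `κ`: the amplitude `amp β (vv κ w)` and its total variation in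
`w` are bounded independently of `κ`. -/
lemma norm_Rint_le {μ : ℝ} {β : ℝ → ℂ} (hβ : Good μ β) : ∃ C, 0 < C ∧
    ∀ σ κ, 1 / 2 ≤ |σ| → ‖Rint σ β κ‖ ≤ C / √|σ| := by
  obtain ⟨β', g', hd⟩ := hβ.exists_deriv
  have g2 : Good μ (fun v => β' v + -1 * ((tanh v : ℝ) : ℂ) * β v) :=
    .add g' (.mul (.mul (.const _) .tanh) hβ)
  obtain ⟨C1, hC1⟩ := hβ.bdd
  obtain ⟨C2, hC2⟩ := g2.bdd
  set C := max (max C1 C2) 1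
  have hCp : 0 < C := lt_max_of_lt_right one_pos
  refine ⟨24 * C, by positivity, fun σ κ hσ => ?_⟩
  have hC1' : ∀ v, ‖β v‖ ≤ C := fun v => (hC1 v).trans (le_max_of_le_left (le_max_left _ _))
  have hC2' := fun v => (hC2 v).trans (show C2 ≤ C from le_max_of_le_left (le_max_right C1 C2))
  obtain ⟨ri, rb⟩ := integral_deriv_le (ψ := fun w => arctan (exp κ * sinh w)) (b := 2)
    (fun w => ((hasDerivAt_sinh w).const_mul (exp κ)).arctan)
    (fun w => by have := cosh_pos w; positivity) (fun w => abs_arctan_le _)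
  refine norm_integral_osc_le hσ
    (F' := fun w => (exp κ * cosh w / cosh (vv κ w)) • amp _ (vv κ w))
    (fun w => (hasDerivAt_amp hd (vv κ w)).scomp w (hasDerivAt_vv κ w))
    (fun w => (norm_amp_le hC1' _).trans ?_) (fun w => ?_) ri (by linarith)
    (integrable_osc_amp hβ.continuous hC1 κ)
  · exact mul_le_of_le_one_right hCp.le (inv_le_one_of_one_le₀ (one_le_cosh _))
  · have h1 : 0 ≤ exp κ * cosh w / cosh (vv κ w) :=
      div_nonneg (mul_nonneg (exp_pos _).le (cosh_pos _).le) (cosh_pos _).le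
    rw [norm_smul, norm_of_nonneg h1]
    refine (mul_le_mul_of_nonneg_left (norm_amp_le hC2' _) h1).trans (le_of_eq ?_)
    rw [mul_pow, ← cosh_vv_sq]
    have := (cosh_pos (vv κ w)).ne'
    field_simp

/-- Absolute bound, valid also for small `σ`, with a loss when `κ` tends to `-∞`. -/
lemma norm_Rint_le' {μ : ℝ} {β : ℝ → ℂ} (hβ : Good μ β) : ∃ C, 0 < C ∧
    ∀ σ κ, κ ≤ 0 → ‖Rint σ β κ‖ ≤ C * exp κ ^ (-(1 / 4) : ℝ) := by
  obtain ⟨C, hC⟩ := hβ.bdd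
  have hC0 : 0 ≤ C := (norm_nonneg _).trans (hC 0)
  set J := ∫ w, wt (1 / 4) w
  have hJ : 0 ≤ J := integral_nonneg fun w => (wt_pos _ _).le
  refine ⟨C * J + 1, by positivity, fun σ κ hκ => ?_⟩
  have hp : 0 < exp κ ^ (-(1 / 4) : ℝ) := rpow_pos_of_pos (exp_pos _) _
  refine (norm_integral_le_of_norm_le
    ((integrable_wt (a := 1 / 4) (by norm_num)).const_mul (C * exp κ ^ (-(1 / 4) : ℝ)))
    (Eventually.of_forall fun w => ?_)).trans ?_
  · rw [norm_mul, norm_osc, one_mul]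
    refine (norm_amp_le hC _).trans ?_
    rw [mul_assoc]
    gcongr
    rw [wt, ← mul_rpow (exp_pos _).le (cosh_pos _).le]
    calc (cosh (vv κ w))⁻¹ = cosh (vv κ w) ^ (-1 : ℝ) := (rpow_neg_one _).symm
      _ ≤ cosh (vv κ w) ^ (-(1 / 4) : ℝ) :=
        rpow_le_rpow_of_exponent_le (one_le_cosh _) (by norm_num)
      _ ≤ _ := rpow_le_rpow_of_nonpos (mul_pos (exp_pos _) (cosh_pos _))
        (cosh_vv_ge (exp_pos _).le (exp_le_one_iff.2 hκ) le_rfl w) (by norm_num)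
  · rw [integral_const_mul]
    nlinarith

end

/-! ### Oscillatory integrals with phase `M arctan (e ^ s) + ς s` -/

section
open Filter Topology Set

lemma hasDerivAt_arctan_exp (s : ℝ) : HasDerivAt (fun s => arctan (exp s)) (wt 1 s / 2) s := by
  refine (hasDerivAt_exp s).arctan.congr_deriv ?_
  rw [wt, rpow_neg_one, cosh_eq, exp_neg]
  have := exp_pos s
  field_simp
  ring

/-- The phase `M arctan (e ^ s) + ς s`. -/
noncomputable def Ph (M ς s : ℝ) : ℝ := M * arctan (exp s) + ς * s

/-- The derivative of the phase. -/
noncomputable def Pd (M ς s : ℝ) : ℝ := M * (wt 1 s / 2) + ς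

lemma hasDerivAt_Ph (M ς s : ℝ) : HasDerivAt (Ph M ς) (Pd M ς s) s := by
  have := ((hasDerivAt_arctan_exp s).const_mul M).add ((hasDerivAt_id s).const_mul ς)
  rwa [mul_one] at this

lemma hasDerivAt_Pd (M ς s : ℝ) : HasDerivAt (Pd M ς) (-tanh s * (M * (wt 1 s / 2))) s := by
  refine ((((hasDerivAt_wt 1 s).div_const 2).const_mul M).add_const ς).congr_deriv ?_
  ring

/-- The unimodular factor `exp (i Ph)`. -/
noncomputable def ePh (M ς s : ℝ) : ℂ := Complex.exp ((Ph M ς s : ℂ) * Complex.I)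

lemma norm_ePh (M ς s : ℝ) : ‖ePh M ς s‖ = 1 := Complex.norm_exp_ofReal_mul_I _

lemma hasDerivAt_ePh (M ς s : ℝ) :
    HasDerivAt (ePh M ς) (ePh M ς s * ((Pd M ς s : ℂ) * Complex.I)) s :=
  ((hasDerivAt_Ph M ς s).ofReal_comp.mul_const Complex.I).cexp

lemma continuous_ePh (M ς : ℝ) : Continuous (ePh M ς) :=
  continuous_iff_continuousAt.2 fun w => (hasDerivAt_ePh M ς w).continuousAt

lemma aesm_of_hasDerivAt {F F' : ℝ → ℂ} (hd : ∀ w, HasDerivAt F (F' w) w) :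
    AEStronglyMeasurable F' := by
  have : F' = deriv F := by ext w; exact ((hd w).deriv).symm
  rw [this]; exact (stronglyMeasurable_deriv F).aestronglyMeasurable

/-- The derivative of `wt (1/2) * A`, divided by `wt (1/2)`, when `A'` is the derivative of `A`. -/
noncomputable def wtD (A A' : ℝ → ℂ) (s : ℝ) : ℂ := A' s - ((tanh s / 2 : ℝ) : ℂ) * A s

lemma hasDerivAt_wt_mul {A A' : ℝ → ℂ} {s : ℝ} (h : HasDerivAt A (A' s) s) :
    HasDerivAt (fun s => (wt (1 / 2) s : ℂ) * A s) ((wt (1 / 2) s : ℂ) * wtD A A' s) s := by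
  refine ((hasDerivAt_wt (1 / 2) s).ofReal_comp.mul h).congr_deriv ?_
  have : -(1 / 2) * tanh s * wt (1 / 2) s = - (tanh s / 2) * wt (1 / 2) s := by ring
  rw [this]
  simp only [Complex.ofReal_mul, Complex.ofReal_neg, wtD]
  ring

lemma abs_tanh_half_le (s : ℝ) : |tanh s / 2| ≤ 1 / 2 := by
  rw [abs_div, abs_two]; linarith [abs_tanh_le s]

lemma norm_wtD_le {A A' : ℝ → ℂ} {a b s : ℝ} (h : ‖A s‖ ≤ a) (h' : ‖A' s‖ ≤ b) :
    ‖wtD A A' s‖ ≤ b + 1 / 2 * a := by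
  refine (norm_sub_le _ _).trans (add_le_add h' ?_)
  rw [norm_mul, Complex.norm_real]
  exact mul_le_mul (abs_tanh_half_le s) h (norm_nonneg _) (by norm_num)

lemma tanh_le_of_le {s : ℝ} (h : s ≤ -log 2) : tanh s ≤ -(1 / 2) := by
  have h1 : exp s ≤ 1 / 2 := by
    refine (exp_le_exp.2 h).trans ?_
    rw [exp_neg, exp_log two_pos]; norm_num
  have h2 := exp_pos s
  rw [tanh_eq_sinh_div_cosh, div_le_iff₀ (cosh_pos s), sinh_eq, cosh_eq]
  have : exp (-s) * exp s = 1 := by rw [← exp_add]; simp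
  nlinarith

lemma ineq_z {z L : ℝ} (hz : 0 < z) (hL : 1 / 2 ≤ L) :
    (1 + z ^ 2) / (1 + L * (z ^ 2 - 1) ^ 2) ≤
      10 * (z / (1 + L * (z ^ 2 - 1) ^ 2) + 1 / (L * (1 + z ^ 2))) := by
  have hD : 0 < 1 + L * (z ^ 2 - 1) ^ 2 := by positivity
  have hE : 0 < L * (1 + z ^ 2) := by positivity
  by_cases h : 1 / 2 ≤ z ∧ z ≤ 2
  · have h1 : (1 + z ^ 2) / (1 + L * (z ^ 2 - 1) ^ 2) ≤ 10 * (z / (1 + L * (z ^ 2 - 1) ^ 2)) := by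
      rw [← mul_div_assoc]
      gcongr
      nlinarith [h.1, h.2]
    have : 0 < 1 / (L * (1 + z ^ 2)) := by positivity
    linarith
  · have h1 : (1 + z ^ 2) / (1 + L * (z ^ 2 - 1) ^ 2) ≤ 10 * (1 / (L * (1 + z ^ 2))) := by
      rw [mul_one_div, div_le_div_iff₀ hD hE]
      have : (1 + z ^ 2) ^ 2 ≤ 10 * (z ^ 2 - 1) ^ 2 := by
        rw [not_and_or, not_le, not_le] at h
        rcases h with h | h
        · have : z ^ 2 ≤ 1 / 4 := by nlinarith
          nlinarith [sq_nonneg z]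
        · have : 4 ≤ z ^ 2 := by nlinarith
          nlinarith
      nlinarith
    have : 0 < z / (1 + L * (z ^ 2 - 1) ^ 2) := by positivity
    linarith

set_option maxHeartbeats 800000 in
/-- Van der Corput type bound `O(|M| ^ (-1/2))`, uniform in the frequency `ς`. The stationary point,
if present, is where `|M| / (2 cosh s) = |ς|`; on the support it is nondegenerate, since
`tanh s ≤ -1/2` for `s ≤ -log 2`. The second derivative of the phase there has size
`|M| / cosh s`, and the weight `(cosh s) ^ (-1/2)` compensates its decay. -/
lemma norm_integral_ePh_le {M ς K s₁ : ℝ} (hM : M ≠ 0) (hς : 1 / 2 ≤ |ς|) (hs : s₁ ≤ -log 2)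
    {A A' : ℝ → ℂ} (hd : ∀ s, HasDerivAt A (A' s) s) (hK : ∀ s, ‖A s‖ ≤ K)
    (hK' : ∀ s, ‖A' s‖ ≤ K) (h0 : ∀ s, s₁ ≤ s → A s = 0) (h0' : ∀ s, s₁ ≤ s → A' s = 0) :
    ‖∫ s, ePh M ς s * ((wt (1 / 2) s : ℂ) * A s)‖ ≤ 1500 * K / √|M| := by
  have hK0 : 0 ≤ K := (norm_nonneg _).trans (hK 0)
  set L := |ς| with hLdef
  have hL : 0 < L := by linarith
  set n := |M| with hn
  have hn0 : 0 < n := abs_pos.2 hM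
  set P := Pd M ς with hP
  set P' : ℝ → ℝ := fun s => -tanh s * (M * (wt 1 s / 2)) with hP'
  have hPd : ∀ s, HasDerivAt P (P' s) s := hasDerivAt_Pd M ς
  have hD : ∀ s, 0 < L + P s ^ 2 := fun s => by positivity
  set m : ℝ → ℝ := fun s => P s / (L + P s ^ 2) with hm
  set m' : ℝ → ℝ := fun s => P' s * (L - P s ^ 2) / (L + P s ^ 2) ^ 2 with hm'
  have hmd : ∀ s, HasDerivAt m (m' s) s := by
    intro s
    have h3 := (hPd s).div (((hPd s).pow 2).const_add L) (hD s).ne'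
    refine h3.congr_deriv ?_
    simp only [hm', Pi.pow_apply]
    congr 1
    push_cast
    ring
  set W : ℝ → ℂ := fun s => (wt (1 / 2) s : ℂ) * A s with hW
  set W' : ℝ → ℂ := fun s => (wt (1 / 2) s : ℂ) * wtD A A' s with hW'
  have hWd : ∀ s, HasDerivAt W (W' s) s := fun s => hasDerivAt_wt_mul (hd s)
  have hWb : ∀ s, ‖W s‖ ≤ wt (1 / 2) s * K := fun s => by
    simp only [hW]
    rw [norm_mul, Complex.norm_real, norm_of_nonneg (wt_pos _ _).le]
    exact mul_le_mul_of_nonneg_left (hK s) (wt_pos _ _).le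
  have hWb' : ∀ s, ‖W' s‖ ≤ wt (1 / 2) s * (2 * K) := fun s => by
    simp only [hW']
    rw [norm_mul, Complex.norm_real, norm_of_nonneg (wt_pos _ _).le]
    exact mul_le_mul_of_nonneg_left ((norm_wtD_le (hK s) (hK' s)).trans (by linarith)) (wt_pos _ _).le
  have hW0 : ∀ s, s₁ ≤ s → W s = 0 := fun s h => by simp only [hW, h0 s h, mul_zero]
  have hW0' : ∀ s, s₁ ≤ s → W' s = 0 := fun s h => by
    simp only [hW', wtD, h0 s h, h0' s h, mul_zero, sub_zero]
  clear_value P P' m m' W W' L n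
  have hWc : Continuous W := continuous_iff_continuousAt.2 fun w => (hWd w).continuousAt
  have hmc : Continuous m := continuous_iff_continuousAt.2 fun w => (hmd w).continuousAt
  have hec := continuous_ePh M ς
  have hWi : Integrable (fun s => ePh M ς s * W s) := by
    refine ((integrable_wt (a := 1 / 2) (by norm_num)).mul_const K).mono' (by fun_prop)
      (Eventually.of_forall fun s => ?_)
    rw [norm_mul, norm_ePh, one_mul]; exact hWb s
  -- `E` is the error after one integration by parts with the regularised inverse `m` of `P`.
  set E : ℝ → ℂ := fun s => ePh M ς s *
    (-Complex.I * ((L / (L + P s ^ 2) : ℝ) : ℂ) * W s + (m' s : ℂ) * W s + (m s : ℂ) * W' s) with hE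
  set G : ℝ → ℂ := fun s => ePh M ς s * ((m s : ℂ) * W s) with hG
  have hGd : ∀ s, HasDerivAt G (Complex.I * (ePh M ς s * W s) + E s) s := by
    intro s
    refine HasDerivAt.congr_deriv (f' := ePh M ς s * ((Pd M ς s : ℂ) * Complex.I) * ((m s : ℂ) * W s) +
      ePh M ς s * ((m' s : ℂ) * W s + (m s : ℂ) * W' s))
      ((hasDerivAt_ePh M ς s).mul ((hmd s).ofReal_comp.mul (hWd s))) ?_
    have key : P s * m s = 1 - L / (L + P s ^ 2) := by
      simp only [hm]
      have := (hD s).ne'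
      field_simp; ring
    have key2 : (P s : ℂ) * m s = 1 - ((L / (L + P s ^ 2) : ℝ) : ℂ) := by exact_mod_cast key
    simp only [hE, ← hP]
    linear_combination (ePh M ς s * Complex.I * W s) * key2
  have hEm : AEStronglyMeasurable E := by
    have h1 := aesm_of_hasDerivAt hGd
    have h2 := h1.sub (hWi.const_mul Complex.I).aestronglyMeasurable
    refine h2.congr (Eventually.of_forall fun s => ?_)
    simp
  have hE0 : ∀ s, s ∉ Iic s₁ → E s = 0 := by
    intro s hs'
    have : s₁ ≤ s := (not_le.1 hs').le
    simp only [hE, hW0 s this, hW0' s this, mul_zero, add_zero]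
  -- `z ^ 2 = |M| / (2 |ς| cosh s)`
  set q := √(n / (2 * L)) with hq
  have hq0 : 0 < q := sqrt_pos.2 (by positivity)
  have hq2 : q ^ 2 = n / (2 * L) := sq_sqrt (by positivity)
  set z : ℝ → ℝ := fun s => q * wt (1 / 2) s with hz
  have hz0 : ∀ s, 0 < z s := fun s => mul_pos hq0 (wt_pos _ _)
  have hz2 : ∀ s, L * z s ^ 2 = n * (wt 1 s / 2) := by
    intro s
    have h1 : wt (1 / 2) s * wt (1 / 2) s = wt 1 s := by rw [wt_mul]; norm_num
    simp only [hz]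
    rw [mul_pow, hq2, sq (wt _ _), h1]
    field_simp
  have hzd : ∀ s, HasDerivAt z (-(tanh s / 2) * z s) s := fun s => by
    refine ((hasDerivAt_wt (1 / 2) s).const_mul q).congr_deriv ?_
    simp only [hz]; ring
  clear_value z q
  have hrL : 0 < √L := sqrt_pos.2 hL
  have hrL2 : √L ^ 2 = L := sq_sqrt hL.le
  set ψ : ℝ → ℝ := fun s => arctan (√L * (z s ^ 2 - 1)) / √L + 2 / L * arctan (z s) with hψ
  set ψ' : ℝ → ℝ := fun s => -(tanh s / 2) * z s *
    (2 * z s / (1 + L * (z s ^ 2 - 1) ^ 2) + 2 / L * (1 / (1 + z s ^ 2))) with hψ'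
  have hψd : ∀ s, HasDerivAt ψ (ψ' s) s := by
    intro s
    have h1 := (((((hzd s).pow 2).sub_const 1).const_mul (√L)).arctan).div_const (√L)
    have h2 := (hzd s).arctan.const_mul (2 / L)
    refine (h1.add h2).congr_deriv ?_
    have h3 : 0 < 1 + L * (z s ^ 2 - 1) ^ 2 := by positivity
    have h4 : 0 < 1 + z s ^ 2 := by positivity
    simp only [hψ', Pi.pow_apply, mul_pow, hrL2]
    push_cast
    field_simp
    ring
  clear_value ψ ψ'
  have hψb : ∀ s, |ψ s| ≤ 8 / √L := by
    intro s
    rw [hψ]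
    refine (abs_add_le _ _).trans ?_
    rw [abs_div, abs_of_pos hrL, abs_mul, abs_of_pos (by positivity : 0 < 2 / L)]
    have h1 : |arctan (√L * (z s ^ 2 - 1))| / √L ≤ 2 / √L := by gcongr; exact abs_arctan_le _
    have h2 : 2 / L * |arctan (z s)| ≤ 2 / L * 2 := by gcongr; exact abs_arctan_le _
    have h3 : 2 / L * 2 ≤ 6 / √L := by
      have h5 : 2 / 3 ≤ √L := by
        rw [le_sqrt (by norm_num) hL.le]; linarith
      rw [div_mul_eq_mul_div, div_le_div_iff₀ hL hrL]
      nlinarith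
    have : 8 / √L = 2 / √L + 6 / √L := by ring
    linarith
  have hψn : ∀ s ≤ s₁, 1 / 4 * z s *
      (2 * z s / (1 + L * (z s ^ 2 - 1) ^ 2) + 2 / L * (1 / (1 + z s ^ 2))) ≤ ψ' s := by
    intro s h
    have h1 := tanh_le_of_le (h.trans hs)
    simp only [hψ']
    have := hz0 s
    have : 0 < 1 + L * (z s ^ 2 - 1) ^ 2 := by positivity
    gcongr
    linarith
  obtain ⟨hψi, hψI⟩ := integral_Iic_deriv_le (a := s₁) (fun s _ => hψd s) (fun s h =>
    le_trans (by have := hz0 s; positivity) (hψn s h)) hψb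
  have hEb : ∀ s ≤ s₁, ‖E s‖ ≤ 60 * K / q * ψ' s := by
    intro s h
    have hzs := hz0 s
    have hx := wt_pos 1 s
    have hPu : |P s| ≤ L * (1 + z s ^ 2) := by
      simp only [hP, Pd]
      refine (abs_add_le _ _).trans ?_
      rw [abs_mul, abs_of_pos (by positivity : 0 < wt 1 s / 2), ← hn, ← hz2 s]
      linarith
    have hP'u : |P' s| ≤ L * z s ^ 2 := by
      simp only [hP']
      rw [abs_mul, abs_neg, abs_mul, abs_of_pos (by positivity : 0 < wt 1 s / 2), ← hn, ← hz2 s]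
      exact mul_le_of_le_one_left (by positivity) (abs_tanh_le s)
    have hPl : L ^ 2 * (z s ^ 2 - 1) ^ 2 ≤ P s ^ 2 := by
      have h1 := abs_abs_sub_abs_le_abs_sub (M * (wt 1 s / 2)) (-ς)
      rw [abs_mul, abs_of_pos (by positivity : 0 < wt 1 s / 2), ← hn, ← hz2 s, abs_neg, ← hLdef,
        sub_neg_eq_add] at h1
      rw [← sq_abs (P s), ← mul_pow, ← sq_abs (L * (z s ^ 2 - 1))]
      have h2 : |L * (z s ^ 2 - 1)| ≤ |P s| := by
        have h3 : P s = M * (wt 1 s / 2) + ς := by rw [hP]; rfl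
        rw [h3, mul_sub, mul_one]
        exact h1
      gcongr
    set w := wt (1 / 2) s with hw
    have hw0 : 0 < w := wt_pos _ _
    have hm1 : |m s| ≤ L * (1 + z s ^ 2) / (L + P s ^ 2) := by
      simp only [hm]
      rw [abs_div, abs_of_pos (hD s)]
      have := hD s
      gcongr
    have hm2 : |m' s| ≤ L * z s ^ 2 / (L + P s ^ 2) := by
      simp only [hm']
      have h1 := hD s
      rw [abs_div, abs_mul, abs_of_pos (pow_pos h1 2), div_le_div_iff₀ (pow_pos h1 2) h1]
      have h2 : |L - P s ^ 2| ≤ L + P s ^ 2 := by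
        rw [abs_le]; constructor <;> nlinarith [sq_nonneg (P s)]
      have h3 := mul_le_mul hP'u h2 (abs_nonneg _) (by positivity)
      nlinarith
    have hE1 : ‖E s‖ ≤ 3 * K * w * (L * (1 + z s ^ 2) / (L + P s ^ 2)) := by
      simp only [hE]
      rw [norm_mul, norm_ePh, one_mul]
      refine (norm_add₃_le).trans ?_
      rw [norm_mul, norm_mul, norm_neg, Complex.norm_I, one_mul, norm_mul, norm_mul,
        Complex.norm_real, Complex.norm_real, Complex.norm_real, Real.norm_eq_abs, Real.norm_eq_abs,
        Real.norm_eq_abs, abs_of_pos (div_pos hL (hD s))]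
      have h1 := mul_le_mul_of_nonneg_left (hWb s) (div_pos hL (hD s)).le
      have h2 := mul_le_mul hm2 (hWb s) (norm_nonneg _)
        (div_nonneg (by positivity) (hD s).le)
      have h3 := mul_le_mul hm1 (hWb' s) (norm_nonneg _)
        (div_nonneg (by positivity) (hD s).le)
      refine (add_le_add (add_le_add h1 h2) h3).trans (le_of_eq ?_)
      ring
    have hE2 : L * (1 + z s ^ 2) / (L + P s ^ 2) ≤
        (1 + z s ^ 2) / (1 + L * (z s ^ 2 - 1) ^ 2) := by
      rw [div_le_div_iff₀ (hD s) (by positivity)]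
      have : L * (1 + L * (z s ^ 2 - 1) ^ 2) ≤ L + P s ^ 2 := by linarith
      calc L * (1 + z s ^ 2) * (1 + L * (z s ^ 2 - 1) ^ 2)
          = (1 + z s ^ 2) * (L * (1 + L * (z s ^ 2 - 1) ^ 2)) := by ring
        _ ≤ _ := by gcongr
    have hE3 := ineq_z hzs hς
    have hwz : w = z s / q := by simp only [hz, hw]; field_simp
    clear_value w E
    calc ‖E s‖ ≤ 3 * K * w * (10 * (z s / (1 + L * (z s ^ 2 - 1) ^ 2) + 1 / (L * (1 + z s ^ 2)))) :=
          hE1.trans (mul_le_mul_of_nonneg_left (hE2.trans hE3) (by positivity))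
      _ = 60 * K / q * (1 / 4 * z s *
        (2 * z s / (1 + L * (z s ^ 2 - 1) ^ 2) + 2 / L * (1 / (1 + z s ^ 2)))) := by
          have : 0 < 1 + L * (z s ^ 2 - 1) ^ 2 := by positivity
          rw [hwz]; field_simp; ring
      _ ≤ _ := mul_le_mul_of_nonneg_left (hψn s h) (by positivity)
  have hEi' : IntegrableOn E (Iic s₁) := by
    refine (hψi.const_mul (60 * K / q)).mono' hEm.restrict ?_
    exact (ae_restrict_iff' measurableSet_Iic).2 (Eventually.of_forall hEb)
  have hEi : Integrable E := hEi'.integrable_of_forall_notMem_eq_zero hE0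
  have hEI : ‖∫ s, E s‖ ≤ 60 * K / q * (2 * (8 / √L)) := by
    rw [← setIntegral_eq_integral_of_forall_compl_eq_zero (s := Iic s₁) hE0]
    refine (norm_integral_le_of_norm_le (hψi.const_mul (60 * K / q)) ?_).trans ?_
    · exact (ae_restrict_iff' measurableSet_Iic).2 (Eventually.of_forall hEb)
    · rw [integral_const_mul]; gcongr
  have hGi : Integrable G := by
    refine (((integrable_wt (a := 1 / 2) (by norm_num)).mul_const K).const_mul (1 / √L)).mono'
      (by fun_prop) (Eventually.of_forall fun s => ?_)
    simp only [hG]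
    rw [norm_mul, norm_ePh, one_mul, norm_mul, Complex.norm_real, Real.norm_eq_abs]
    refine mul_le_mul ?_ (hWb s) (norm_nonneg _) (by positivity)
    simp only [hm]
    rw [abs_div, abs_of_pos (hD s), div_le_div_iff₀ (hD s) hrL, ← sq_abs (P s)]
    nlinarith [sq_nonneg (√L - |P s|), sq_nonneg (|P s|)]
  have hzero := integral_eq_zero_of_hasDerivAt_of_integrable hGd
    ((hWi.const_mul Complex.I).add hEi) hGi
  rw [integral_add (hWi.const_mul Complex.I) hEi, integral_const_mul] at hzero
  have hfin : ‖∫ s, ePh M ς s * W s‖ = ‖∫ s, E s‖ := by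
    have h8 := congrArg norm (eq_neg_of_add_eq_zero_left hzero)
    rwa [norm_mul, Complex.norm_I, one_mul, norm_neg] at h8
  have hqL : q * √L = √n / √2 := by
    rw [hq, sqrt_div hn0.le, sqrt_mul zero_le_two]; field_simp
  have hWe : ∀ s, (wt (1 / 2) s : ℂ) * A s = W s := fun s => by rw [hW]
  simp only [hWe]
  rw [hfin]
  refine hEI.trans ?_
  have hn1 : 0 < √n := sqrt_pos.2 hn0
  have : 60 * K / q * (2 * (8 / √L)) = 960 * √2 * K / √n := by
    have h1 : 60 * K / q * (2 * (8 / √L)) = 960 * K / (q * √L) := by field_simp; ring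
    rw [h1, hqL]; field_simp
  rw [this]
  have : √2 ≤ 1.5 := by rw [sqrt_le_left (by norm_num)]; norm_num
  gcongr
  linarith

/-- One integration by parts where the phase has no stationary point on the support. -/
lemma ibp_step {M ς s₁ : ℝ} {f f' : ℝ → ℂ} (hf : ∀ s, HasDerivAt f (f' s) s) (h0 : ∀ s, s₁ ≤ s → f s = 0)
    (h0' : ∀ s, s₁ ≤ s → f' s = 0) (hP : ∀ s ≤ s₁, Pd M ς s ≠ 0) {p a b : ℝ}
    (hfi : ∀ s, ‖f s‖ ≤ a * wt (1 / 2) s) (hfi' : ∀ s, ‖f' s‖ ≤ b * wt (1 / 2) s)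
    (hp : 0 < p) (hPl : ∀ s ≤ s₁, p ≤ |Pd M ς s|)
    (hP' : ∀ s ≤ s₁, |M * (wt 1 s / 2)| ≤ p) {g : ℝ → ℂ}
    (hg : ∀ s, g s = ((tanh s * (M * (wt 1 s / 2)) / Pd M ς s ^ 2 : ℝ) : ℂ) * f s
      + ((1 / Pd M ς s : ℝ) : ℂ) * f' s) :
    (∀ s, ‖g s‖ ≤ (a + b) / p * wt (1 / 2) s) ∧
    ‖∫ s, ePh M ς s * f s‖ = ‖∫ s, ePh M ς s * g s‖ := by
  have hgb : ∀ s, ‖g s‖ ≤ (a + b) / p * wt (1 / 2) s := by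
    intro s
    rcases le_total s s₁ with h | h
    · have h1 := hPl s h
      rw [hg]
      refine (norm_add_le _ _).trans ?_
      rw [norm_mul, norm_mul, Complex.norm_real, Complex.norm_real, Real.norm_eq_abs,
        Real.norm_eq_abs, abs_div, abs_div, abs_one, abs_mul, abs_pow]
      have hpos : 0 < |Pd M ς s| := hp.trans_le h1
      have e1 : |tanh s| * |M * (wt 1 s / 2)| / |Pd M ς s| ^ 2 ≤ 1 / p := by
        calc |tanh s| * |M * (wt 1 s / 2)| / |Pd M ς s| ^ 2 ≤ 1 * p / p ^ 2 := by
              gcongr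
              exacts [abs_tanh_le s, hP' s h]
          _ = 1 / p := by field_simp
      have e2 : 1 / |Pd M ς s| ≤ 1 / p := by gcongr
      have := mul_le_mul e1 (hfi s) (norm_nonneg _) (by positivity)
      have := mul_le_mul e2 (hfi' s) (norm_nonneg _) (by positivity)
      calc _ ≤ 1 / p * (a * wt (1 / 2) s) + 1 / p * (b * wt (1 / 2) s) := by linarith
        _ = _ := by ring
    · rw [hg, h0 s h, h0' s h, mul_zero, mul_zero, add_zero, norm_zero]
      have h1 := (norm_nonneg _).trans (hfi s)
      have h2 := (norm_nonneg _).trans (hfi' s)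
      calc 0 ≤ (a * wt (1 / 2) s + b * wt (1 / 2) s) / p := by positivity
        _ = _ := by ring
  refine ⟨hgb, ?_⟩
  have hfc : Continuous f := continuous_iff_continuousAt.2 fun w => (hf w).continuousAt
  have hec := continuous_ePh M ς
  have hwi := integrable_wt (a := 1 / 2) (by norm_num)
  have hPc : Continuous (Pd M ς) :=
    continuous_iff_continuousAt.2 fun w => (hasDerivAt_Pd M ς w).continuousAt
  have i1 : Integrable (fun s => ePh M ς s * f s) := by
    refine (hwi.const_mul a).mono' (by fun_prop) (Eventually.of_forall fun s => ?_)
    rw [norm_mul, norm_ePh, one_mul]; exact hfi s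
  set G : ℝ → ℂ := fun s => ePh M ς s * (((1 / Pd M ς s : ℝ) : ℂ) * f s) with hG
  have hGd : ∀ s, HasDerivAt G (Complex.I * (ePh M ς s * f s) + ePh M ς s * g s) s := by
    intro s
    rcases le_or_gt s s₁ with h | h
    · have hne := hP s h
      have h1 := (hasDerivAt_Pd M ς s).inv hne
      have h2 : HasDerivAt (fun s => 1 / Pd M ς s)
          (tanh s * (M * (wt 1 s / 2)) / Pd M ς s ^ 2) s := by
        simp only [one_div]
        refine h1.congr_deriv ?_
        rw [neg_mul, neg_neg]
      refine HasDerivAt.congr_deriv (f' := ePh M ς s * ((Pd M ς s : ℂ) * Complex.I) *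
        (((1 / Pd M ς s : ℝ) : ℂ) * f s) + ePh M ς s *
        (((tanh s * (M * (wt 1 s / 2)) / Pd M ς s ^ 2 : ℝ) : ℂ) * f s +
          ((1 / Pd M ς s : ℝ) : ℂ) * f' s))
        ((hasDerivAt_ePh M ς s).mul (h2.ofReal_comp.mul (hf s))) ?_
      rw [hg]
      have key : (Pd M ς s : ℂ) * ((1 / Pd M ς s : ℝ) : ℂ) = 1 := by
        rw [← Complex.ofReal_mul, mul_one_div_cancel hne, Complex.ofReal_one]
      linear_combination (ePh M ς s * Complex.I * f s) * key
    · have h1 : G =ᶠ[𝓝 s] fun _ => 0 := by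
        filter_upwards [Ioi_mem_nhds h] with x hx
        simp only [hG, h0 x hx.le, mul_zero]
      rw [hg, h0 s h.le, h0' s h.le]
      simp only [mul_zero, add_zero]
      exact (hasDerivAt_const s (0 : ℂ)).congr_of_eventuallyEq h1
  have hm2 : AEStronglyMeasurable (fun s => ePh M ς s * g s) := by
    have h2 := (aesm_of_hasDerivAt hGd).sub (i1.const_mul Complex.I).aestronglyMeasurable
    refine h2.congr (Eventually.of_forall fun s => ?_)
    simp
  have i2 : Integrable (fun s => ePh M ς s * g s) := by
    refine (hwi.const_mul ((a + b) / p)).mono' hm2 (Eventually.of_forall fun s => ?_)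
    rw [norm_mul, norm_ePh, one_mul]; exact hgb s
  have hGc : Continuous G := continuous_iff_continuousAt.2 fun w => (hGd w).continuousAt
  have i3 : Integrable G := by
    refine (hwi.const_mul (1 / p * a)).mono' hGc.aestronglyMeasurable
      (Eventually.of_forall fun s => ?_)
    simp only [hG]
    rw [norm_mul, norm_ePh, one_mul, norm_mul, Complex.norm_real, Real.norm_eq_abs, mul_assoc]
    rcases le_total s s₁ with h | h
    · refine mul_le_mul ?_ (hfi s) (norm_nonneg _) (by positivity)
      rw [abs_div, abs_one]
      have := hPl s h
      gcongr
    · rw [h0 s h, norm_zero, mul_zero]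
      exact mul_nonneg (by positivity) ((norm_nonneg _).trans (hfi s))
  have hzero := integral_eq_zero_of_hasDerivAt_of_integrable hGd
    ((i1.const_mul Complex.I).add i2) i3
  rw [integral_add (i1.const_mul Complex.I) i2, integral_const_mul] at hzero
  have h8 := congrArg norm (eq_neg_of_add_eq_zero_left hzero)
  rwa [norm_mul, Complex.norm_I, one_mul, norm_neg] at h8

/-- When the frequency `ς` dominates the rest of the phase derivative on the support, two
integrations by parts give decay `O(ς ^ (-2))`. -/
lemma norm_integral_ePh_le' {M ς K s₁ : ℝ} (hς : 1 / 2 ≤ |ς|)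
    (hs : ∀ s ≤ s₁, |M * (wt 1 s / 2)| ≤ |ς| / 2)
    {A A' A'' : ℝ → ℂ} (hd : ∀ s, HasDerivAt A (A' s) s) (hd' : ∀ s, HasDerivAt A' (A'' s) s)
    (hK : ∀ s, ‖A s‖ ≤ K) (hK' : ∀ s, ‖A' s‖ ≤ K) (hK'' : ∀ s, ‖A'' s‖ ≤ K)
    (h0 : ∀ s, s₁ ≤ s → A s = 0) (h0' : ∀ s, s₁ ≤ s → A' s = 0) (h0'' : ∀ s, s₁ ≤ s → A'' s = 0) :
    ‖∫ s, ePh M ς s * ((wt (1 / 2) s : ℂ) * A s)‖ ≤ 52 * (∫ s, wt (1 / 2) s) * K / ς ^ 2 := by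
  have hK0 : 0 ≤ K := (norm_nonneg _).trans (hK 0)
  set p := |ς| / 2 with hp
  have hp0 : 0 < p := by linarith
  set f : ℝ → ℂ := fun s => (wt (1 / 2) s : ℂ) * A s with hf
  set f' : ℝ → ℂ := fun s => (wt (1 / 2) s : ℂ) * wtD A A' s with hf'
  set B' : ℝ → ℂ := fun s => A'' s - (((1 - tanh s ^ 2) / 2 : ℝ) * A s + ((tanh s / 2 : ℝ) : ℂ) * A' s)
    with hB'
  set f'' : ℝ → ℂ := fun s => (wt (1 / 2) s : ℂ) * wtD (wtD A A') B' s with hf''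
  have hBd : ∀ s, HasDerivAt (wtD A A') (B' s) s := fun s =>
    (hd' s).sub (((hasDerivAt_tanh' s).div_const 2).ofReal_comp.mul (hd s))
  have hfd : ∀ s, HasDerivAt f (f' s) s := fun s => hasDerivAt_wt_mul (hd s)
  have hfd' : ∀ s, HasDerivAt f' (f'' s) s := fun s => hasDerivAt_wt_mul (hBd s)
  have hDb : ∀ s, ‖wtD A A' s‖ ≤ 3 / 2 * K := fun s =>
    (norm_wtD_le (hK s) (hK' s)).trans (by linarith)
  have hBb : ∀ s, ‖B' s‖ ≤ 2 * K := fun s => by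
    refine (norm_sub_le _ _).trans ?_
    have h1 : ‖(((1 - tanh s ^ 2) / 2 : ℝ) : ℂ) * A s + ((tanh s / 2 : ℝ) : ℂ) * A' s‖ ≤
        1 / 2 * K + 1 / 2 * K := by
      refine (norm_add_le _ _).trans (add_le_add ?_ ?_)
      · rw [norm_mul, Complex.norm_real, Real.norm_eq_abs]
        refine mul_le_mul ?_ (hK s) (norm_nonneg _) (by norm_num)
        have := abs_tanh_le s
        have : tanh s ^ 2 ≤ 1 := by rw [← sq_abs]; nlinarith [abs_nonneg (tanh s)]
        rw [abs_of_nonneg (by linarith)]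
        linarith [sq_nonneg (tanh s)]
      · rw [norm_mul, Complex.norm_real]
        exact mul_le_mul (abs_tanh_half_le s) (hK' s) (norm_nonneg _) (by norm_num)
    linarith [hK'' s]
  have hmulb : ∀ (F : ℝ → ℂ) (c s : ℝ), ‖F s‖ ≤ c → ‖(wt (1 / 2) s : ℂ) * F s‖ ≤
      c * wt (1 / 2) s := fun F c s h => by
    rw [norm_mul, Complex.norm_real, norm_of_nonneg (wt_pos _ _).le, mul_comm]
    exact mul_le_mul_of_nonneg_right h (wt_pos _ _).le
  have b0 : ∀ s, ‖f s‖ ≤ K * wt (1 / 2) s := fun s => hmulb _ _ _ (hK s)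
  have b1 : ∀ s, ‖f' s‖ ≤ (2 * K) * wt (1 / 2) s := fun s =>
    hmulb _ _ _ ((hDb s).trans (by linarith))
  have b2 : ∀ s, ‖f'' s‖ ≤ (3 * K) * wt (1 / 2) s := fun s =>
    hmulb _ _ _ ((norm_wtD_le (hDb s) (hBb s)).trans (by linarith))
  have z0 : ∀ s, s₁ ≤ s → f s = 0 := fun s h => by simp only [hf, h0 s h, mul_zero]
  have z1 : ∀ s, s₁ ≤ s → f' s = 0 := fun s h => by
    simp only [hf', wtD, h0 s h, h0' s h, mul_zero, sub_zero]
  have z2 : ∀ s, s₁ ≤ s → f'' s = 0 := fun s h => by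
    simp only [hf'', hB', wtD, h0 s h, h0' s h, h0'' s h, mul_zero, sub_zero, add_zero]
  clear_value f f' f'' B'
  have hPl : ∀ s ≤ s₁, p ≤ |Pd M ς s| := fun s h => by
    have h1 := hs s h
    have h2 := abs_sub_abs_le_abs_sub ς (-(M * (wt 1 s / 2)))
    rw [abs_neg, sub_neg_eq_add, add_comm ς] at h2
    rw [Pd]; linarith
  have hPne : ∀ s ≤ s₁, Pd M ς s ≠ 0 := fun s h => abs_pos.1 (hp0.trans_le (hPl s h))
  set x : ℝ → ℝ := fun s => M * (wt 1 s / 2) with hx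
  have hxd : ∀ s, HasDerivAt x (-tanh s * x s) s := fun s => by
    refine (((hasDerivAt_wt 1 s).div_const 2).const_mul M).congr_deriv ?_
    simp only [hx]; ring
  have hxP : ∀ s, HasDerivAt (Pd M ς) (-tanh s * x s) s := hasDerivAt_Pd M ς
  -- The amplitude after one step, and its derivative.
  set g : ℝ → ℂ := fun s => ((tanh s * x s / Pd M ς s ^ 2 : ℝ) : ℂ) * f s
      + ((1 / Pd M ς s : ℝ) : ℂ) * f' s with hg
  set c₁ : ℝ → ℝ := fun s => ((1 - 2 * tanh s ^ 2) * x s * Pd M ς s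
      + 2 * tanh s ^ 2 * x s ^ 2) / Pd M ς s ^ 3 with hc₁
  set g' : ℝ → ℂ := fun s => ((c₁ s : ℝ) : ℂ) * f s
      + ((2 * (tanh s * x s / Pd M ς s ^ 2) : ℝ) : ℂ) * f' s + ((1 / Pd M ς s : ℝ) : ℂ) * f'' s
    with hg'
  have zg : ∀ s, s₁ ≤ s → g s = 0 := fun s h => by
    simp only [hg, z0 s h, z1 s h, mul_zero, add_zero]
  have zg' : ∀ s, s₁ ≤ s → g' s = 0 := fun s h => by
    simp only [hg', z0 s h, z1 s h, z2 s h, mul_zero, add_zero]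
  have hgd : ∀ s, HasDerivAt g (g' s) s := by
    intro s
    rcases le_or_gt s s₁ with h | h
    · have hne := hPne s h
      have e1 : HasDerivAt (fun s => tanh s * x s / Pd M ς s ^ 2) (c₁ s) s := by
        have := ((hasDerivAt_tanh' s).mul (hxd s)).div ((hxP s).pow 2) (pow_ne_zero 2 hne)
        refine this.congr_deriv ?_
        simp only [hc₁, Pi.mul_apply, Pi.pow_apply]
        push_cast
        field_simp
        ring
      have e2 : HasDerivAt (fun s => 1 / Pd M ς s) (tanh s * x s / Pd M ς s ^ 2) s := by
        simp only [one_div]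
        refine ((hxP s).inv hne).congr_deriv ?_
        rw [neg_mul, neg_neg]
      refine HasDerivAt.congr_deriv ((e1.ofReal_comp.mul (hfd s)).add
        (e2.ofReal_comp.mul (hfd' s))) ?_
      simp only [hg', Complex.ofReal_mul, Complex.ofReal_ofNat]
      ring
    · rw [zg' s h.le]
      refine (hasDerivAt_const s (0 : ℂ)).congr_of_eventuallyEq ?_
      filter_upwards [Ioi_mem_nhds h] with y hy using zg y hy.le
  obtain ⟨gb, e1⟩ := ibp_step hfd z0 z1 hPne b0 b1 hp0 hPl hs (g := g) (fun s => rfl)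
  have hgb' : ∀ s, ‖g' s‖ ≤ (10 * K / p) * wt (1 / 2) s := by
    intro s
    rcases le_total s s₁ with h | h
    · have h1 := hPl s h
      have hpos : 0 < |Pd M ς s| := hp0.trans_le h1
      have ht := abs_tanh_le s
      have hxs : |x s| ≤ p := hs s h
      have a1 : |c₁ s| ≤ 3 / p := by
        simp only [hc₁]
        rw [abs_div, abs_pow]
        have ht2 : tanh s ^ 2 ≤ 1 := by rw [← sq_abs]; nlinarith [abs_nonneg (tanh s)]
        have h3 : |(1 - 2 * tanh s ^ 2) * x s * Pd M ς s + 2 * tanh s ^ 2 * x s ^ 2| ≤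
            3 * p * |Pd M ς s| := by
          refine (abs_add_le _ _).trans ?_
          rw [abs_mul, abs_mul, abs_of_nonneg (by positivity : 0 ≤ 2 * tanh s ^ 2 * x s ^ 2),
            ← sq_abs (x s)]
          have q1 : |1 - 2 * tanh s ^ 2| ≤ 1 := by
            rw [abs_le]; constructor <;> linarith [sq_nonneg (tanh s)]
          have q2 : |1 - 2 * tanh s ^ 2| * |x s| ≤ 1 * p :=
            mul_le_mul q1 hxs (abs_nonneg _) zero_le_one
          have q3 : |x s| ^ 2 ≤ p * |Pd M ς s| := by
            rw [sq]; exact mul_le_mul hxs (hxs.trans h1) (abs_nonneg _) hp0.le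
          have q4 : 2 * tanh s ^ 2 * |x s| ^ 2 ≤ 2 * 1 * (p * |Pd M ς s|) := by gcongr
          have q5 := mul_le_mul_of_nonneg_right q2 hpos.le
          linarith
        rw [div_le_div_iff₀ (pow_pos hpos 3) hp0]
        have h4 : p * p ≤ |Pd M ς s| * |Pd M ς s| := mul_le_mul h1 h1 hp0.le hpos.le
        calc _ ≤ 3 * p * |Pd M ς s| * p := by gcongr
          _ = 3 * |Pd M ς s| * (p * p) := by ring
          _ ≤ 3 * |Pd M ς s| * (|Pd M ς s| * |Pd M ς s|) := by gcongr
          _ = _ := by ring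
      have a2 : |2 * (tanh s * x s / Pd M ς s ^ 2)| ≤ 2 / p := by
        rw [abs_mul, abs_two, abs_div, abs_mul, abs_pow]
        calc 2 * (|tanh s| * |x s| / |Pd M ς s| ^ 2) ≤ 2 * (1 * p / p ^ 2) := by gcongr
          _ = 2 / p := by field_simp
      have a3 : |1 / Pd M ς s| ≤ 1 / p := by rw [abs_div, abs_one]; gcongr
      have m1 := mul_le_mul a1 (b0 s) (norm_nonneg _) (by positivity)
      have m2 := mul_le_mul a2 (b1 s) (norm_nonneg _) (by positivity)
      have m3 := mul_le_mul a3 (b2 s) (norm_nonneg _) (by positivity)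
      refine (norm_add₃_le).trans ?_
      have nm : ∀ (r : ℝ) (c : ℂ), ‖(r : ℂ) * c‖ = |r| * ‖c‖ := fun r c => by
        rw [norm_mul, Complex.norm_real, Real.norm_eq_abs]
      rw [nm, nm, nm]
      calc _ ≤ 3 / p * (K * wt (1 / 2) s) + 2 / p * (2 * K * wt (1 / 2) s) +
            1 / p * (3 * K * wt (1 / 2) s) := add_le_add (add_le_add m1 m2) m3
        _ = _ := by ring
    · rw [zg' s h, norm_zero]
      have := wt_pos (1 / 2) s
      positivity
  obtain ⟨gb2, e2⟩ := ibp_step hgd zg zg' hPne gb hgb' hp0 hPl hs (fun s => rfl)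
  have hfe : ∀ s, (wt (1 / 2) s : ℂ) * A s = f s := fun s => by rw [hf]
  simp only [hfe]
  rw [e1, e2]
  have hc : ((K + 2 * K) / p + 10 * K / p) / p = 52 * K / ς ^ 2 := by
    rw [hp, ← sq_abs ς]
    have : |ς| ≠ 0 := by linarith
    field_simp; ring
  rw [hc] at gb2
  refine (norm_integral_le_of_norm_le ((integrable_wt (a := 1 / 2) (by norm_num)).const_mul
    (52 * K / ς ^ 2)) (Eventually.of_forall fun s => ?_)).trans (le_of_eq ?_)
  · rw [norm_mul, norm_ePh, one_mul]; exact gb2 s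
  · rw [integral_const_mul]; ring

end

/-! ### The integral in the logarithmic variable -/

section
open Filter Topology Set

/-- `log (cos (arctan (e ^ s)))`. -/
noncomputable def kap (s : ℝ) : ℝ := -(s + log (2 * cosh s)) / 2

lemma le_log_two_cosh (s : ℝ) : |s| ≤ log (2 * cosh s) := by
  rw [le_log_iff_exp_le (by have := cosh_pos s; positivity)]
  rcases abs_cases s with ⟨h, -⟩ | ⟨h, -⟩
  · rw [h]; linarith [cosh_ge_exp s]
  · rw [h]; linarith [cosh_ge_exp_neg s]

lemma kap_nonpos (s : ℝ) : kap s ≤ 0 := by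
  have := (neg_abs_le s).trans' (neg_le_neg (le_log_two_cosh s))
  unfold kap; linarith

lemma exp_kap_ge (s : ℝ) : (2 * cosh s)⁻¹ ≤ exp (kap s) := by
  have h1 : 0 < 2 * cosh s := by have := cosh_pos s; positivity
  rw [← exp_log (inv_pos.2 h1), log_inv]
  refine exp_le_exp.2 ?_
  have := (le_abs_self s).trans (le_log_two_cosh s)
  unfold kap; linarith

lemma hasDerivAt_kap (s : ℝ) : HasDerivAt kap (-(1 + tanh s) / 2) s := by
  have h1 : 0 < 2 * cosh s := by have := cosh_pos s; positivity
  have h2 := ((hasDerivAt_cosh s).const_mul 2).log h1.ne'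
  refine (((hasDerivAt_id s).add h2).neg.div_const 2).congr_deriv ?_
  rw [tanh_eq_sinh_div_cosh]
  have := (cosh_pos s).ne'
  field_simp

/-- Bounds for the inner integral as a function of the logarithmic variable `s`. -/
lemma Q_bounds (μ : ℝ) {β : ℝ → ℂ} (hβ : Good μ β) : ∃ C, 0 < C ∧ ∀ σ,
    (∀ s, ‖Rint σ β (kap s)‖ ≤ C * wt (-(1 / 4)) s) ∧
    ∃ Q₁ Q₂ : ℝ → ℂ, (∀ s, HasDerivAt (fun s => Rint σ β (kap s)) (Q₁ s) s) ∧
      (∀ s, HasDerivAt Q₁ (Q₂ s) s) ∧ (1 / 2 ≤ |σ| → ∀ s, ‖Rint σ β (kap s)‖ ≤ C / √|σ| ∧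
        ‖Q₁ s‖ ≤ C / √|σ| ∧ ‖Q₂ s‖ ≤ C / √|σ|) := by
  obtain ⟨β₁, g₁, h₁⟩ := hasDerivAt_Rint hβ
  obtain ⟨β₂, g₂, h₂⟩ := hasDerivAt_Rint g₁
  obtain ⟨C, hC, b⟩ := norm_Rint_le' hβ
  obtain ⟨C0, hC0, b0⟩ := norm_Rint_le hβ
  obtain ⟨C1, hC1, b1⟩ := norm_Rint_le g₁
  obtain ⟨C2, hC2, b2⟩ := norm_Rint_le g₂
  refine ⟨C * 2 + C0 + C1 + C2, by positivity, fun σ => ⟨fun s => ?_, ?_⟩⟩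
  · have hw := wt_pos (-(1 / 4)) s
    have h2c : 0 < 2 * cosh s := by have := cosh_pos s; positivity
    have h : exp (kap s) ^ (-(1 / 4) : ℝ) ≤ 2 * wt (-(1 / 4)) s := by
      calc exp (kap s) ^ (-(1 / 4) : ℝ) ≤ ((2 * cosh s)⁻¹) ^ (-(1 / 4) : ℝ) :=
            rpow_le_rpow_of_nonpos (inv_pos.2 h2c) (exp_kap_ge s) (by norm_num)
        _ = 2 ^ (1 / 4 : ℝ) * wt (-(1 / 4)) s := by
            rw [inv_rpow h2c.le, ← rpow_neg h2c.le, mul_rpow zero_le_two (cosh_pos s).le, neg_neg,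
              wt, neg_neg]
        _ ≤ 2 * wt (-(1 / 4)) s := by
            gcongr
            exact (rpow_le_rpow_of_exponent_le one_le_two (by norm_num : (1 / 4 : ℝ) ≤ 1)).trans
              (by simp)
    calc _ ≤ C * exp (kap s) ^ (-(1 / 4) : ℝ) := b σ _ (kap_nonpos s)
      _ ≤ C * (2 * wt (-(1 / 4)) s) := by gcongr
      _ ≤ _ := by nlinarith
  · refine ⟨fun s => ((-(1 + tanh s) / 2 : ℝ) : ℂ) * Rint σ β₁ (kap s),
      fun s => ((-(1 - tanh s ^ 2) / 2 : ℝ) : ℂ) * Rint σ β₁ (kap s) +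
        ((-(1 + tanh s) / 2 : ℝ) : ℂ) * (((-(1 + tanh s) / 2 : ℝ) : ℂ) * Rint σ β₂ (kap s)),
      fun s => ?_, fun s => ?_, fun hσ s => ?_⟩
    · refine HasDerivAt.congr_deriv ((h₁ σ (kap s)).scomp s (hasDerivAt_kap s)) ?_
      rw [Complex.real_smul]
    · have h3 := (h₂ σ (kap s)).scomp s (hasDerivAt_kap s)
      simp only [Complex.real_smul] at h3
      have h4 : HasDerivAt (fun s => -(1 + tanh s) / 2) (-(1 - tanh s ^ 2) / 2) s :=
        (((hasDerivAt_tanh' s).const_add 1).neg).div_const 2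
      exact h4.ofReal_comp.mul h3
    · have ht := abs_le.1 (abs_tanh_le s)
      have e1 : |-(1 + tanh s) / 2| ≤ 1 := by rw [abs_le]; constructor <;> linarith
      have e2 : |-(1 - tanh s ^ 2) / 2| ≤ 1 := by
        rw [abs_le]; constructor <;> nlinarith
      have nm : ∀ (r : ℝ) (c : ℂ), |r| ≤ 1 → ‖(r : ℂ) * c‖ ≤ ‖c‖ := fun r c h => by
        rw [norm_mul, Complex.norm_real, Real.norm_eq_abs]
        exact mul_le_of_le_one_left (norm_nonneg _) h
      have q0 := b0 σ (kap s) hσ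
      have q1 := b1 σ (kap s) hσ
      have q2 := b2 σ (kap s) hσ
      have hr : 0 < √|σ| := sqrt_pos.2 (by linarith)
      have p := div_pos hC hr
      have p0 := div_pos hC0 hr
      have p1 := div_pos hC1 hr
      have p2 := div_pos hC2 hr
      have e : (C * 2 + C0 + C1 + C2) / √|σ| = C / √|σ| * 2 + C0 / √|σ| + C1 / √|σ| + C2 / √|σ| := by
        ring
      rw [e]
      refine ⟨by linarith, (nm _ _ e1).trans (by linarith), ?_⟩
      refine (norm_add_le _ _).trans ?_
      have := nm _ (Rint σ β₁ (kap s)) e2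
      have := (nm _ (((-(1 + tanh s) / 2 : ℝ) : ℂ) * Rint σ β₂ (kap s)) e1).trans (nm _ _ e1)
      linarith

lemma wt_le_arctan (s : ℝ) : wt 1 s / 2 ≤ arctan (exp s) := by
  have h1 : 0 < arctan (exp s) := arctan_pos.2 (exp_pos s)
  have h2 : sin (arctan (exp s)) * cos (arctan (exp s)) = wt 1 s / 2 := by
    have h5 : (√(1 + exp s ^ 2)) ^ 2 = 1 + exp s ^ 2 := sq_sqrt (by positivity)
    have h6 : 0 < √(1 + exp s ^ 2) := sqrt_pos.2 (by positivity)
    rw [sin_arctan, cos_arctan, wt, rpow_neg_one, cosh_eq, exp_neg, div_mul_div_comm, ← sq, h5]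
    have := exp_pos s
    field_simp
    ring
  rw [← h2]
  calc _ ≤ arctan (exp s) * 1 := by
        gcongr
        · exact (sin_le h1.le)
        · exact cos_le_one _
    _ = _ := mul_one _

/-- A twice differentiable real profile `η` with derivatives `η₁` and `η₂`, all three bounded by
`B` and supported in `[-1/4, 1/4]`. -/
structure Profile (η η₁ η₂ : ℝ → ℝ) (B : ℝ) : Prop where
  d1 : ∀ x, HasDerivAt η (η₁ x) x
  d2 : ∀ x, HasDerivAt η₁ (η₂ x) x
  b0 : ∀ x, |η x| ≤ B
  b1 : ∀ x, |η₁ x| ≤ B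
  b2 : ∀ x, |η₂ x| ≤ B
  z0 : ∀ x, 1 / 4 ≤ |x| → η x = 0
  z1 : ∀ x, 1 / 4 ≤ |x| → η₁ x = 0
  z2 : ∀ x, 1 / 4 ≤ |x| → η₂ x = 0

/-- The bounds for the `s`-integral: a trivial one, the stationary phase gain `|M| ^ (-1/2)`, and the
decay `σ ^ (-2)` when `N / (2 T) ≤ |σ|`, in which case the phase has no stationary point on the
support of the profile. In the last two the factor `|σ| ^ (-1/2)` is the size of `Rint`. -/
lemma main_osc (μ : ℝ) {β : ℝ → ℂ} (hβ : Good μ β) {η η₁ η₂ : ℝ → ℝ} {B : ℝ}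
    (hη : Profile η η₁ η₂ B) : ∃ C, 0 < C ∧ ∀ N T M σ ς δ δ' : ℝ, 1 ≤ T → 0 < N → |M| = N →
      |ς| = |σ| → |δ| = 1 → |δ'| = 1 → ∀ I : ℂ,
      I = ∫ s, ePh M ς s * ((wt (1 / 2) s : ℂ) *
        ((η (δ' * (T * arctan (exp s))) : ℂ) * Rint σ β (kap (δ * s)))) →
      ‖I‖ ≤ C ∧ (1 / 2 ≤ |σ| → ‖I‖ ≤ C / (√|σ| * √N)) ∧
      (1 / 2 ≤ |σ| → N / (2 * T) ≤ |σ| → ‖I‖ ≤ C / (√|σ| * σ ^ 2)) := by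
  obtain ⟨C, hC, hQ⟩ := Q_bounds μ hβ
  have hB : 0 ≤ B := (abs_nonneg _).trans (hη.b0 0)
  set J := ∫ s, wt (1 / 2) s
  set J' := ∫ s, wt (1 / 4) s
  have hJ : 0 ≤ J := integral_nonneg fun w => (wt_pos _ _).le
  have hJ' : 0 ≤ J' := integral_nonneg fun w => (wt_pos _ _).le
  refine ⟨12000 * (B * C) + 416 * J * (B * C) + B * C * J' + 1, by positivity, ?_⟩
  intro N T M σ ς δ δ' hT hN hM hς hδ hδ' I hI
  obtain ⟨hQ0, Q₁, Q₂, hQ1, hQ2, hQb⟩ := hQ σ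
  have hBC : 0 ≤ B * C := by positivity
  have hdiv : 0 ≤ J * (B * C) := by positivity
  have hdiv' : 0 ≤ B * C * J' := by positivity
  -- The profile is supported in `s ≤ s₁`.
  have hT0 : 0 < T := by linarith
  have hT4 : 1 / (4 * T) ≤ 1 / 4 := by
    rw [div_le_div_iff₀ (by positivity) (by norm_num)]; linarith
  have hT4' : 0 < 1 / (4 * T) := by positivity
  have hpi := Real.pi_gt_three
  have htan : 0 < tan (1 / (4 * T)) := tan_pos_of_pos_of_lt_pi_div_two hT4' (by linarith)
  set s₁ := log (tan (1 / (4 * T))) with hs₁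
  have hats : arctan (exp s₁) = 1 / (4 * T) := by
    rw [hs₁, exp_log htan, arctan_tan (by linarith) (by linarith)]
  have hs₁2 : s₁ ≤ -log 2 := by
    by_contra! h
    have h1 : arctan (exp (-log 2)) < arctan (exp s₁) := arctan_strictMono (exp_lt_exp.2 h)
    have h2 := wt_le_arctan (-log 2)
    have h3 : wt 1 (-log 2) / 2 = 2 / 5 := by
      rw [wt, rpow_neg_one, cosh_neg, cosh_eq, exp_neg, exp_log two_pos]; norm_num
    rw [hats] at h1
    linarith
  set X : ℝ → ℝ := fun s => δ' * (T * arctan (exp s)) with hX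
  set Y : ℝ → ℝ := fun s => δ' * (T * (wt 1 s / 2)) with hY
  have hXd : ∀ s, HasDerivAt X (Y s) s := fun s =>
    ((hasDerivAt_arctan_exp s).const_mul T).const_mul δ'
  have hYd : ∀ s, HasDerivAt Y (-tanh s * Y s) s := fun s => by
    refine ((((hasDerivAt_wt 1 s).div_const 2).const_mul T).const_mul δ').congr_deriv ?_
    simp only [hY]; ring
  have hXabs : ∀ s, |X s| = T * arctan (exp s) := fun s => by
    simp only [hX]
    rw [abs_mul, hδ', one_mul, abs_of_pos (mul_pos hT0 (arctan_pos.2 (exp_pos s)))]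
  have hYX : ∀ s, |Y s| ≤ |X s| := fun s => by
    rw [hXabs]
    simp only [hY]
    have := wt_pos 1 s
    rw [abs_mul, hδ', one_mul, abs_of_pos (by positivity)]
    gcongr
    exact wt_le_arctan s
  have hXs : ∀ s, s₁ ≤ s → 1 / 4 ≤ |X s| := fun s h => by
    have h1 : arctan (exp s₁) ≤ arctan (exp s) := arctan_strictMono.monotone (exp_le_exp.2 h)
    rw [hats] at h1
    rw [hXabs]
    calc 1 / 4 = T * (1 / (4 * T)) := by field_simp
      _ ≤ _ := by gcongr
  clear_value X Y
  set a : ℝ → ℝ := fun s => η (X s) with ha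
  set a₁ : ℝ → ℝ := fun s => η₁ (X s) * Y s with ha₁
  set a₂ : ℝ → ℝ := fun s => η₂ (X s) * Y s * Y s + η₁ (X s) * (-tanh s * Y s) with ha₂
  have had : ∀ s, HasDerivAt a (a₁ s) s := fun s => (hη.d1 (X s)).comp s (hXd s)
  have had₁ : ∀ s, HasDerivAt a₁ (a₂ s) s := fun s =>
    ((hη.d2 (X s)).comp s (hXd s)).mul (hYd s)
  have hab : ∀ s, |a s| ≤ B := fun s => hη.b0 _
  have hY1 : ∀ s, |X s| ≤ 1 / 4 → |Y s| ≤ 1 := fun s h => (hYX s).trans (by linarith)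
  have hab₁ : ∀ s, |a₁ s| ≤ B := fun s => by
    simp only [ha₁]
    rcases le_total (1 / 4) |X s| with h | h
    · rw [hη.z1 _ h, zero_mul, abs_zero]; exact hB
    · rw [abs_mul]
      calc _ ≤ B * 1 := mul_le_mul (hη.b1 _) (hY1 s h) (abs_nonneg _) hB
        _ = B := mul_one _
  have hab₂ : ∀ s, |a₂ s| ≤ 2 * B := fun s => by
    simp only [ha₂]
    rcases le_total (1 / 4) |X s| with h | h
    · rw [hη.z1 _ h, hη.z2 _ h]; simp [hB]
    · refine (abs_add_le _ _).trans ?_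
      rw [abs_mul, abs_mul, abs_mul, abs_mul, abs_neg]
      have h1 := mul_le_mul (hη.b2 (X s)) (hY1 s h) (abs_nonneg _) hB
      have h2 := mul_le_mul h1 (hY1 s h) (abs_nonneg _) (by linarith)
      have h3 := mul_le_mul (abs_tanh_le s) (hY1 s h) (abs_nonneg _) zero_le_one
      have h4 := mul_le_mul (hη.b1 (X s)) h3 (by positivity) hB
      linarith
  have za : ∀ s, s₁ ≤ s → a s = 0 := fun s h => hη.z0 _ (hXs s h)
  have za₁ : ∀ s, s₁ ≤ s → a₁ s = 0 := fun s h => by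
    simp only [ha₁]; rw [hη.z1 _ (hXs s h), zero_mul]
  have za₂ : ∀ s, s₁ ≤ s → a₂ s = 0 := fun s h => by
    simp only [ha₂]; rw [hη.z1 _ (hXs s h), hη.z2 _ (hXs s h)]; simp
  set q : ℝ → ℂ := fun s => Rint σ β (kap (δ * s)) with hq
  set q₁ : ℝ → ℂ := fun s => (δ : ℂ) * Q₁ (δ * s) with hq₁
  set q₂ : ℝ → ℂ := fun s => (δ : ℂ) * ((δ : ℂ) * Q₂ (δ * s)) with hq₂
  have hδd : ∀ s, HasDerivAt (fun s => δ * s) δ s := fun s => by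
    simpa using (hasDerivAt_id s).const_mul δ
  have hqd : ∀ s, HasDerivAt q (q₁ s) s := fun s => by
    refine HasDerivAt.congr_deriv ((hQ1 (δ * s)).scomp s (hδd s)) ?_
    rw [Complex.real_smul]
  have hqd₁ : ∀ s, HasDerivAt q₁ (q₂ s) s := fun s => by
    refine HasDerivAt.congr_deriv (((hQ2 (δ * s)).scomp s (hδd s)).const_mul (δ : ℂ)) ?_
    rw [Complex.real_smul]
  have nδ : ‖(δ : ℂ)‖ = 1 := by rw [Complex.norm_real, Real.norm_eq_abs, hδ]
  have hq1n : ∀ s, ‖q₁ s‖ = ‖Q₁ (δ * s)‖ := fun s => by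
    simp only [hq₁]; rw [norm_mul, nδ, one_mul]
  have hq2n : ∀ s, ‖q₂ s‖ = ‖Q₂ (δ * s)‖ := fun s => by
    simp only [hq₂]; rw [norm_mul, norm_mul, nδ, one_mul, one_mul]
  have hqw : ∀ s, ‖q s‖ ≤ C * wt (-(1 / 4)) s := fun s => by
    have h1 := hQ0 (δ * s)
    have h2 : wt (-(1 / 4)) (δ * s) = wt (-(1 / 4)) s := by
      rcases eq_or_eq_neg_of_abs_eq hδ with h | h
      · rw [h, one_mul]
      · rw [h, neg_one_mul, wt_neg]
    rwa [h2] at h1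
  have hqb : 1 / 2 ≤ |σ| → ∀ s, ‖q s‖ ≤ C / √|σ| := fun h s => (hQb h _).1
  have hI' : I = ∫ s, ePh M ς s * ((wt (1 / 2) s : ℂ) * ((a s : ℂ) * q s)) := by
    rw [hI]; simp only [ha, hq, hX]
  clear_value a a₁ a₂ q q₁ q₂
  have nm : ∀ (r : ℝ) (c : ℂ), ‖(r : ℂ) * c‖ = |r| * ‖c‖ := fun r c => by
    rw [norm_mul, Complex.norm_real, Real.norm_eq_abs]
  have key : 1 / 2 ≤ |σ| → ‖I‖ ≤ 1500 * (8 * B * (C / √|σ|)) / √|M| ∧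
      (N / (2 * T) ≤ |σ| → ‖I‖ ≤ 52 * J * (8 * B * (C / √|σ|)) / ς ^ 2) := by
    intro hσ
    have hr : 0 < √|σ| := sqrt_pos.2 (by linarith)
    set c := C / √|σ| with hc
    have hc0 : 0 < c := div_pos hC hr
    have n0 : ∀ s, ‖q s‖ ≤ c := hqb hσ
    have n1 : ∀ s, ‖q₁ s‖ ≤ c := fun s => by rw [hq1n]; exact (hQb hσ _).2.1
    have n2 : ∀ s, ‖q₂ s‖ ≤ c := fun s => by rw [hq2n]; exact (hQb hσ _).2.2
    have hBc : 0 ≤ B * c := by positivity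
    have A0 : ∀ s, ‖(a s : ℂ) * q s‖ ≤ 8 * B * c := fun s => by
      rw [nm]
      have := mul_le_mul (hab s) (n0 s) (norm_nonneg _) hB
      linarith
    have A1 : ∀ s, ‖(a₁ s : ℂ) * q s + (a s : ℂ) * q₁ s‖ ≤ 8 * B * c := fun s => by
      refine (norm_add_le _ _).trans ?_
      rw [nm, nm]
      have := mul_le_mul (hab₁ s) (n0 s) (norm_nonneg _) hB
      have := mul_le_mul (hab s) (n1 s) (norm_nonneg _) hB
      linarith
    have A2 : ∀ s, ‖((a₂ s : ℂ) * q s + (a₁ s : ℂ) * q₁ s) +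
        ((a₁ s : ℂ) * q₁ s + (a s : ℂ) * q₂ s)‖ ≤ 8 * B * c := fun s => by
      refine (norm_add_le _ _).trans ((add_le_add (norm_add_le _ _) (norm_add_le _ _)).trans ?_)
      rw [nm, nm, nm]
      have := mul_le_mul (hab₂ s) (n0 s) (norm_nonneg _) (by linarith)
      have := mul_le_mul (hab₁ s) (n1 s) (norm_nonneg _) hB
      have := mul_le_mul (hab s) (n2 s) (norm_nonneg _) hB
      linarith
    have D0 : ∀ s, HasDerivAt (fun s => (a s : ℂ) * q s) ((a₁ s : ℂ) * q s + (a s : ℂ) * q₁ s) s :=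
      fun s => (had s).ofReal_comp.mul (hqd s)
    have D1 : ∀ s, HasDerivAt (fun s => (a₁ s : ℂ) * q s + (a s : ℂ) * q₁ s)
        (((a₂ s : ℂ) * q s + (a₁ s : ℂ) * q₁ s) + ((a₁ s : ℂ) * q₁ s + (a s : ℂ) * q₂ s)) s :=
      fun s => ((had₁ s).ofReal_comp.mul (hqd s)).add ((had s).ofReal_comp.mul (hqd₁ s))
    have Z0 : ∀ s, s₁ ≤ s → (a s : ℂ) * q s = 0 := fun s h => by rw [za s h]; simp
    have Z1 : ∀ s, s₁ ≤ s → (a₁ s : ℂ) * q s + (a s : ℂ) * q₁ s = 0 := fun s h => by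
      rw [za s h, za₁ s h]; simp
    have Z2 : ∀ s, s₁ ≤ s → ((a₂ s : ℂ) * q s + (a₁ s : ℂ) * q₁ s) +
        ((a₁ s : ℂ) * q₁ s + (a s : ℂ) * q₂ s) = 0 := fun s h => by
      rw [za s h, za₁ s h, za₂ s h]; simp
    rw [hI']
    refine ⟨norm_integral_ePh_le (abs_pos.1 (hM ▸ hN)) (hς ▸ hσ) hs₁2 D0 A0 A1 Z0 Z1,
      fun hNT => norm_integral_ePh_le' (hς ▸ hσ) (fun s hs => ?_) D0 D1 A0 A1 A2 Z0 Z1 Z2⟩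
    have h1 := wt_le_arctan s
    have h2 : arctan (exp s) ≤ arctan (exp s₁) := arctan_strictMono.monotone (exp_le_exp.2 hs)
    rw [hats] at h2
    have := wt_pos 1 s
    rw [abs_mul, hM, abs_of_pos (by positivity), hς]
    calc N * (wt 1 s / 2) ≤ N * (1 / (4 * T)) :=
          mul_le_mul_of_nonneg_left (by linarith) hN.le
      _ = N / (2 * T) / 2 := by field_simp; ring
      _ ≤ _ := by gcongr
  refine ⟨?_, fun hσ => ?_, fun hσ hNT => ?_⟩
  · rw [hI']
    refine (norm_integral_le_of_norm_le ((integrable_wt (a := 1 / 4) (by norm_num)).const_mul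
      (B * C)) (Eventually.of_forall fun s => ?_)).trans ?_
    · rw [norm_mul, norm_ePh, one_mul, nm, nm, abs_of_pos (wt_pos _ _)]
      calc wt (1 / 2) s * (|a s| * ‖q s‖) ≤ wt (1 / 2) s * (B * (C * wt (-(1 / 4)) s)) := by
            have := wt_pos (1 / 2) s
            gcongr
            exacts [hab s, hqw s]
        _ = B * C * (wt (1 / 2) s * wt (-(1 / 4)) s) := by ring
        _ = _ := by rw [wt_mul, show (1 / 2 : ℝ) + -(1 / 4) = 1 / 4 by norm_num]
    · rw [integral_const_mul]
      linarith
  · have hr : 0 < √|σ| := sqrt_pos.2 (by linarith)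
    have hn : 0 < √N := sqrt_pos.2 hN
    refine (key hσ).1.trans ?_
    rw [hM]
    have e : 1500 * (8 * B * (C / √|σ|)) / √N = 12000 * (B * C) / (√|σ| * √N) := by
      field_simp; ring
    rw [e]
    gcongr
    linarith
  · have hr : 0 < √|σ| := sqrt_pos.2 (by linarith)
    have hs : σ ^ 2 = ς ^ 2 := by rw [← sq_abs, ← hς, sq_abs]
    have hs0 : 0 < σ ^ 2 := by rw [← sq_abs]; have : 0 < |σ| := by linarith
                               positivity
    refine ((key hσ).2 hNT).trans ?_
    rw [← hs]
    have e : 52 * J * (8 * B * (C / √|σ|)) / σ ^ 2 = 416 * J * (B * C) / (√|σ| * σ ^ 2) := by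
      field_simp; ring
    rw [e]
    gcongr
    linarith

end

/-! ### The kernel on one arc, after the substitution -/

section
open Filter Topology Set

/-- The character `v ↦ e ^ {2 i μ v}`. -/
noncomputable def chr (μ v : ℝ) : ℂ := Complex.exp (((2 * μ * v : ℝ) : ℂ) * Complex.I)

lemma good_chr (μ : ℝ) : Good μ (chr μ) := Good.exp

/-- The two kernel factors that involve the integration variable `t`. -/
noncomputable def Fm (p q : ℂ) (c t : ℝ) : ℂ :=
  ((|sin (c - t)| : ℝ) : ℂ) ^ p * ((|sin (c + t)| : ℝ) : ℂ) ^ q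

/-- The substitution `sin t = sin c tanh w`, which maps `ℝ` onto `(-c, c)` when `0 < c < π / 2`. -/
noncomputable def tt (c w : ℝ) : ℝ := arcsin (sin c * tanh w)

lemma cpow_eq_exp {x : ℝ} (hx : 0 < x) (p : ℂ) : (x : ℂ) ^ p = Complex.exp ((log x : ℂ) * p) := by
  rw [Complex.cpow_def_of_ne_zero (by exact_mod_cast hx.ne'), Complex.ofReal_log hx.le]

lemma ofReal_eq_exp {x : ℝ} (hx : 0 < x) : (x : ℂ) = Complex.exp ((log x : ℂ)) := by
  rw [← Complex.ofReal_exp, exp_log hx]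

lemma abs_tanh_lt (w : ℝ) : |tanh w| < 1 := by
  have h : tanh w ^ 2 < 1 := by
    rw [tanh_eq_sinh_div_cosh, div_pow, div_lt_one (by have := cosh_pos w; positivity), cosh_sq]
    linarith
  exact (sq_lt_one_iff_abs_lt_one _).1 h

lemma tt_facts {c : ℝ} (hc : 0 < c) (hc' : c < π / 2) (w : ℝ) :
    cos (tt c w) = cosh (vv (log (cos c)) w) / cosh w ∧
    sin (c - tt c w) = sin c * exp (-vv (log (cos c)) w) / cosh w ∧
    sin (c + tt c w) = sin c * exp (vv (log (cos c)) w) / cosh w ∧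
    HasDerivAt (tt c) (sin c / (cosh w * cosh (vv (log (cos c)) w))) w := by
  have hs : 0 < sin c := sin_pos_of_pos_of_lt_pi hc (by linarith [Real.pi_pos])
  have hcc : 0 < cos c := cos_pos_of_mem_Ioo ⟨by linarith, hc'⟩
  have hw := cosh_pos w
  have ht := abs_tanh_lt w
  set v := vv (log (cos c)) w with hv
  have hsv : sinh v = cos c * sinh w := by rw [hv, sinh_vv, exp_log hcc]
  have hcv := cosh_pos v
  have hcv2 : cosh v ^ 2 = 1 + cos c ^ 2 * sinh w ^ 2 := by rw [cosh_sq, hsv]; ring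
  have hx : |sin c * tanh w| < 1 := by
    rw [abs_mul, abs_of_pos hs]
    calc _ ≤ 1 * |tanh w| := by gcongr; exact sin_le_one c
      _ < 1 := by rwa [one_mul]
  have hx' := abs_lt.1 hx
  have hsin : sin (tt c w) = sin c * (sinh w / cosh w) := by
    rw [tt, sin_arcsin hx'.1.le hx'.2.le, tanh_eq_sinh_div_cosh]
  have hcos : cos (tt c w) = cosh v / cosh w := by
    rw [tt, cos_arcsin, sqrt_eq_iff_mul_self_eq_of_pos (by positivity), tanh_eq_sinh_div_cosh]
    have h1 : sin c ^ 2 = 1 - cos c ^ 2 := by rw [← sin_sq_add_cos_sq c]; ring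
    have h2 := cosh_sq w
    rw [div_mul_div_comm, ← sq, ← sq, hcv2, mul_pow, h1, div_pow]
    field_simp
    rw [h2]; ring
  refine ⟨hcos, ?_, ?_, ?_⟩
  · rw [sin_sub, hsin, hcos, ← cosh_sub_sinh, hsv]; ring
  · rw [sin_add, hsin, hcos, ← cosh_add_sinh, hsv]; ring
  · have h1 := (hasDerivAt_arcsin (ne_of_gt hx'.1) (ne_of_lt hx'.2)).comp w
      ((hasDerivAt_tanh' w).const_mul (sin c))
    refine h1.congr_deriv ?_
    rw [← cos_arcsin, show arcsin (sin c * tanh w) = tt c w from rfl, hcos, tanh_eq_sinh_div_cosh]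
    have h2 := cosh_sq w
    field_simp
    rw [h2]; ring

lemma tt_image {c : ℝ} (hc : 0 < c) (hc' : c < π / 2) : tt c '' univ = Ioo (-c) c := by
  have hs : 0 < sin c := sin_pos_of_pos_of_lt_pi hc (by linarith [Real.pi_pos])
  ext t
  constructor
  · rintro ⟨w, -, rfl⟩
    have ht := abs_lt.1 (abs_tanh_lt w)
    have e : c = arcsin (sin c) := (arcsin_sin (by linarith) hc'.le).symm
    have h1 : sin c * tanh w < sin c := by nlinarith
    have h2 : -sin c < sin c * tanh w := by nlinarith
    have m := sin_le_one c
    have m' := neg_one_le_sin c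
    constructor
    · rw [e, ← arcsin_neg, ← e]
      exact strictMonoOn_arcsin ⟨by linarith, by linarith⟩ ⟨by linarith, by linarith⟩ h2
    · conv_rhs => rw [e]
      exact strictMonoOn_arcsin ⟨by linarith, by linarith⟩ ⟨by linarith, by linarith⟩ h1
  · rintro ⟨h1, h2⟩
    have l1 : sin t < sin c := sin_lt_sin_of_lt_of_le_pi_div_two (by linarith) hc'.le h2
    have l2 : sin (-c) < sin t := sin_lt_sin_of_lt_of_le_pi_div_two (by linarith) (by linarith) h1
    rw [sin_neg] at l2
    obtain ⟨w, -, hw⟩ := tanh_surjOn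
      (show sin t / sin c ∈ Ioo (-1 : ℝ) 1 from
        ⟨by rw [lt_div_iff₀ hs]; linarith, by rw [div_lt_one hs]; exact l1⟩)
    refine ⟨w, trivial, ?_⟩
    rw [tt, hw, mul_div_cancel₀ _ hs.ne', arcsin_sin (by linarith) (by linarith)]

lemma tt_inj {c : ℝ} (hc : 0 < c) (hc' : c < π / 2) : InjOn (tt c) univ := by
  have hs : 0 < sin c := sin_pos_of_pos_of_lt_pi hc (by linarith [Real.pi_pos])
  intro w _ w' _ h
  have key : ∀ w, sin c * tanh w ∈ Icc (-1 : ℝ) 1 := fun w => by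
    rw [mem_Icc, ← abs_le, abs_mul]
    exact mul_le_one₀ (abs_sin_le_one c) (abs_nonneg _) (abs_tanh_lt w).le
  have := injOn_arcsin (key w) (key w') h
  exact tanh_injective (mul_left_cancel₀ hs.ne' this)

/-- The integrand over the first arc, after the substitution. -/
lemma tt_integrand {c : ℝ} (hc : 0 < c) (hc' : c < π / 2) (σ μ : ℝ) {p q : ℂ}
    (hp : p = -1 / 2 + (σ - μ) * Complex.I) (hq : q = -1 / 2 + (σ + μ) * Complex.I) (w : ℝ) :
    |sin c / (cosh w * cosh (vv (log (cos c)) w))| • Fm p q c (tt c w) =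
      Complex.exp (((2 * σ * log (sin c) : ℝ) : ℂ) * Complex.I) *
        (osc σ w * amp (chr μ) (vv (log (cos c)) w)) := by
  have hs : 0 < sin c := sin_pos_of_pos_of_lt_pi hc (by linarith [Real.pi_pos])
  obtain ⟨-, h1, h2, -⟩ := tt_facts hc hc' w
  rw [Fm, h1, h2]
  set v := vv (log (cos c)) w
  have hw := cosh_pos w
  have hv := cosh_pos v
  have a1 : 0 < sin c * exp (-v) / cosh w := by positivity
  have a2 : 0 < sin c * exp v / cosh w := by positivity
  have a3 : 0 < sin c / (cosh w * cosh v) := by positivity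
  have a4 : 0 < (cosh v)⁻¹ := by positivity
  rw [abs_of_pos a1, abs_of_pos a2, abs_of_pos a3, Complex.real_smul, cpow_eq_exp a1,
    cpow_eq_exp a2, ofReal_eq_exp a3, osc, amp, ofReal_eq_exp a4, chr,
    log_div (by positivity) hw.ne', log_div (by positivity) hw.ne', log_div hs.ne' (by positivity),
    log_mul hs.ne' (exp_pos _).ne', log_mul hs.ne' (exp_pos _).ne', log_mul hw.ne' hv.ne',
    log_exp, log_exp, log_inv, ← Complex.exp_add, ← Complex.exp_add, ← Complex.exp_add,
    ← Complex.exp_add, ← Complex.exp_add, hp, hq]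
  congr 1
  simp only [Complex.ofReal_sub, Complex.ofReal_add, Complex.ofReal_mul, Complex.ofReal_neg,
    Complex.ofReal_ofNat]
  ring

lemma regA {c : ℝ} (hc : 0 < c) (hc' : c < π / 2) (σ μ : ℝ) {p q : ℂ}
    (hp : p = -1 / 2 + (σ - μ) * Complex.I) (hq : q = -1 / 2 + (σ + μ) * Complex.I) :
    IntervalIntegrable (Fm p q c) volume (-c) c ∧ ∫ t in (-c)..c, Fm p q c t =
      Complex.exp (((2 * σ * log (sin c) : ℝ) : ℂ) * Complex.I) *
        Rint σ (chr μ) (log (cos c)) := by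
  have hd : ∀ w ∈ (univ : Set ℝ), HasDerivWithinAt (tt c)
      (sin c / (cosh w * cosh (vv (log (cos c)) w))) univ w := fun w _ =>
    (tt_facts hc hc' w).2.2.2.hasDerivWithinAt
  have hle : -c ≤ c := by linarith
  constructor
  · rw [intervalIntegrable_iff_integrableOn_Ioo_of_le hle, ← tt_image hc hc',
      integrableOn_image_iff_integrableOn_abs_deriv_smul MeasurableSet.univ hd (tt_inj hc hc'),
      integrableOn_univ]
    simp only [tt_integrand hc hc' σ μ hp hq]
    refine Integrable.const_mul ?_ _
    obtain ⟨C, hC⟩ := (good_chr μ).bdd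
    refine (integrable_osc_amp (good_chr μ).continuous hC (log (cos c))).bdd_mul (c := 1)
      (continuous_osc σ).aestronglyMeasurable (Eventually.of_forall fun w => (norm_osc σ w).le)
  · rw [intervalIntegral.integral_of_le hle, integral_Ioc_eq_integral_Ioo, ← tt_image hc hc',
      integral_image_eq_integral_abs_deriv_smul MeasurableSet.univ hd (tt_inj hc hc'),
      Measure.restrict_univ]
    simp only [tt_integrand hc hc' σ μ hp hq]
    rw [integral_const_mul, Rint]

end

/-! ### The inner integral -/

section
open Filter Topology Set

lemma abs_sin_neg_sub (c t : ℝ) : |sin (-c - t)| = |sin (c + t)| := by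
  rw [show -c - t = -(c + t) by ring, sin_neg, abs_neg]

lemma sin_mul_self_add_pi (c t : ℝ) : sin (c - (t + π)) = -sin (c - t) := by
  rw [show c - (t + π) = c - t - π by ring, sin_sub_pi]

/-- The kernel is `π`-periodic in its last variable. -/
lemma Kker_periodic (lam tau : ℂ) (eps : ℕ) (a b : ℝ) :
    Function.Periodic (Kker lam tau eps a b) π := fun t => by
  simp only [Kker, sin_mul_self_add_pi, abs_neg, mul_neg, neg_mul, neg_neg]

/-- Exchanging the first two arguments amounts to changing the sign of `λ`. -/
lemma Kker_swap (lam tau : ℂ) (eps : ℕ) (a b t : ℝ) :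
    Kker lam tau eps b a t = ((-1 : ℝ) ^ eps : ℝ) * Kker (-lam) tau eps a b t := by
  have e : sin (b - a) * sin (b - t) * sin (a - t) = -(sin (a - b) * sin (a - t) * sin (b - t)) := by
    rw [show b - a = -(a - b) by ring, sin_neg]; ring
  rw [Kker, Kker, e, Real.sign_neg, neg_pow, show b - a = -(a - b) by ring, sin_neg, abs_neg,
    mul_neg, sub_neg_eq_add, ← sub_eq_add_neg, Complex.ofReal_mul]
  ring

/-- The kernel on the arc `(-c, c)`. -/
lemma Kker_regA {c : ℝ} (hc : 0 < c) (hc' : c < π / 2) (lam tau : ℂ) (eps : ℕ) {t : ℝ}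
    (ht : t ∈ Ioo (-c) c) : Kker lam tau eps c (-c) t =
      ((-1 : ℝ) ^ eps : ℝ) * ((sin (2 * c) : ℝ) : ℂ) ^ ((-1 - tau) / 2) *
        Fm ((-1 - 2 * lam + tau) / 2) ((-1 + 2 * lam + tau) / 2) c t := by
  have h0 : 0 < sin (2 * c) := sin_pos_of_pos_of_lt_pi (by linarith) (by linarith)
  have h1 : 0 < sin (c - t) := sin_pos_of_pos_of_lt_pi (by linarith [ht.2]) (by linarith [ht.1])
  have h2 : 0 < sin (c + t) := sin_pos_of_pos_of_lt_pi (by linarith [ht.1]) (by linarith [ht.2])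
  have hs : Real.sign (sin (c - -c) * sin (c - t) * sin (-c - t)) = -1 := by
    refine Real.sign_of_neg ?_
    rw [show c - -c = 2 * c by ring, show -c - t = -(c + t) by ring, sin_neg, mul_neg]
    have := mul_pos (mul_pos h0 h1) h2
    linarith
  rw [Kker, hs, abs_sin_neg_sub, show c - -c = 2 * c by ring, abs_of_pos h0, Fm]
  ring

/-- The kernel on the arc `(c, π - c)`. -/
lemma Kker_regB {c : ℝ} (hc : 0 < c) (hc' : c < π / 2) (lam tau : ℂ) (eps : ℕ) {t : ℝ}
    (ht : t ∈ Ioo c (π - c)) : Kker lam tau eps c (-c) t =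
      ((sin (2 * c) : ℝ) : ℂ) ^ ((-1 - tau) / 2) *
        Fm ((-1 - 2 * lam + tau) / 2) ((-1 + 2 * lam + tau) / 2) (π / 2 - c) (π / 2 - t) := by
  have h0 : 0 < sin (2 * c) := sin_pos_of_pos_of_lt_pi (by linarith) (by linarith)
  have h1 : 0 < sin (t - c) := sin_pos_of_pos_of_lt_pi (by linarith [ht.1]) (by linarith [ht.2])
  have h2 : 0 < sin (c + t) := sin_pos_of_pos_of_lt_pi (by linarith [ht.1]) (by linarith [ht.2])
  have hs : Real.sign (sin (c - -c) * sin (c - t) * sin (-c - t)) = 1 := by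
    refine Real.sign_of_pos ?_
    rw [show c - -c = 2 * c by ring, show -c - t = -(c + t) by ring, sin_neg,
      show c - t = -(t - c) by ring, sin_neg]
    have := mul_pos (mul_pos h0 h1) h2
    linarith
  rw [Kker, hs, abs_sin_neg_sub, show c - -c = 2 * c by ring, abs_of_pos h0, Fm,
    show π / 2 - c - (π / 2 - t) = -(c - t) by ring, sin_neg, abs_neg,
    show π / 2 - c + (π / 2 - t) = π - (c + t) by ring, sin_pi_sub]
  simp only [one_pow, Complex.ofReal_one]
  ring

/-- The inner integral, as a combination of two oscillatory integrals `Rint`. -/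
lemma inner_formula {c : ℝ} (hc : 0 < c) (hc' : c < π / 2) (σ μ : ℝ) (eps : ℕ) :
    ∫ t in (0 : ℝ)..(2 * π), Kker (μ * Complex.I) (2 * σ * Complex.I) eps c (-c) t =
      2 * ((sin (2 * c) : ℝ) : ℂ) ^ (-1 / 2 - σ * Complex.I) *
        (((-1 : ℝ) ^ eps : ℝ) * (Complex.exp (((2 * σ * log (sin c) : ℝ) : ℂ) * Complex.I) *
          Rint σ (chr μ) (log (cos c))) +
        Complex.exp (((2 * σ * log (cos c) : ℝ) : ℂ) * Complex.I) *
          Rint σ (chr μ) (log (sin c))) := by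
  set K := Kker (μ * Complex.I) (2 * σ * Complex.I) eps c (-c) with hK
  have hper : Function.Periodic K π := Kker_periodic _ _ _ _ _
  set p : ℂ := (-1 - 2 * (μ * Complex.I) + 2 * σ * Complex.I) / 2 with hp
  set q : ℂ := (-1 + 2 * (μ * Complex.I) + 2 * σ * Complex.I) / 2 with hq
  have hp' : p = -1 / 2 + (σ - μ) * Complex.I := by rw [hp]; ring
  have hq' : q = -1 / 2 + (σ + μ) * Complex.I := by rw [hq]; ring
  have he : (-1 - 2 * σ * Complex.I) / 2 = -1 / 2 - σ * Complex.I := by ring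
  have hd : 0 < π / 2 - c := by linarith
  have hd' : π / 2 - c < π / 2 := by linarith
  obtain ⟨iA, vA⟩ := regA hc hc' σ μ hp' hq'
  obtain ⟨iB, vB⟩ := regA hd hd' σ μ hp' hq'
  rw [sin_pi_div_two_sub, cos_pi_div_two_sub] at vB
  have KA : ∀ t ∈ Ioo (-c) c, ((-1 : ℝ) ^ eps : ℝ) *
      ((sin (2 * c) : ℝ) : ℂ) ^ (-1 / 2 - σ * Complex.I) * Fm p q c t = K t := fun t ht => by
    rw [hK, Kker_regA hc hc' _ _ _ ht, he]
  have KB : ∀ t ∈ Ioo c (π - c), ((sin (2 * c) : ℝ) : ℂ) ^ (-1 / 2 - σ * Complex.I) *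
      Fm p q (π / 2 - c) (π / 2 - t) = K t := fun t ht => by
    rw [hK, Kker_regB hc hc' _ _ _ ht, he]
  have iB' : IntervalIntegrable (fun t => Fm p q (π / 2 - c) (π / 2 - t)) volume c (π - c) := by
    have := iB.comp_sub_left (π / 2)
    convert this.symm using 1 <;> ring
  have vB' : ∫ t in c..(π - c), Fm p q (π / 2 - c) (π / 2 - t) =
      ∫ t in (-(π / 2 - c))..(π / 2 - c), Fm p q (π / 2 - c) t := by
    rw [intervalIntegral.integral_comp_sub_left]
    congr 1; ring
  have hle1 : -c ≤ c := by linarith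
  have hle2 : c ≤ π - c := by linarith
  have jA : IntervalIntegrable K volume (-c) c :=
    (iA.const_mul _).congr_uIoo fun t ht => KA t (by rwa [uIoo_of_le hle1] at ht)
  have jB : IntervalIntegrable K volume c (π - c) :=
    (iB'.const_mul _).congr_uIoo fun t ht => KB t (by rwa [uIoo_of_le hle2] at ht)
  have j : IntervalIntegrable K volume (-c) (-c + π) := by
    have := jA.trans jB
    rwa [show π - c = -c + π by ring] at this
  have h1 : ∫ t in (-c)..c, K t = ∫ t in (-c)..c, ((-1 : ℝ) ^ eps : ℝ) *
      ((sin (2 * c) : ℝ) : ℂ) ^ (-1 / 2 - σ * Complex.I) * Fm p q c t := by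
    rw [intervalIntegral.integral_of_le hle1, intervalIntegral.integral_of_le hle1,
      integral_Ioc_eq_integral_Ioo, integral_Ioc_eq_integral_Ioo]
    exact setIntegral_congr_fun measurableSet_Ioo fun t ht => (KA t ht).symm
  have h2 : ∫ t in c..(π - c), K t = ∫ t in c..(π - c),
      ((sin (2 * c) : ℝ) : ℂ) ^ (-1 / 2 - σ * Complex.I) *
        Fm p q (π / 2 - c) (π / 2 - t) := by
    rw [intervalIntegral.integral_of_le hle2, intervalIntegral.integral_of_le hle2,
      integral_Ioc_eq_integral_Ioo, integral_Ioc_eq_integral_Ioo]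
    exact setIntegral_congr_fun measurableSet_Ioo fun t ht => (KB t ht).symm
  have h3 : ∫ t in (0 : ℝ)..(2 * π), K t = 2 * ∫ t in (-c)..(-c + π), K t := by
    have hall : ∀ a b, IntervalIntegrable K volume a b := fun a b =>
      hper.intervalIntegrable Real.pi_pos.ne' j a b
    have e0 := hper.intervalIntegral_add_eq 0 (-c)
    have e1 := hper.intervalIntegral_add_eq π (-c)
    rw [zero_add] at e0
    rw [← intervalIntegral.integral_add_adjacent_intervals (hall 0 π) (hall π (2 * π)), two_mul π,
      e0, e1, two_mul]
  rw [h3, show -c + π = π - c by ring, ← intervalIntegral.integral_add_adjacent_intervals jA jB,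
    h1, h2, intervalIntegral.integral_const_mul, intervalIntegral.integral_const_mul, vB', vA, vB]
  ring

end

/-! ### The two halves of the outer integral -/

section
open Filter Topology Set

lemma log_trig (s : ℝ) : log (cos (arctan (exp s))) = kap s ∧
    log (sin (arctan (exp s))) = kap (-s) ∧ sin (2 * arctan (exp s)) = wt 1 s := by
  have h5 : 0 < 1 + exp s ^ 2 := by positivity
  have hs := exp_pos s
  have e : 2 * cosh s = (1 + exp s ^ 2) / exp s := by
    rw [cosh_eq, exp_neg]; field_simp; ring
  have el : log (2 * cosh s) = log (1 + exp s ^ 2) - s := by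
    rw [e, log_div h5.ne' hs.ne', log_exp]
  have h1 : cos (arctan (exp s)) = 1 / √(1 + exp s ^ 2) := cos_arctan _
  have h2 : sin (arctan (exp s)) = exp s / √(1 + exp s ^ 2) := sin_arctan _
  have hq : 0 < √(1 + exp s ^ 2) := sqrt_pos.2 h5
  refine ⟨?_, ?_, ?_⟩
  · rw [h1, log_div one_ne_zero hq.ne', log_one, log_sqrt h5.le, kap, el]; ring
  · rw [h2, log_div hs.ne' hq.ne', log_exp, log_sqrt h5.le, kap, cosh_neg, el]; ring
  · rw [sin_two_mul, h1, h2, wt, rpow_neg_one, cosh_eq, exp_neg]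
    have h6 := sq_sqrt h5.le
    field_simp
    rw [h6]; ring

/-- The integral of the kernel over its last variable. -/
noncomputable def inn (μ σ : ℝ) (eps : ℕ) (c : ℝ) : ℂ :=
  ∫ t in (0 : ℝ)..(2 * π), Kker (μ * Complex.I) (2 * σ * Complex.I) eps c (-c) t

lemma inn_neg (μ σ : ℝ) (eps : ℕ) (c : ℝ) :
    inn μ σ eps (-c) = ((-1 : ℝ) ^ eps : ℝ) * inn (-μ) σ eps c := by
  rw [inn, inn, ← intervalIntegral.integral_const_mul]
  congr 1
  ext t
  rw [neg_neg, Kker_swap, Complex.ofReal_neg, neg_mul]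

lemma inn_zero (μ σ : ℝ) (eps : ℕ) : inn μ σ eps 0 = 0 := by
  have h : ((-1 : ℂ) - 2 * σ * Complex.I) / 2 ≠ 0 := fun h => by
    have := congrArg Complex.re h
    norm_num at this
  simp [inn, Kker, Complex.zero_cpow h]

lemma inn_periodic (μ σ : ℝ) (eps : ℕ) : Function.Periodic (inn μ σ eps) (2 * π) := fun c => by
  rw [inn, inn]
  congr 1
  ext t
  have e1 : sin (c + 2 * π - -(c + 2 * π)) = sin (c - -c) := by
    rw [show c + 2 * π - -(c + 2 * π) = c - -c + (2 : ℕ) * (2 * π) by push_cast; ring,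
      sin_add_nat_mul_two_pi]
  have e2 : sin (c + 2 * π - t) = sin (c - t) := by
    rw [show c + 2 * π - t = c - t + 2 * π by ring, sin_add_two_pi]
  have e3 : sin (-(c + 2 * π) - t) = sin (-c - t) := by
    rw [show -(c + 2 * π) - t = -c - t - 2 * π by ring, sin_sub_two_pi]
  rw [Kker, Kker, e1, e2, e3]

/-- The inner integral in the variable `s = log (tan c)`, multiplied by `dc / ds`. -/
lemma inn_arctan (μ σ : ℝ) (eps : ℕ) (s : ℝ) :
    ((wt 1 s / 2 : ℝ) : ℂ) * inn μ σ eps (arctan (exp s)) =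
      Complex.exp (((-σ * log 2 : ℝ) : ℂ) * Complex.I) * ((wt (1 / 2) s : ℂ) *
        (((-1 : ℝ) ^ eps : ℝ) * (Complex.exp (((σ * s : ℝ) : ℂ) * Complex.I) *
          Rint σ (chr μ) (kap (1 * s))) +
        Complex.exp (((-σ * s : ℝ) : ℂ) * Complex.I) * Rint σ (chr μ) (kap (-1 * s)))) := by
  have h0 : 0 < arctan (exp s) := arctan_pos.2 (exp_pos s)
  obtain ⟨h1, h2, h3⟩ := log_trig s
  rw [inn, inner_formula h0 (arctan_lt_pi_div_two _), h1, h2, h3, cpow_eq_exp (wt_pos 1 s),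
    one_mul, neg_one_mul]
  have hw : log (wt 1 s) = -log (cosh s) := by rw [wt, log_rpow (cosh_pos s)]; ring
  have e1 : ((wt 1 s / 2 : ℝ) : ℂ) = Complex.exp (-log (cosh s) : ℝ) / 2 := by
    rw [← hw, ← ofReal_eq_exp (wt_pos 1 s)]; push_cast; ring
  have e2 : (wt (1 / 2) s : ℂ) = Complex.exp (-(1 / 2) * log (cosh s) : ℝ) := by
    rw [ofReal_eq_exp (wt_pos (1 / 2) s), wt, log_rpow (cosh_pos s)]
  have hk : ∀ x : ℝ, kap x = -(x + (log 2 + log (cosh x))) / 2 := fun x => by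
    rw [kap, log_mul two_ne_zero (cosh_pos x).ne']
  have f1 : Complex.exp (-log (cosh s) : ℝ) *
      Complex.exp ((-log (cosh s) : ℝ) * (-1 / 2 - σ * Complex.I)) *
      Complex.exp (((2 * σ * kap (-s) : ℝ) : ℂ) * Complex.I) =
      Complex.exp (((-σ * log 2 : ℝ) : ℂ) * Complex.I) *
      Complex.exp (-(1 / 2) * log (cosh s) : ℝ) *
      Complex.exp (((σ * s : ℝ) : ℂ) * Complex.I) := by
    simp only [← Complex.exp_add]
    rw [hk, cosh_neg]
    congr 1
    simp only [Complex.ofReal_add, Complex.ofReal_mul, Complex.ofReal_neg, Complex.ofReal_div,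
      Complex.ofReal_ofNat, Complex.ofReal_one]
    ring
  have f2 : Complex.exp (-log (cosh s) : ℝ) *
      Complex.exp ((-log (cosh s) : ℝ) * (-1 / 2 - σ * Complex.I)) *
      Complex.exp (((2 * σ * kap s : ℝ) : ℂ) * Complex.I) =
      Complex.exp (((-σ * log 2 : ℝ) : ℂ) * Complex.I) *
      Complex.exp (-(1 / 2) * log (cosh s) : ℝ) *
      Complex.exp (((-σ * s : ℝ) : ℂ) * Complex.I) := by
    simp only [← Complex.exp_add]
    rw [hk]
    congr 1
    simp only [Complex.ofReal_add, Complex.ofReal_mul, Complex.ofReal_neg, Complex.ofReal_div,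
      Complex.ofReal_ofNat, Complex.ofReal_one]
    ring
  rw [e1, e2, hw]
  linear_combination (((-1 : ℝ) ^ eps : ℝ) : ℂ) * Rint σ (chr μ) (kap s) * f1 +
    Rint σ (chr μ) (kap (-s)) * f2

/-- The integrand of `main_osc`. -/
noncomputable def osI (η : ℝ → ℝ) (μ M ς σ δ δ' T s : ℝ) : ℂ :=
  ePh M ς s * ((wt (1 / 2) s : ℂ) *
    ((η (δ' * (T * arctan (exp s))) : ℂ) * Rint σ (chr μ) (kap (δ * s))))

lemma integrable_osI {η : ℝ → ℝ} {B : ℝ} (hη : Continuous η) (hB : ∀ x, |η x| ≤ B)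
    (μ M ς σ : ℝ) {δ : ℝ} (hδ : |δ| = 1) (δ' T : ℝ) :
    Integrable (osI η μ M ς σ δ δ' T) := by
  obtain ⟨C, hC, hQ⟩ := Q_bounds μ (good_chr μ)
  obtain ⟨hQ0, Q₁, -, hQ1, -, -⟩ := hQ σ
  have hcR : Continuous fun s => Rint σ (chr μ) (kap s) :=
    continuous_iff_continuousAt.2 fun s => (hQ1 s).continuousAt
  have hB0 : 0 ≤ B := (abs_nonneg _).trans (hB 0)
  have hcont : Continuous (osI η μ M ς σ δ δ' T) := by
    refine (continuous_ePh M ς).mul ((Complex.continuous_ofReal.comp (continuous_wt _)).mul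
      ((Complex.continuous_ofReal.comp (hη.comp ?_)).mul (hcR.comp (continuous_const_mul δ))))
    exact continuous_const.mul (continuous_const.mul (continuous_arctan.comp continuous_exp))
  refine ((integrable_wt (a := 1 / 4) (by norm_num)).const_mul (B * C)).mono'
    hcont.aestronglyMeasurable (Eventually.of_forall fun s => ?_)
  have h2 : wt (-(1 / 4)) (δ * s) = wt (-(1 / 4)) s := by
    rcases eq_or_eq_neg_of_abs_eq hδ with h | h
    · rw [h, one_mul]
    · rw [h, neg_one_mul, wt_neg]
  have h1 := hQ0 (δ * s)
  rw [h2] at h1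
  rw [osI, norm_mul, norm_ePh, one_mul, norm_mul, norm_mul, Complex.norm_real, Complex.norm_real,
    Real.norm_eq_abs, Real.norm_eq_abs, abs_of_pos (wt_pos _ _)]
  calc wt (1 / 2) s * (|η (δ' * (T * arctan (exp s)))| * ‖Rint σ (chr μ) (kap (δ * s))‖)
      ≤ wt (1 / 2) s * (B * (C * wt (-(1 / 4)) s)) := by
        have := wt_pos (1 / 2) s
        gcongr
        exact hB _
    _ = B * C * (wt (1 / 2) s * wt (-(1 / 4)) s) := by ring
    _ = _ := by rw [wt_mul, show (1 / 2 : ℝ) + -(1 / 4) = 1 / 4 by norm_num]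

/-- One half of the outer integral, in the variable `s`; the half is determined by `δ' = ±1`. -/
lemma half_formula {η : ℝ → ℝ} {B : ℝ} (hη : Continuous η) (hB : ∀ x, |η x| ≤ B)
    (μ σ N T : ℝ) (eps : ℕ) {δ' : ℝ} (hδ' : |δ'| = 1) (z : ℂ) {G : ℝ → ℂ}
    (hG : ∀ s, G (δ' * arctan (exp s)) = Complex.exp (((N * (δ' * arctan (exp s)) : ℝ) : ℂ) *
      Complex.I) * (η (T * (δ' * arctan (exp s))) : ℂ) * (z * inn μ σ eps (arctan (exp s)))) :
    IntegrableOn G ((fun s => δ' * arctan (exp s)) '' univ) ∧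
    ∫ c in (fun s => δ' * arctan (exp s)) '' univ, G c =
      z * Complex.exp (((-σ * log 2 : ℝ) : ℂ) * Complex.I) *
        (((-1 : ℝ) ^ eps : ℝ) * (∫ s, osI η μ (N * δ') σ σ 1 δ' T s) +
          ∫ s, osI η μ (N * δ') (-σ) σ (-1) δ' T s) := by
  have hd : ∀ s ∈ (univ : Set ℝ), HasDerivWithinAt (fun s => δ' * arctan (exp s))
      (δ' * (wt 1 s / 2)) univ s := fun s _ =>
    ((hasDerivAt_arctan_exp s).const_mul δ').hasDerivWithinAt
  have hne : δ' ≠ 0 := fun h => by rw [h, abs_zero] at hδ'; exact zero_ne_one hδ'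
  have hinj : InjOn (fun s => δ' * arctan (exp s)) univ := fun a _ b _ h =>
    exp_injective (arctan_injective (mul_left_cancel₀ hne h))
  have habs : ∀ s, |δ' * (wt 1 s / 2)| = wt 1 s / 2 := fun s => by
    rw [abs_mul, hδ', one_mul, abs_of_pos (by have := wt_pos 1 s; positivity)]
  have hpt : ∀ s, |δ' * (wt 1 s / 2)| • G (δ' * arctan (exp s)) =
      z * Complex.exp (((-σ * log 2 : ℝ) : ℂ) * Complex.I) *
        (((-1 : ℝ) ^ eps : ℝ) * osI η μ (N * δ') σ σ 1 δ' T s +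
          osI η μ (N * δ') (-σ) σ (-1) δ' T s) := fun s => by
    have e1 : ∀ ς : ℝ, ePh (N * δ') ς s =
        Complex.exp (((N * (δ' * arctan (exp s)) : ℝ) : ℂ) * Complex.I) *
          Complex.exp (((ς * s : ℝ) : ℂ) * Complex.I) := fun ς => by
      rw [ePh, Ph, ← Complex.exp_add, ← add_mul, ← Complex.ofReal_add, mul_assoc]
    rw [habs, Complex.real_smul, hG, osI, osI, e1, e1,
      show T * (δ' * arctan (exp s)) = δ' * (T * arctan (exp s)) by ring]
    linear_combination z * Complex.exp (((N * (δ' * arctan (exp s)) : ℝ) : ℂ) *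
      Complex.I) * (η (δ' * (T * arctan (exp s))) : ℂ) * inn_arctan μ σ eps s
  have i1 := integrable_osI hη hB μ (N * δ') σ σ (δ := 1) (by norm_num) δ' T
  have i2 := integrable_osI hη hB μ (N * δ') (-σ) σ (δ := -1) (by norm_num) δ' T
  constructor
  · rw [integrableOn_image_iff_integrableOn_abs_deriv_smul MeasurableSet.univ hd hinj,
      integrableOn_univ]
    simp only [hpt]
    exact ((i1.const_mul _).add i2).const_mul _
  · rw [integral_image_eq_integral_abs_deriv_smul MeasurableSet.univ hd hinj,
      Measure.restrict_univ]
    simp only [hpt]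
    rw [integral_const_mul, integral_add (i1.const_mul _) i2, integral_const_mul]

lemma image_pos : (fun s => (1 : ℝ) * arctan (exp s)) '' univ = Ioo 0 (π / 2) := by
  ext c
  constructor
  · rintro ⟨s, -, rfl⟩
    simp only [one_mul]
    exact ⟨arctan_pos.2 (exp_pos s), arctan_lt_pi_div_two _⟩
  · rintro ⟨h1, h2⟩
    refine ⟨log (tan c), trivial, ?_⟩
    simp only [one_mul]
    rw [exp_log (tan_pos_of_pos_of_lt_pi_div_two h1 h2), arctan_tan (by linarith) h2]

lemma image_neg' : (fun s => (-1 : ℝ) * arctan (exp s)) '' univ = Ioo (-(π / 2)) 0 := by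
  ext c
  constructor
  · rintro ⟨s, -, rfl⟩
    have h1 := arctan_pos.2 (exp_pos s)
    have h2 := arctan_lt_pi_div_two (exp s)
    constructor <;> simp only <;> linarith
  · rintro ⟨h1, h2⟩
    refine ⟨log (tan (-c)), trivial, ?_⟩
    simp only
    rw [exp_log (tan_pos_of_pos_of_lt_pi_div_two (by linarith) (by linarith)),
      arctan_tan (by linarith) (by linarith)]
    ring

end

/-! ### Bounds for `usharp` -/

section
open Filter Topology Set

/-- The bounds for `usharp` at `λ = i μ`, `τ = 2 i σ` when `u` is a periodized wave packet: the outer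
integral splits at `0` into two halves, each of which is a sum of two integrals covered by
`main_osc`. -/
lemma usharp_bound (μ : ℝ) (eps : ℕ) {η η₁ η₂ : ℝ → ℝ} {B : ℝ}
    (hη : Profile η η₁ η₂ B) : ∃ C, 0 < C ∧ ∀ N T A σ : ℝ, ∀ u : ℝ → ℂ, 1 ≤ T → 0 < N → 0 ≤ A →
      Function.Periodic u (2 * π) →
      (∀ c ∈ Ioc (-π) π, u c = A * (Complex.exp (((N * c : ℝ) : ℂ) * Complex.I) *
        (η (T * c) : ℂ))) → ∀ I, I = usharp (μ * Complex.I) (2 * σ * Complex.I) eps u →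
      ‖I‖ ≤ A * C ∧ (1 / 2 ≤ |σ| → ‖I‖ ≤ A * (C / (√|σ| * √N))) ∧
      (1 / 2 ≤ |σ| → N / (2 * T) ≤ |σ| → ‖I‖ ≤ A * (C / (√|σ| * σ ^ 2))) := by
  obtain ⟨C₁, hC₁, H₁⟩ := main_osc μ (good_chr μ) hη
  obtain ⟨C₂, hC₂, H₂⟩ := main_osc (-μ) (good_chr (-μ)) hη
  refine ⟨2 * C₁ + 2 * C₂, by positivity, ?_⟩
  intro N T A σ u hT hN hA hu hval I hI
  have hηc : Continuous η := continuous_iff_continuousAt.2 fun x => (hη.d1 x).continuousAt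
  have hpi := Real.pi_gt_three
  set G : ℝ → ℂ := fun c => Complex.exp (((N * c : ℝ) : ℂ) * Complex.I) * (η (T * c) : ℂ) *
    inn μ σ eps c with hG
  have hm1 : ‖(((-1 : ℝ) ^ eps : ℝ) : ℂ)‖ = 1 := by simp
  have hp := half_formula hηc hη.b0 μ σ N T eps (δ' := 1) (by norm_num) 1 (G := G)
    (fun s => by simp only [hG, one_mul])
  have hn := half_formula hηc hη.b0 (-μ) σ N T eps (δ' := -1) (by norm_num)
    (((-1 : ℝ) ^ eps : ℝ) : ℂ) (G := G)
    (fun s => by simp only [hG]; rw [neg_one_mul (arctan _), inn_neg])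
  rw [image_pos] at hp
  rw [image_neg'] at hn
  set P1 := ∫ s, osI η μ (N * 1) σ σ 1 1 T s with hP1
  set P2 := ∫ s, osI η μ (N * 1) (-σ) σ (-1) 1 T s with hP2
  set P3 := ∫ s, osI η (-μ) (N * -1) σ σ 1 (-1) T s with hP3
  set P4 := ∫ s, osI η (-μ) (N * -1) (-σ) σ (-1) (-1) T s with hP4
  have hinner : ∀ c, ∫ t in (0 : ℝ)..(2 * π), u c * Kker (μ * Complex.I) (2 * σ * Complex.I) eps
      c (-c) t = u c * inn μ σ eps c := fun c => by
    rw [inn, intervalIntegral.integral_const_mul]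
  have hper : Function.Periodic (fun c => u c * inn μ σ eps c) (2 * π) := fun c => by
    simp only [hu c, inn_periodic μ σ eps c]
  have hsplit : ∫ c in (0 : ℝ)..(2 * π), u c * inn μ σ eps c =
      A * ((∫ c in Ioo (-(π / 2)) 0, G c) + ∫ c in Ioo 0 (π / 2), G c) := by
    have e0 := hper.intervalIntegral_add_eq 0 (-π)
    rw [zero_add, show -π + 2 * π = π by ring] at e0
    rw [e0, intervalIntegral.integral_of_le (by linarith)]
    have e1 : ∫ c in Ioc (-π) π, u c * inn μ σ eps c = ∫ c in Ioc (-π) π, A * G c :=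
      setIntegral_congr_fun measurableSet_Ioc fun c hc => by
        simp only [hG]; rw [hval c hc]; ring
    have hdis : Disjoint (Ioo (-(π / 2)) 0) (Ioo 0 (π / 2)) :=
      Set.disjoint_left.2 fun x h1 h2 => by linarith [h1.2, h2.1]
    rw [e1, integral_const_mul, ← setIntegral_union hdis measurableSet_Ioo hn.1 hp.1]
    congr 1
    refine setIntegral_eq_of_subset_of_forall_sdiff_eq_zero measurableSet_Ioc ?_ ?_
    · rintro x (⟨h1, h2⟩ | ⟨h1, h2⟩) <;> constructor <;> linarith
    · rintro x ⟨-, hx⟩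
      simp only [hG]
      by_cases h0 : x = 0
      · rw [h0, inn_zero, mul_zero]
      · have : 1 / 4 ≤ |T * x| := by
          rw [abs_mul, abs_of_pos (by linarith)]
          have : π / 2 ≤ |x| := by
            by_contra! h
            have := abs_lt.1 h
            rcases lt_or_gt_of_ne h0 with h' | h'
            · exact hx (Or.inl ⟨by linarith, h'⟩)
            · exact hx (Or.inr ⟨h', by linarith⟩)
          nlinarith
        rw [hη.z0 _ this]; simp
  have hIn : ‖I‖ ≤ A * (‖P1‖ + ‖P2‖ + ‖P3‖ + ‖P4‖) := by
    rw [hI, usharp]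
    simp only [hinner]
    have h8 : (1 : ℝ) / (2 * π) ^ 3 ≤ 1 := by
      rw [div_le_one (by positivity)]
      exact one_le_pow₀ (by linarith)
    rw [hsplit, hp.2, hn.2, norm_mul, norm_mul, Complex.norm_real, Complex.norm_real,
      Real.norm_eq_abs, Real.norm_eq_abs, abs_of_nonneg hA, abs_of_pos (by positivity)]
    refine (mul_le_of_le_one_left (by positivity) h8).trans ?_
    gcongr
    refine (norm_add_le _ _).trans ?_
    rw [norm_mul, norm_mul, norm_mul, norm_mul, hm1, Complex.norm_exp_ofReal_mul_I, norm_one]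
    have a1 := norm_add_le ((((-1 : ℝ) ^ eps : ℝ) : ℂ) * P1) P2
    have a2 := norm_add_le ((((-1 : ℝ) ^ eps : ℝ) : ℂ) * P3) P4
    rw [norm_mul, hm1] at a1 a2
    linarith
  have aN : |N * 1| = N := by rw [mul_one, abs_of_pos hN]
  have aN' : |N * -1| = N := by rw [mul_neg_one, abs_neg, abs_of_pos hN]
  obtain ⟨x1, y1, z1⟩ := H₁ N T (N * 1) σ σ 1 1 hT hN aN rfl (by norm_num) (by norm_num) P1 rfl
  obtain ⟨x2, y2, z2⟩ := H₁ N T (N * 1) σ (-σ) (-1) 1 hT hN aN (abs_neg _) (by norm_num)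
    (by norm_num) P2 rfl
  obtain ⟨x3, y3, z3⟩ := H₂ N T (N * -1) σ σ 1 (-1) hT hN aN' rfl (by norm_num) (by norm_num) P3 rfl
  obtain ⟨x4, y4, z4⟩ := H₂ N T (N * -1) σ (-σ) (-1) (-1) hT hN aN' (abs_neg _) (by norm_num)
    (by norm_num) P4 rfl
  have e : ∀ d : ℝ, (2 * C₁ + 2 * C₂) / d = C₁ / d + C₁ / d + C₂ / d + C₂ / d := fun d => by ring
  refine ⟨hIn.trans ?_, fun h => hIn.trans ?_, fun h h' => hIn.trans ?_⟩
  · exact mul_le_mul_of_nonneg_left (by linarith) hA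
  · rw [e]
    exact mul_le_mul_of_nonneg_left (by linarith [y1 h, y2 h, y3 h, y4 h]) hA
  · rw [e]
    exact mul_le_mul_of_nonneg_left (by linarith [z1 h h', z2 h h', z3 h h', z4 h h']) hA

/-- The bounds in terms of `τ = 2 i σ`. -/
lemma usharp_bound_tau (lam : ℂ) (hlam : lam.re = 0) (eps : ℕ) {η η₁ η₂ : ℝ → ℝ} {B : ℝ}
    (hη : Profile η η₁ η₂ B) : ∃ C, 0 < C ∧ ∀ N T A : ℝ, ∀ u : ℝ → ℂ, 1 ≤ T → T ≤ N → 0 ≤ A →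
      Function.Periodic u (2 * π) →
      (∀ c ∈ Ioc (-π) π, u c = A * (Complex.exp (((N * c : ℝ) : ℂ) * Complex.I) *
        (η (T * c) : ℂ))) → ∀ τ : ℂ, τ.re = 0 →
      ‖usharp lam τ eps u‖ ≤ A * C * N ^ (-(1 : ℝ) / 2) * (1 + ‖τ‖) ^ (-(1 : ℝ) / 2)
                + A * C * (1 + ‖τ‖) ^ (-(5 : ℝ) / 2) ∧
      (N / T ≤ ‖τ‖ → ‖usharp lam τ eps u‖ ≤ A * C * (1 + ‖τ‖) ^ (-(5 : ℝ) / 2)) := by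
  obtain ⟨C, hC, H⟩ := usharp_bound lam.im eps hη
  refine ⟨32 * C, by positivity, ?_⟩
  intro N T A u hT hTN hA hu hval τ hτ
  have hN : 0 < N := by linarith
  set σ := τ.im / 2 with hσ
  have hl : lam = lam.im * Complex.I := by apply Complex.ext <;> simp [hlam]
  have ht : τ = 2 * σ * Complex.I := by
    rw [hσ]; apply Complex.ext <;> simp [hτ] <;> ring
  have hnτ : ‖τ‖ = 2 * |σ| := by
    rw [ht, norm_mul, norm_mul, Complex.norm_I, Complex.norm_real, Real.norm_eq_abs]; norm_num
  obtain ⟨b1, b2, b3⟩ := H N T A σ u hT hN hA hu hval _ rfl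
  rw [← hl, ← ht] at b1 b2 b3
  rw [hnτ]
  generalize ‖usharp lam τ eps u‖ = X at *
  have hs0 := abs_nonneg σ
  have hAC : 0 ≤ A * C := by positivity
  have small : |σ| ≤ 1 / 2 → X ≤ A * (32 * C) * (1 + 2 * |σ|) ^ (-(5 : ℝ) / 2) := fun h => by
    have h1 : (2 : ℝ) ^ (-(5 : ℝ) / 2) ≤ (1 + 2 * |σ|) ^ (-(5 : ℝ) / 2) :=
      rpow_le_rpow_of_nonpos (by positivity) (by linarith) (by norm_num)
    have h2 : (1 : ℝ) / 8 ≤ 2 ^ (-(5 : ℝ) / 2) := by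
      calc (1 : ℝ) / 8 = 2 ^ (-3 : ℝ) := by
            rw [show (-3 : ℝ) = ((-3 : ℤ) : ℝ) by norm_num, rpow_intCast]; norm_num
        _ ≤ _ := rpow_le_rpow_of_exponent_le one_le_two (by norm_num)
    nlinarith [mul_le_mul_of_nonneg_left (h2.trans h1) hAC]
  have r1 : 0 ≤ A * (32 * C) * N ^ (-(1 : ℝ) / 2) * (1 + 2 * |σ|) ^ (-(1 : ℝ) / 2) := by positivity
  have r2 : 0 ≤ A * (32 * C) * (1 + 2 * |σ|) ^ (-(5 : ℝ) / 2) := by positivity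
  constructor
  · rcases le_total |σ| (1 / 2) with h | h
    · linarith [small h]
    · have hsp : 0 < |σ| := by linarith
      have e1 : (4 * |σ|) ^ (-(1 : ℝ) / 2) ≤ (1 + 2 * |σ|) ^ (-(1 : ℝ) / 2) :=
        rpow_le_rpow_of_nonpos (by positivity) (by linarith) (by norm_num)
      have e2 : (4 * |σ|) ^ (-(1 : ℝ) / 2) = 1 / (2 * √|σ|) := by
        rw [neg_div, rpow_neg (by positivity), ← sqrt_eq_rpow, sqrt_mul (by norm_num),
          show (4 : ℝ) = 2 ^ 2 by norm_num, sqrt_sq zero_le_two, one_div]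
      have e3 : N ^ (-(1 : ℝ) / 2) = 1 / √N := by
        rw [neg_div, rpow_neg hN.le, ← sqrt_eq_rpow, one_div]
      have hr : 0 < √|σ| := sqrt_pos.2 hsp
      have hn : 0 < √N := sqrt_pos.2 hN
      rw [e2] at e1
      have := b2 h
      have e4 : A * (C / (√|σ| * √N)) = 2 * (A * C * (1 / √N) * (1 / (2 * √|σ|))) := by
        field_simp
      have e5 : A * C * (1 / √N) * (1 / (2 * √|σ|)) ≤
          A * C * (1 / √N) * (1 + 2 * |σ|) ^ (-(1 : ℝ) / 2) := by gcongr
      have e6 : 0 ≤ A * C * (1 / √N) * (1 + 2 * |σ|) ^ (-(1 : ℝ) / 2) := by positivity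
      rw [e3]
      linarith
  · intro hNT
    rcases le_total |σ| (1 / 2) with h | h
    · exact small h
    · have hsp : 0 < |σ| := by linarith
      have hT0 : 0 < T := by linarith
      have hb := b3 h (by
        rw [div_le_iff₀ hT0] at hNT
        rw [div_le_iff₀ (by positivity)]; linarith)
      have e1 : (4 * |σ|) ^ (-(5 : ℝ) / 2) ≤ (1 + 2 * |σ|) ^ (-(5 : ℝ) / 2) :=
        rpow_le_rpow_of_nonpos (by positivity) (by linarith) (by norm_num)
      have e2 : (4 * |σ|) ^ (-(5 : ℝ) / 2) = 1 / (32 * (√|σ| * σ ^ 2)) := by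
        rw [show -(5 : ℝ) / 2 = -(1 / 2 + (2 : ℕ)) by norm_num, rpow_neg (by positivity),
          rpow_add (by positivity), ← sqrt_eq_rpow, sqrt_mul (by norm_num), rpow_natCast,
          show (4 : ℝ) = 2 ^ 2 by norm_num, sqrt_sq zero_le_two, one_div, mul_pow, sq_abs]
        congr 1; ring
      have hs2 : 0 < σ ^ 2 := by rw [← sq_abs]; positivity
      have hr : 0 < √|σ| := sqrt_pos.2 hsp
      rw [e2] at e1
      have e4 : A * (C / (√|σ| * σ ^ 2)) = A * (32 * C) * (1 / (32 * (√|σ| * σ ^ 2))) := by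
        field_simp
      rw [e4] at hb
      exact hb.trans (by gcongr)

end

/-! ### The periodized wave packet -/

section
open Filter Topology Set

/-- An even bump function supported in `[-1/10, 1/10]`. -/
noncomputable def bmp : ContDiffBump (0 : ℝ) := ⟨1 / 20, 1 / 10, by norm_num, by norm_num⟩

/-- The autoconvolution of the bump, so that its Fourier transform is a square. -/
noncomputable def eta : ℝ → ℝ := convolution bmp bmp (ContinuousLinearMap.mul ℝ ℝ) volume

lemma bmp_zero {x : ℝ} (hx : 1 / 10 ≤ |x|) : bmp x = 0 := by
  refine bmp.zero_of_le_dist ?_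
  rwa [Real.dist_eq, sub_zero]

lemma contDiff_eta : ContDiff ℝ (⊤ : ℕ∞) eta :=
  bmp.hasCompactSupport.contDiff_convolution_right _ bmp.continuous.locallyIntegrable bmp.contDiff

lemma hasCompactSupport_eta : HasCompactSupport eta :=
  bmp.hasCompactSupport.convolution _ bmp.hasCompactSupport

lemma tsupport_eta : tsupport eta ⊆ Icc (-(1 / 5)) (1 / 5) := by
  refine closure_minimal ?_ isClosed_Icc
  refine (support_convolution_subset _).trans ?_
  rintro x ⟨a, ha, b, hb, rfl⟩
  have key : ∀ y ∈ Function.support bmp, |y| < 1 / 10 := fun y hy => by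
    by_contra! h
    exact hy (bmp_zero h)
  have h1 := abs_lt.1 (key a ha)
  have h2 := abs_lt.1 (key b hb)
  constructor <;> simp only <;> linarith

lemma exists_profile : ∃ η₁ η₂ B, Profile eta η₁ η₂ B := by
  have c0 := contDiff_eta
  have c1 : ContDiff ℝ (⊤ : ℕ∞) (deriv eta) := (contDiff_infty_iff_deriv.1 c0).2
  have c2 : ContDiff ℝ (⊤ : ℕ∞) (deriv (deriv eta)) := (contDiff_infty_iff_deriv.1 c1).2
  have s0 := hasCompactSupport_eta
  obtain ⟨B0, b0⟩ := s0.exists_bound_of_continuous c0.continuous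
  obtain ⟨B1, b1⟩ := s0.deriv.exists_bound_of_continuous c1.continuous
  obtain ⟨B2, b2⟩ := s0.deriv.deriv.exists_bound_of_continuous c2.continuous
  have z : ∀ f : ℝ → ℝ, tsupport f ⊆ tsupport eta → ∀ x, 1 / 4 ≤ |x| → f x = 0 := by
    intro f hf x hx
    refine image_eq_zero_of_notMem_tsupport fun h => ?_
    have := abs_le.2 (tsupport_eta (hf h))
    linarith
  refine ⟨deriv eta, deriv (deriv eta), max B0 (max B1 B2), ⟨fun x => ?_, fun x => ?_,
    fun x => (b0 x).trans (le_max_left _ _),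
    fun x => (b1 x).trans ((le_max_left _ _).trans (le_max_right _ _)),
    fun x => (b2 x).trans ((le_max_right _ _).trans (le_max_right _ _)), z _ subset_rfl,
    z _ tsupport_deriv_subset, z _ (tsupport_deriv_subset.trans tsupport_deriv_subset)⟩⟩
  · exact (c0.differentiable (by simp) x).hasDerivAt
  · exact (c1.differentiable (by simp) x).hasDerivAt

/-- The Fourier transform of `eta` is the square of a real number, bounded below near `0`. -/
lemma fourier_eta (ξ : ℝ) : ∃ r : ℝ,
    ∫ x, Complex.exp (((ξ * x : ℝ) : ℂ) * Complex.I) * (eta x : ℂ) = ((r ^ 2 : ℝ) : ℂ) ∧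
    (|ξ| ≤ 1 → (∫ x, bmp x) / 2 ≤ r) := by
  set g : ℝ → ℂ := fun x => Complex.exp (((ξ * x : ℝ) : ℂ) * Complex.I) * (bmp x : ℂ) with hg
  have hgc : Continuous g := by
    have := bmp.continuous
    fun_prop
  have hgs : HasCompactSupport g :=
    HasCompactSupport.mul_left (bmp.hasCompactSupport.comp_left Complex.ofReal_zero)
  have hgi : Integrable g := hgc.integrable_of_hasCompactSupport hgs
  have hconv : ∀ x, Complex.exp (((ξ * x : ℝ) : ℂ) * Complex.I) * (eta x : ℂ) =
      convolution g g (ContinuousLinearMap.mul ℝ ℂ) volume x := fun x => by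
    rw [eta, convolution_def, convolution_def, ← integral_complex_ofReal, ← integral_const_mul]
    congr 1
    ext t
    simp only [hg, ContinuousLinearMap.mul_apply', Complex.ofReal_mul]
    have : Complex.exp (ξ * x * Complex.I) =
        Complex.exp (ξ * t * Complex.I) * Complex.exp (ξ * (x - t : ℝ) * Complex.I) := by
      rw [← Complex.exp_add]; congr 1; push_cast; ring
    rw [this]; ring
  have hre : ∀ x, (g x).re = cos (ξ * x) * bmp x := fun x => by
    simp only [hg]
    rw [Complex.re_mul_ofReal, Complex.exp_ofReal_mul_I_re]
  have hconj : (starRingEnd ℂ) (∫ x, g x) = ∫ x, g x := by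
    rw [← integral_conj, ← integral_neg_eq_self]
    congr 1
    ext x
    simp only [hg, bmp.neg, map_mul, Complex.conj_ofReal, ← Complex.exp_conj, Complex.conj_I]
    congr 2
    push_cast
    ring
  obtain ⟨r, hr⟩ := Complex.conj_eq_iff_real.1 hconj
  refine ⟨r, ?_, fun hξ => ?_⟩
  · simp only [hconv]
    rw [integral_convolution _ hgi hgi, hr]
    simp [sq]
  · have h1 : r = ∫ x, cos (ξ * x) * bmp x := by
      have : (∫ x, g x).re = ∫ x, (g x).re := (integral_re hgi).symm
      rw [hr, Complex.ofReal_re] at this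
      rw [this]; simp only [hre]
    rw [h1, ← integral_div]
    refine integral_mono (bmp.integrable.div_const 2) ?_ fun x => ?_
    · have := hgi.re
      simpa only [RCLike.re_eq_complex_re, hre] using this
    · simp only
      rcases le_total (1 / 10) |x| with h | h
      · rw [bmp_zero h]; simp
      · have h2 : |ξ * x| ≤ 1 := by
          rw [abs_mul]; exact mul_le_one₀ hξ (abs_nonneg _) (by linarith)
        have h3 := one_sub_sq_div_two_le_cos (x := ξ * x)
        have h4 : (ξ * x) ^ 2 ≤ 1 := by rw [← sq_abs]; exact pow_le_one₀ (abs_nonneg _) h2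
        have h5 := bmp.nonneg' x
        nlinarith

/-- The representative of `c` modulo `2π` in `[-π, π]`. -/
noncomputable def red (c : ℝ) : ℝ := c - 2 * π * round (c / (2 * π))

lemma abs_red_le (c : ℝ) : |red c| ≤ π := by
  have hpi := Real.pi_pos
  have h := abs_sub_round (c / (2 * π))
  have e : red c = 2 * π * (c / (2 * π) - round (c / (2 * π))) := by rw [red]; field_simp
  rw [e, abs_mul, abs_of_pos (by positivity)]
  nlinarith

/-- The wave packet `A e ^ {i N x} η (T x)`, before periodization. -/
noncomputable def pkt (N T A x : ℝ) : ℂ :=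
  A * (Complex.exp (((N * x : ℝ) : ℂ) * Complex.I) * (eta (T * x) : ℂ))

lemma pkt_eq_zero {N T A x : ℝ} (hT : 1 ≤ T) (hx : 1 / 4 ≤ |x|) : pkt N T A x = 0 := by
  have h : eta (T * x) = 0 := by
    obtain ⟨_, _, _, h⟩ := exists_profile
    refine h.z0 _ ?_
    rw [abs_mul, abs_of_pos (by linarith)]
    nlinarith
  rw [pkt, h]; simp

/-- The `2π`-periodization of the wave packet. -/
noncomputable def uu (N T A c : ℝ) : ℂ := pkt N T A (red c)

lemma uu_periodic (N T A : ℝ) : Function.Periodic (uu N T A) (2 * π) := fun c => by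
  have hpi := Real.pi_pos
  rw [uu, uu, red, red, add_div, div_self (by positivity), round_add_one]
  congr 1
  push_cast
  ring

lemma uu_eq {N T A : ℝ} (hT : 1 ≤ T) (n : ℤ) {c : ℝ} (hc : |c - 2 * π * n| < 4) :
    uu N T A c = pkt N T A (c - 2 * π * n) := by
  have hpi := Real.pi_gt_three
  by_cases h : round (c / (2 * π)) = n
  · rw [uu, red, h]
  · have h1 := abs_red_le c
    set m := round (c / (2 * π)) with hm
    have h2 : (1 : ℝ) ≤ |(m : ℝ) - n| := by
      exact_mod_cast Int.one_le_abs (sub_ne_zero.2 h)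
    have h3 : 2 * π ≤ |2 * π * ((m : ℝ) - n)| := by
      rw [abs_mul, abs_of_pos (by positivity)]; nlinarith
    have h4 : 2 * π * ((m : ℝ) - n) = (c - 2 * π * n) - red c := by rw [red, ← hm]; ring
    have h5 := abs_sub (c - 2 * π * n) (red c)
    rw [← h4] at h5
    rw [uu, pkt_eq_zero hT (by linarith), pkt_eq_zero hT (by linarith)]

lemma contDiff_pkt (N T A : ℝ) : ContDiff ℝ (⊤ : ℕ∞) (pkt N T A) := by
  have h1 : ContDiff ℝ (⊤ : ℕ∞) fun x : ℝ => ((N * x : ℝ) : ℂ) :=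
    Complex.ofRealCLM.contDiff.comp (contDiff_const.mul contDiff_id)
  have h2 : ContDiff ℝ (⊤ : ℕ∞) fun x : ℝ => (eta (T * x) : ℂ) :=
    Complex.ofRealCLM.contDiff.comp (contDiff_eta.comp (contDiff_const.mul contDiff_id))
  exact contDiff_const.mul ((h1.mul contDiff_const).cexp.mul h2)

lemma contDiff_uu {N T A : ℝ} (hT : 1 ≤ T) : ContDiff ℝ (⊤ : ℕ∞) (uu N T A) := by
  rw [contDiff_iff_contDiffAt]
  intro c
  set n := round (c / (2 * π)) with hn
  have h0 : |c - 2 * π * n| < 4 := (abs_red_le c).trans_lt (by linarith [Real.pi_lt_four])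
  have hev : uu N T A =ᶠ[𝓝 c] fun y => pkt N T A (y - 2 * π * n) := by
    have hc : Continuous fun y : ℝ => |y - 2 * π * n| := by fun_prop
    filter_upwards [hc.continuousAt.eventually_lt continuousAt_const h0] with y hy
    exact uu_eq hT n hy
  exact (((contDiff_pkt N T A).comp (contDiff_id.sub contDiff_const)).contDiffAt).congr_of_eventuallyEq
    hev

lemma uu_eq_pkt {N T A : ℝ} (hT : 1 ≤ T) {c : ℝ} (hc : c ∈ Ioc (-π) π) :
    uu N T A c = pkt N T A c := by
  have h : |c - 2 * π * (0 : ℤ)| < 4 := by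
    have := Real.pi_lt_four
    rw [Int.cast_zero, mul_zero, sub_zero, abs_lt]
    constructor <;> linarith [hc.1, hc.2]
  rw [uu_eq hT 0 h, Int.cast_zero, mul_zero, sub_zero]

lemma uhat_uu {N T A : ℝ} (hT : 1 ≤ T) (k : ℤ) :
    uhat (uu N T A) k = ((A / (2 * π * T) : ℝ) : ℂ) *
      ∫ x, Complex.exp ((((N - k) / T * x : ℝ) : ℂ) * Complex.I) * (eta x : ℂ) := by
  have hpi := Real.pi_gt_three
  have hT0 : 0 < T := by linarith
  set F : ℝ → ℂ := fun x => Complex.exp ((((N - k) / T * x : ℝ) : ℂ) * Complex.I) * (eta x : ℂ)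
    with hF
  have hpk : ∀ c, pkt N T A c * Complex.exp (-Complex.I * k * c) = A * F (T * c) := fun c => by
    have : Complex.exp ((((N - k) / T * (T * c) : ℝ) : ℂ) * Complex.I) =
        Complex.exp (((N * c : ℝ) : ℂ) * Complex.I) * Complex.exp (-Complex.I * k * c) := by
      rw [← Complex.exp_add, show (N - k) / T * (T * c) = (N - k) * c by field_simp]
      congr 1
      push_cast
      ring
    simp only [hF]
    rw [this, pkt]
    ring
  have hper : Function.Periodic (fun c : ℝ => uu N T A c * Complex.exp (-Complex.I * k * c))
      (2 * π) := fun c => by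
    simp only [uu_periodic N T A c]
    congr 1
    rw [Complex.exp_eq_exp_iff_exists_int]
    exact ⟨-k, by push_cast; ring⟩
  have e0 := hper.intervalIntegral_add_eq 0 (-π)
  rw [zero_add, show -π + 2 * π = π by ring] at e0
  have e2 : ∫ c in Ioc (-π) π, A * F (T * c) = ∫ c, A * F (T * c) :=
    setIntegral_eq_integral_of_forall_compl_eq_zero fun c hc => by
      rw [← hpk, pkt_eq_zero hT, zero_mul]
      by_contra! h
      have := abs_lt.1 h
      exact hc ⟨by linarith, by linarith⟩
  have e1 : ∫ c in Ioc (-π) π, uu N T A c * Complex.exp (-Complex.I * k * c) =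
      ∫ c, A * F (T * c) := by
    rw [← e2]
    exact setIntegral_congr_fun measurableSet_Ioc fun c hc => by
      rw [uu_eq_pkt hT hc, hpk]
  rw [uhat, e0, intervalIntegral.integral_of_le (by linarith), e1, integral_const_mul,
    Measure.integral_comp_mul_left F T, abs_of_pos (inv_pos.2 hT0), Complex.real_smul]
  push_cast
  field_simp

end

theorem test_vector_lemma (lam : ℂ) (hlam : lam.re = 0) (eps : ℕ) (heps : eps = 0 ∨ eps = 1) :
    ∃ α : ℝ, 0 < α ∧
      ∀ N T : ℤ, 1 ≤ T → T ≤ N →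
        ∃ u : ℝ → ℂ, ContDiff ℝ (⊤ : ℕ∞) u ∧ (∀ x : ℝ, u (x + 2 * Real.pi) = u x) ∧
          (‖u 0‖ ≤ α * T) ∧
          (∀ k : ℤ, (uhat u k).im = 0 ∧ 0 ≤ (uhat u k).re) ∧
          (∀ k : ℤ, |k - N| ≤ T → 1 ≤ (uhat u k).re) ∧
          (∀ τ : ℂ, τ.re = 0 → ‖τ‖ ≤ (N : ℝ) / T →
            ‖usharp lam τ eps u‖ ≤
              α * T * (N : ℝ) ^ (-(1 : ℝ) / 2) * (1 + ‖τ‖) ^ (-(1 : ℝ) / 2)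
                + α * T * (1 + ‖τ‖) ^ (-(5 : ℝ) / 2)) ∧
          (∀ τ : ℂ, τ.re = 0 → (N : ℝ) / T ≤ ‖τ‖ →
            ‖usharp lam τ eps u‖ ≤ α * T * (1 + ‖τ‖) ^ (-(5 : ℝ) / 2)) := by
  obtain ⟨η₁, η₂, B, hη⟩ := exists_profile
  obtain ⟨C, hC, H⟩ := usharp_bound_tau lam hlam eps hη
  have hB : 0 ≤ B := (abs_nonneg _).trans (hη.b0 0)
  have hpi := Real.pi_pos
  set m := ∫ x, bmp x with hm
  have hm0 : 0 < m := bmp.integral_pos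
  -- this amplitude makes the Fourier coefficients in the window at least `1`
  set a := 8 * π / m ^ 2 with ha
  have ha0 : 0 < a := by positivity
  refine ⟨a * C + a * B, by positivity, ?_⟩
  intro N T hT hTN
  have hT' : (1 : ℝ) ≤ T := by exact_mod_cast hT
  have hTN' : (T : ℝ) ≤ N := by exact_mod_cast hTN
  have hT0 : (0 : ℝ) < T := by linarith
  have hN0 : (0 : ℝ) < N := by linarith
  have hper := uu_periodic N T (a * T)
  have hval : ∀ c ∈ Set.Ioc (-π) π, uu N T (a * T) c = ((a * T : ℝ) : ℂ) *
      (Complex.exp (((N * c : ℝ) : ℂ) * Complex.I) * (eta (T * c) : ℂ)) := fun c hc =>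
    uu_eq_pkt hT' hc
  have hU := H N T (a * T) _ hT' hTN' (by positivity) hper hval
  have hco : a * T * C ≤ (a * C + a * B) * T := by
    have : 0 ≤ a * B * T := by positivity
    linarith
  have hf : ∀ k : ℤ, ∃ r : ℝ, uhat (uu N T (a * T)) k = ((a / (2 * π) * r ^ 2 : ℝ) : ℂ) ∧
      (|k - N| ≤ T → m / 2 ≤ r) := fun k => by
    obtain ⟨r, h1, h2⟩ := fourier_eta ((N - k) / T)
    refine ⟨r, ?_, fun hk => h2 ?_⟩
    · rw [uhat_uu hT', h1, ← Complex.ofReal_mul]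
      congr 2
      field_simp
    · rw [abs_div, abs_of_pos hT0, div_le_one hT0, abs_sub_comm]
      exact_mod_cast hk
  refine ⟨uu N T (a * T), contDiff_uu hT', hper, ?_, fun k => ?_, fun k hk => ?_,
    fun τ hτ _ => (hU τ hτ).1.trans ?_, fun τ hτ h => ((hU τ hτ).2 h).trans ?_⟩
  · rw [hval 0 ⟨by linarith, by linarith⟩, norm_mul, norm_mul, Complex.norm_exp_ofReal_mul_I,
      Complex.norm_real, Complex.norm_real, Real.norm_eq_abs, Real.norm_eq_abs,
      abs_of_pos (by positivity : 0 < a * (T : ℝ)), one_mul]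
    have := mul_le_mul_of_nonneg_left (hη.b0 (T * 0)) (by positivity : 0 ≤ a * (T : ℝ))
    have : 0 ≤ a * C * T := by positivity
    linarith
  · obtain ⟨r, h1, -⟩ := hf k
    rw [h1, Complex.ofReal_im, Complex.ofReal_re]
    exact ⟨rfl, by positivity⟩
  · obtain ⟨r, h1, h2⟩ := hf k
    rw [h1, Complex.ofReal_re]
    calc (1 : ℝ) = a / (2 * π) * (m / 2) ^ 2 := by rw [ha]; field_simp; ring
      _ ≤ _ := by
        gcongr
        exact h2 hk
  · gcongr
  · gcongr
end

section
/- Let g ∈ SL(2,ℝ) and let φ be a lift of the circle map of g. Then for all θ, θ' ∈ ℝ, sin(φ(θ') − φ(θ)) = √(φ'(θ)) · √(φ'(θ')) · sin(θ' − θ). In particular |sin(φ(θ) − φ(θ'))|² = φ'(θ)·φ'(θ')·|sin(θ − θ')|². -/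
/-!
Write `n θ = ‖g·v(θ)‖`. Since `det g = 1`, the determinant of the pair `(g·v(θ), g·v(θ'))` equals
that of `(v(θ), v(θ'))`, that is `n θ * n θ' * sin (φ θ' - φ θ) = sin (θ' - θ)`.
Differentiating the statement that `g·v(θ)` is parallel to `v(φ θ)` gives `φ' θ * n θ ^ 2 = 1`,
so `√(φ' θ) = (n θ)⁻¹` and the claim follows. Both identities are proved in `IsLift.exists_norm`.
-/

open Matrix

/-- Euclidean norm on `ℝ²` (as `Fin 2 → ℝ`). -/
noncomputable def enorm2 (w : Fin 2 → ℝ) : ℝ := Real.sqrt (w 0 ^ 2 + w 1 ^ 2)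

/-- The unit vector `v(θ) = (cos θ, sin θ)`. -/
noncomputable def vCirc (θ : ℝ) : Fin 2 → ℝ := ![Real.cos θ, Real.sin θ]

/-- A lift of the circle map of `g ∈ SL(2,ℝ)`: a smooth `φ : ℝ → ℝ` with
`g·v(θ) = ‖g·v(θ)‖ · v(φ θ)` for all `θ`. -/
def IsLift (g : Matrix.SpecialLinearGroup (Fin 2) ℝ) (φ : ℝ → ℝ) : Prop :=
  ContDiff ℝ (⊤ : ℕ∞) φ ∧
    ∀ θ : ℝ, (g : Matrix (Fin 2) (Fin 2) ℝ).mulVec (vCirc θ) =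
      enorm2 ((g : Matrix (Fin 2) (Fin 2) ℝ).mulVec (vCirc θ)) • vCirc (φ θ)

/-- The relation defining a lift in coordinates, where `a, b, c, d` are the entries of `g` and
`n θ = ‖g·v(θ)‖`, which is positive because `g` is invertible. -/
lemma IsLift.exists_coords {g : Matrix.SpecialLinearGroup (Fin 2) ℝ} {φ : ℝ → ℝ}
    (hφ : IsLift g φ) :
    ∃ (a b c d : ℝ) (n : ℝ → ℝ), a * d - b * c = 1 ∧ ∀ θ, 0 < n θ ∧
      a * Real.cos θ + b * Real.sin θ = n θ * Real.cos (φ θ) ∧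
      c * Real.cos θ + d * Real.sin θ = n θ * Real.sin (φ θ) := by
  have hdet : g 0 0 * g 1 1 - g 0 1 * g 1 0 = 1 := by
    rw [← Matrix.det_fin_two, g.det_coe]
  refine ⟨g 0 0, g 0 1, g 1 0, g 1 1,
    fun θ => enorm2 ((g : Matrix (Fin 2) (Fin 2) ℝ).mulVec (vCirc θ)), hdet, fun θ => ?_⟩
  have h0 := congrFun (hφ.2 θ) 0
  have h1 := congrFun (hφ.2 θ) 1
  set n := enorm2 ((g : Matrix (Fin 2) (Fin 2) ℝ).mulVec (vCirc θ))
  have hn0 : 0 ≤ n := Real.sqrt_nonneg _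
  simp only [Matrix.mulVec, dotProduct, Fin.sum_univ_two, vCirc, Pi.smul_apply, smul_eq_mul,
    Matrix.cons_val_zero, Matrix.cons_val_one] at h0 h1
  refine ⟨lt_of_le_of_ne hn0 fun (h : 0 = n) => ?_, h0, h1⟩
  -- If the norm vanished, `g` would kill the unit vector `v(θ)`; apply the adjugate of `g`.
  rw [← h, zero_mul] at h0 h1
  have hc : Real.cos θ = 0 := by
    linear_combination g 1 1 * h0 - g 0 1 * h1 - Real.cos θ * hdet
  have hs : Real.sin θ = 0 := by
    linear_combination g 0 0 * h1 - g 1 0 * h0 - Real.sin θ * hdet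
  simpa [hc, hs] using Real.sin_sq_add_cos_sq θ

/-- The two identities behind the theorem. The witness `n θ` is the norm `‖g·v(θ)‖`, of which only
positivity and these identities are needed. -/
lemma IsLift.exists_norm {g : Matrix.SpecialLinearGroup (Fin 2) ℝ} {φ : ℝ → ℝ}
    (hφ : IsLift g φ) :
    ∃ n : ℝ → ℝ, (∀ θ, 0 < n θ) ∧
      (∀ θ θ', n θ * n θ' * Real.sin (φ θ' - φ θ) = Real.sin (θ' - θ)) ∧
      ∀ θ, deriv φ θ * n θ ^ 2 = 1 := by
  obtain ⟨a, b, c, d, n, hdet, h⟩ := hφ.exists_coords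
  refine ⟨n, fun θ => (h θ).1, fun θ θ' => ?_, fun θ => ?_⟩
  · obtain ⟨-, hp, hq⟩ := h θ
    obtain ⟨-, hp', hq'⟩ := h θ'
    rw [Real.sin_sub, Real.sin_sub]
    calc _ = (n θ' * Real.sin (φ θ')) * (n θ * Real.cos (φ θ))
          - (n θ' * Real.cos (φ θ')) * (n θ * Real.sin (φ θ)) := by ring
      _ = _ := by
        rw [← hp, ← hq, ← hp', ← hq']
        linear_combination
          (Real.sin θ' * Real.cos θ - Real.cos θ' * Real.sin θ) * hdet
  · have hd : HasDerivAt φ (deriv φ θ) θ :=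
      ((hφ.1.differentiable (by simp)) θ).hasDerivAt
    have hC := Real.hasDerivAt_cos θ
    have hS := Real.hasDerivAt_sin θ
    -- Differentiating the parallelism relation `p * sin φ = q * cos φ`, where `(p, q) = g·v`,
    -- requires no differentiability of `n`.
    have hL := ((hC.const_mul a).add (hS.const_mul b)).mul hd.sin
    have hR := ((hC.const_mul c).add (hS.const_mul d)).mul hd.cos
    have key := hL.sub hR
    have hz := key.unique ((hasDerivAt_const θ (0 : ℝ)).congr_of_eventuallyEq
      (Filter.Eventually.of_forall fun t => by
        obtain ⟨-, hp, hq⟩ := h t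
        simp only [Pi.sub_apply, Pi.mul_apply, Pi.add_apply]
        rw [hp, hq]
        ring))
    simp only [Pi.add_apply] at hz
    obtain ⟨-, hp, hq⟩ := h θ
    have h1 := Real.sin_sq_add_cos_sq θ
    have h2 := Real.sin_sq_add_cos_sq (φ θ)
    rw [hp, hq] at hz
    -- `n * hz` reads `φ' * n ^ 2 = p * q' - q * p'`, and the right side is `det g`.
    linear_combination n θ * hz - deriv φ θ * n θ ^ 2 * h2 + hdet + (a * d - b * c) * h1
      - (d * Real.cos θ - c * Real.sin θ) * hp + (b * Real.cos θ - a * Real.sin θ) * hq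

theorem lift_sine_identity (g : Matrix.SpecialLinearGroup (Fin 2) ℝ) (φ : ℝ → ℝ)
    (hφ : IsLift g φ) :
    (∀ θ θ' : ℝ, Real.sin (φ θ' - φ θ) =
        Real.sqrt (deriv φ θ) * Real.sqrt (deriv φ θ') * Real.sin (θ' - θ)) ∧
    (∀ θ θ' : ℝ, |Real.sin (φ θ - φ θ')| ^ 2 =
        deriv φ θ * deriv φ θ' * |Real.sin (θ - θ')| ^ 2) := by
  obtain ⟨n, hpos, hsin, hder⟩ := hφ.exists_norm
  have hsqrt : ∀ θ, Real.sqrt (deriv φ θ) = (n θ)⁻¹ := fun θ => by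
    rw [eq_inv_of_mul_eq_one_left (hder θ), Real.sqrt_inv, Real.sqrt_sq (hpos θ).le]
  refine ⟨fun θ θ' => ?_, fun θ θ' => ?_⟩
  · have := (hpos θ).ne'
    have := (hpos θ').ne'
    rw [hsqrt, hsqrt, ← hsin θ θ']
    field_simp
  · rw [sq_abs, sq_abs, ← hsin θ' θ, eq_inv_of_mul_eq_one_left (hder θ),
      eq_inv_of_mul_eq_one_left (hder θ')]
    have := (hpos θ).ne'
    have := (hpos θ').ne'
    field_simp
end

section
/- Let g ∈ SL(2,ℝ), let φ be a lift of the circle map of g, let λ, τ ∈ ℂ and ε ∈ {0,1}. Then for all θ, θ', θ'' ∈ ℝ whose pairwise differences are not integer multiples of π, one has the covariance identity K_{λ,τ,ε}(φ(θ), φ(θ'), φ(θ'')) = φ'(θ)^{−(1+λ)/2} · φ'(θ')^{(λ−1)/2} · φ'(θ'')^{(τ−1)/2} · K_{λ,τ,ε}(θ, θ', θ''); in particular sgn(sin(φ(θ)−φ(θ'))·sin(φ(θ)−φ(θ''))·sin(φ(θ')−φ(θ''))) = sgn(sin(θ−θ')·sin(θ−θ'')·sin(θ'−θ'')). -/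
/-!
For unit vectors, `det (v α, v β) = sin (β - α)`. Since `g` preserves determinants and
`g·v(θ) = N(θ) v(φ θ)` with `N(θ) = ‖g·v(θ)‖ > 0`, this gives
`N(θ) N(θ') sin (φ θ - φ θ') = sin (θ - θ')` (`IsLift.sin_sub`). Differentiating the relation
that `g·v(θ)` is parallel to `v(φ θ)` gives `φ'(θ) = N(θ)⁻²` (`IsLift.deriv_mul_sq`). Hence signs of
sines are preserved and
`log |sin (φ θ - φ θ')| = log |sin (θ - θ')| + (log φ'(θ) + log φ'(θ')) / 2`,
and the covariance identity is a comparison of the exponents of the three derivatives.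
-/

open Matrix

/-- The norm `‖g·v(θ)‖`. -/
noncomputable def liftNorm (g : Matrix.SpecialLinearGroup (Fin 2) ℝ) (θ : ℝ) : ℝ :=
  enorm2 ((g : Matrix (Fin 2) (Fin 2) ℝ).mulVec (vCirc θ))

theorem IsLift.coord_zero {g : Matrix.SpecialLinearGroup (Fin 2) ℝ} {φ : ℝ → ℝ}
    (h : IsLift g φ) (θ : ℝ) :
    g 0 0 * Real.cos θ + g 0 1 * Real.sin θ = liftNorm g θ * Real.cos (φ θ) := by
  have := congrFun (h.2 θ) 0
  simpa [liftNorm, vCirc, Matrix.mulVec, dotProduct, Fin.sum_univ_two] using this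

theorem IsLift.coord_one {g : Matrix.SpecialLinearGroup (Fin 2) ℝ} {φ : ℝ → ℝ}
    (h : IsLift g φ) (θ : ℝ) :
    g 1 0 * Real.cos θ + g 1 1 * Real.sin θ = liftNorm g θ * Real.sin (φ θ) := by
  have := congrFun (h.2 θ) 1
  simpa [liftNorm, vCirc, Matrix.mulVec, dotProduct, Fin.sum_univ_two] using this

theorem det_entries (g : Matrix.SpecialLinearGroup (Fin 2) ℝ) :
    g 0 0 * g 1 1 - g 0 1 * g 1 0 = 1 := by
  have := g.det_coe
  rwa [Matrix.det_fin_two] at this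

theorem IsLift.liftNorm_pos {g : Matrix.SpecialLinearGroup (Fin 2) ℝ} {φ : ℝ → ℝ}
    (h : IsLift g φ) (θ : ℝ) : 0 < liftNorm g θ := by
  refine lt_of_le_of_ne (Real.sqrt_nonneg _) fun h0 => ?_
  have hx := h.coord_zero θ
  have hy := h.coord_one θ
  rw [← h0, zero_mul] at hx hy
  have hd := det_entries g
  -- Invertibility of `g` would force `v(θ) = 0`.
  have hc : Real.cos θ = 0 := by
    linear_combination g 1 1 * hx - g 0 1 * hy - Real.cos θ * hd
  have hs : Real.sin θ = 0 := by
    linear_combination g 0 0 * hy - g 1 0 * hx - Real.sin θ * hd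
  have := Real.sin_sq_add_cos_sq θ
  simp [hc, hs] at this

theorem IsLift.sin_sub {g : Matrix.SpecialLinearGroup (Fin 2) ℝ} {φ : ℝ → ℝ}
    (h : IsLift g φ) (s t : ℝ) :
    liftNorm g s * liftNorm g t * Real.sin (φ s - φ t) = Real.sin (s - t) := by
  rw [Real.sin_sub, Real.sin_sub]
  have e : liftNorm g s * liftNorm g t *
        (Real.sin (φ s) * Real.cos (φ t) - Real.cos (φ s) * Real.sin (φ t)) =
      (liftNorm g s * Real.sin (φ s)) * (liftNorm g t * Real.cos (φ t)) -
        (liftNorm g s * Real.cos (φ s)) * (liftNorm g t * Real.sin (φ t)) := by ring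
  rw [e, ← h.coord_zero, ← h.coord_zero, ← h.coord_one, ← h.coord_one]
  linear_combination
    (Real.sin s * Real.cos t - Real.cos s * Real.sin t) * det_entries g

theorem IsLift.deriv_mul_sq {g : Matrix.SpecialLinearGroup (Fin 2) ℝ} {φ : ℝ → ℝ}
    (h : IsLift g φ) (θ : ℝ) : deriv φ θ * liftNorm g θ ^ 2 = 1 := by
  have hφ : HasDerivAt φ (deriv φ θ) θ :=
    ((h.1.differentiable (by simp)) θ).hasDerivAt
  have hlin : ∀ a b : ℝ, HasDerivAt (fun t => a * Real.cos t + b * Real.sin t)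
      (a * (-Real.sin θ) + b * Real.cos θ) θ := fun a b =>
    ((Real.hasDerivAt_cos θ).const_mul a).add ((Real.hasDerivAt_sin θ).const_mul b)
  -- The vectors `g·v(t)` and `v(φ t)` are parallel; the norm drops out of this relation,
  -- so its differentiability is not needed.
  have hpar : (fun t => (g 0 0 * Real.cos t + g 0 1 * Real.sin t) * Real.sin (φ t)) =
      fun t => (g 1 0 * Real.cos t + g 1 1 * Real.sin t) * Real.cos (φ t) := by
    funext t
    rw [h.coord_zero, h.coord_one]
    ring
  have hL := (hlin (g 0 0) (g 0 1)).mul hφ.sin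
  have hR := (hlin (g 1 0) (g 1 1)).mul hφ.cos
  have key := hL.unique (hR.congr_of_eventuallyEq (Filter.EventuallyEq.of_eq hpar))
  have hx := h.coord_zero θ
  have hy := h.coord_one θ
  rw [hx, hy] at key
  have hp := Real.sin_sq_add_cos_sq (φ θ)
  have hq := Real.sin_sq_add_cos_sq θ
  have hd := det_entries g
  have key2 : deriv φ θ * liftNorm g θ ^ 2 =
      (g 1 0 * (-Real.sin θ) + g 1 1 * Real.cos θ) * (liftNorm g θ * Real.cos (φ θ)) -
      (g 0 0 * (-Real.sin θ) + g 0 1 * Real.cos θ) * (liftNorm g θ * Real.sin (φ θ)) := by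
    linear_combination liftNorm g θ * key - deriv φ θ * liftNorm g θ ^ 2 * hp
  rw [key2, ← hx, ← hy]
  linear_combination (Real.sin θ ^ 2 + Real.cos θ ^ 2) * hd + hq

theorem IsLift.deriv_pos {g : Matrix.SpecialLinearGroup (Fin 2) ℝ} {φ : ℝ → ℝ}
    (h : IsLift g φ) (θ : ℝ) : 0 < deriv φ θ :=
  pos_of_mul_pos_left (by rw [h.deriv_mul_sq]; exact one_pos) (sq_nonneg (liftNorm g θ))

theorem IsLift.log_deriv {g : Matrix.SpecialLinearGroup (Fin 2) ℝ} {φ : ℝ → ℝ}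
    (h : IsLift g φ) (θ : ℝ) : Real.log (deriv φ θ) = -2 * Real.log (liftNorm g θ) := by
  have e := congrArg Real.log (h.deriv_mul_sq θ)
  rw [Real.log_mul (h.deriv_pos θ).ne' (pow_pos (h.liftNorm_pos θ) 2).ne', Real.log_pow,
    Real.log_one] at e
  push_cast at e
  linarith

theorem IsLift.sin_ne_zero {g : Matrix.SpecialLinearGroup (Fin 2) ℝ} {φ : ℝ → ℝ}
    (h : IsLift g φ) {s t : ℝ} (hst : Real.sin (s - t) ≠ 0) : Real.sin (φ s - φ t) ≠ 0 := by
  rw [← h.sin_sub] at hst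
  exact right_ne_zero_of_mul hst

theorem IsLift.log_abs_sin {g : Matrix.SpecialLinearGroup (Fin 2) ℝ} {φ : ℝ → ℝ}
    (h : IsLift g φ) {s t : ℝ} (hst : Real.sin (s - t) ≠ 0) :
    Real.log |Real.sin (φ s - φ t)| =
      Real.log |Real.sin (s - t)| + (Real.log (deriv φ s) + Real.log (deriv φ t)) / 2 := by
  rw [h.log_deriv, h.log_deriv, Real.log_abs, Real.log_abs, ← h.sin_sub s t,
    Real.log_mul (mul_pos (h.liftNorm_pos s) (h.liftNorm_pos t)).ne' (h.sin_ne_zero hst),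
    Real.log_mul (h.liftNorm_pos s).ne' (h.liftNorm_pos t).ne']
  ring

theorem sign_pos_mul {c : ℝ} (hc : 0 < c) (x : ℝ) : Real.sign (c * x) = Real.sign x := by
  rcases lt_trichotomy x 0 with hx | rfl | hx
  · rw [Real.sign_of_neg hx, Real.sign_of_neg (mul_neg_of_pos_of_neg hc hx)]
  · rw [mul_zero]
  · rw [Real.sign_of_pos hx, Real.sign_of_pos (mul_pos hc hx)]

theorem ofReal_cpow_eq_exp {x : ℝ} (hx : 0 < x) (w : ℂ) :
    (x : ℂ) ^ w = Complex.exp ((Real.log x : ℝ) * w) := by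
  rw [Complex.cpow_def_of_ne_zero (Complex.ofReal_ne_zero.2 hx.ne'), Complex.ofReal_log hx.le]

theorem sin_ne_zero_of_ne_int_mul_pi {x : ℝ} (h : ∀ m : ℤ, x ≠ m * Real.pi) :
    Real.sin x ≠ 0 :=
  fun h0 => (Real.sin_eq_zero_iff.1 h0).elim fun m hm => h m hm.symm

theorem kernel_covariance (g : Matrix.SpecialLinearGroup (Fin 2) ℝ) (φ : ℝ → ℝ)
    (hφ : IsLift g φ) (lam tau : ℂ) (eps : ℕ) (heps : eps = 0 ∨ eps = 1)
    (θ θ' θ'' : ℝ)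
    (h1 : ∀ m : ℤ, θ - θ' ≠ m * Real.pi)
    (h2 : ∀ m : ℤ, θ - θ'' ≠ m * Real.pi)
    (h3 : ∀ m : ℤ, θ' - θ'' ≠ m * Real.pi) :
    Kker lam tau eps (φ θ) (φ θ') (φ θ'') =
      ((deriv φ θ : ℝ) : ℂ) ^ (-(1 + lam) / 2) * ((deriv φ θ' : ℝ) : ℂ) ^ ((lam - 1) / 2) *
        ((deriv φ θ'' : ℝ) : ℂ) ^ ((tau - 1) / 2) * Kker lam tau eps θ θ' θ'' ∧
    Real.sign (Real.sin (φ θ - φ θ') * Real.sin (φ θ - φ θ'') * Real.sin (φ θ' - φ θ'')) =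
      Real.sign (Real.sin (θ - θ') * Real.sin (θ - θ'') * Real.sin (θ' - θ'')) := by
  have s1 := sin_ne_zero_of_ne_int_mul_pi h1
  have s2 := sin_ne_zero_of_ne_int_mul_pi h2
  have s3 := sin_ne_zero_of_ne_int_mul_pi h3
  have hsign : Real.sign (Real.sin (φ θ - φ θ') * Real.sin (φ θ - φ θ'') *
        Real.sin (φ θ' - φ θ'')) =
      Real.sign (Real.sin (θ - θ') * Real.sin (θ - θ'') * Real.sin (θ' - θ'')) := by
    -- Each norm occurs in two of the three sines, so the product scales by a positive square.
    have hc : 0 < (liftNorm g θ * liftNorm g θ' * liftNorm g θ'') ^ 2 :=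
      pow_pos (mul_pos (mul_pos (hφ.liftNorm_pos θ) (hφ.liftNorm_pos θ'))
        (hφ.liftNorm_pos θ'')) 2
    rw [← sign_pos_mul hc, ← hφ.sin_sub θ θ', ← hφ.sin_sub θ θ'', ← hφ.sin_sub θ' θ'']
    congr 1
    ring
  refine ⟨?_, hsign⟩
  unfold Kker
  rw [hsign, ofReal_cpow_eq_exp (hφ.deriv_pos θ), ofReal_cpow_eq_exp (hφ.deriv_pos θ'),
    ofReal_cpow_eq_exp (hφ.deriv_pos θ''),
    ofReal_cpow_eq_exp (abs_pos.2 s1), ofReal_cpow_eq_exp (abs_pos.2 s2),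
    ofReal_cpow_eq_exp (abs_pos.2 s3),
    ofReal_cpow_eq_exp (abs_pos.2 (hφ.sin_ne_zero s1)),
    ofReal_cpow_eq_exp (abs_pos.2 (hφ.sin_ne_zero s2)),
    ofReal_cpow_eq_exp (abs_pos.2 (hφ.sin_ne_zero s3)),
    hφ.log_abs_sin s1, hφ.log_abs_sin s2, hφ.log_abs_sin s3]
  generalize Real.sign _ ^ eps = S
  -- Move the sign to the front on both sides, so that only an identity of exponents remains.
  rw [mul_assoc, mul_assoc, mul_assoc (S : ℂ), mul_assoc (S : ℂ), mul_left_comm _ (S : ℂ)]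
  congr 1
  simp only [← Complex.exp_add]
  congr 1
  push_cast
  ring
end
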